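/- arXiv:1009.4848 — 4 statements merged into one kernel-verified Lean document; each statement's English description precedes it below -/
import Mathlib

section
/- Let N ≥ 1 and q > 1. There exists C = C(N,q) > 0 such that for every r, ρ > 0, every compact set K ⊆ B_r, every η ∈ 𝒯_{r,ρ}(K), and every positive solution u of ∂_t u − Δu + u^q = 0 in Q_∞ whose initial trace vanishes outside K: u(x, (r+2ρ)²) ≤ C ‖R[η]‖_{L^{q'}}^{q'} / (ρ(r+ρ))^{N/2} for every x ∈ ℝ^N. -/
open MeasureTheory Real Set Filter Metric

noncomputable section

abbrev Euc (N : ℕ) := EuclideanSpace ℝ (Fin N)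

/-- Spatial Laplacian of `f : ℝ^N → ℝ`. -/
def lapl {N : ℕ} (f : Euc N → ℝ) (x : Euc N) : ℝ :=
  ∑ i : Fin N,
    fderiv ℝ (fun y => fderiv ℝ f y (EuclideanSpace.single i 1)) x (EuclideanSpace.single i 1)

/-- The capacity `C_{2/q,q'}` of a set `A ⊆ ℝ^N`. -/
def capQ (N : ℕ) (q : ℝ) (A : Set (Euc N)) : ℝ :=
  sInf { c : ℝ | ∃ φ : Euc N → ℝ, ContDiff ℝ (⊤ : ℕ∞) φ ∧ HasCompactSupport φ ∧
      (∃ U : Set (Euc N), IsOpen U ∧ A ⊆ U ∧ ∀ x ∈ U, 1 ≤ φ x) ∧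
      c = (∫ x, φ x ^ (q / (q - 1))) +
          ∫ x, ∫ y, |φ x - φ y| ^ (q / (q - 1)) / ‖x - y‖ ^ ((N : ℝ) + 2 / (q - 1)) }

/-- The spherical shell piece `F_n` of `F` around `x` at time `t`. -/
def shell (N : ℕ) (F : Set (Euc N)) (x : Euc N) (t : ℝ) (n : ℕ) : Set (Euc N) :=
  {y | y ∈ F ∧ Real.sqrt ((n : ℝ) * t) ≤ dist x y ∧ dist x y ≤ Real.sqrt (((n : ℝ) + 1) * t)}

/-- The parabolic capacitary potential `W_F`. -/
def Wpot (N : ℕ) (q : ℝ) (F : Set (Euc N)) (x : Euc N) (t : ℝ) : ℝ :=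
  t ^ (-(N : ℝ) / 2) *
    ∑' n : ℕ,
      Real.sqrt (((n : ℝ) + 1) * t) ^ ((N : ℝ) - 2 / (q - 1)) * Real.exp (-(n : ℝ) / 4) *
        capQ N q ((fun y => (Real.sqrt (((n : ℝ) + 1) * t))⁻¹ • y) '' shell N F x t n)

/-- `u` is a positive solution of `∂ₜu - Δu + u^q = 0` in `Q_∞` whose initial
trace vanishes outside the closed set `F`. -/
def IsSol (N : ℕ) (q : ℝ) (u : Euc N → ℝ → ℝ) (F : Set (Euc N)) : Prop :=
  ContDiffOn ℝ 2 (fun p : Euc N × ℝ => u p.1 p.2) (Set.univ ×ˢ Set.Ioi (0 : ℝ)) ∧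
  (∀ x t, 0 < t → 0 < u x t) ∧
  (∀ x t, 0 < t → deriv (u x) t - lapl (fun y => u y t) x + u x t ^ q = 0) ∧
  (∀ E : Set (Euc N), IsCompact E → E ⊆ Fᶜ →
    Tendsto (fun t => sSup ((fun x => u x t) '' E)) (nhdsWithin 0 (Set.Ioi 0)) (nhds 0))

/-- The heat potential of a function. -/
def heatPot (N : ℕ) (η : Euc N → ℝ) (x : Euc N) (t : ℝ) : ℝ :=
  ∫ y, (4 * π * t) ^ (-(N : ℝ) / 2) * Real.exp (-‖x - y‖ ^ 2 / (4 * t)) * η y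

/-- The heat potential of a measure. -/
def heatPotM (N : ℕ) (μ : Measure (Euc N)) (x : Euc N) (t : ℝ) : ℝ :=
  ∫ y, (4 * π * t) ^ (-(N : ℝ) / 2) * Real.exp (-‖x - y‖ ^ 2 / (4 * t)) ∂μ

/-- The class `𝒯_{r,ρ}(K)` of test functions. -/
def TestFun (N : ℕ) (r ρ : ℝ) (K : Set (Euc N)) (η : Euc N → ℝ) : Prop :=
  ContDiff ℝ (⊤ : ℕ∞) η ∧ HasCompactSupport η ∧ tsupport η ⊆ Metric.ball (0 : Euc N) (r + ρ) ∧
  (∀ x, 0 ≤ η x ∧ η x ≤ 1) ∧ (∀ x ∈ K, η x = 1)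

/-- `‖R[η]‖_{L^{q'}}^{q'} = ∬_{Q_∞} (|∇ℍ[η]|² + |∂ₜℍ[η]|)^{q'} dx dt`. -/
def Rnorm (N : ℕ) (q : ℝ) (η : Euc N → ℝ) : ℝ :=
  ∫ t in Set.Ioi (0 : ℝ), ∫ x,
    (‖fderiv ℝ (fun y => heatPot N η y t) x‖ ^ 2 +
      |deriv (fun τ => heatPot N η x τ) t|) ^ (q / (q - 1))


lemma cd2_ev {N : ℕ} {f : Euc N → ℝ} {x : Euc N} (hf : ContDiffAt ℝ 2 f x) :
    ∀ᶠ y in nhds x, DifferentiableAt ℝ f y := by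
  filter_upwards [hf.eventually (by simp)] with y hy
  exact hy.differentiableAt (by norm_num)

lemma cd2_fd {N : ℕ} {f : Euc N → ℝ} {x : Euc N} (hf : ContDiffAt ℝ 2 f x) (v : Euc N) :
    DifferentiableAt ℝ (fun y => fderiv ℝ f y v) x := by
  have h1 : ContDiffAt ℝ 1 (fderiv ℝ f) x := hf.fderiv_right (by norm_num)
  exact (h1.differentiableAt (by norm_num)).clm_apply (differentiableAt_const v)

lemma lapl_congr {N : ℕ} {f g : Euc N → ℝ} {x : Euc N} (h : f =ᶠ[nhds x] g) :
    lapl f x = lapl g x := by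
  unfold lapl
  refine Finset.sum_congr rfl fun i _ => ?_
  have : (fun y => fderiv ℝ f y (EuclideanSpace.single i 1)) =ᶠ[nhds x]
      (fun y => fderiv ℝ g y (EuclideanSpace.single i 1)) := by
    filter_upwards [h.fderiv (𝕜 := ℝ)] with y hy
    rw [hy]
  rw [this.fderiv_eq]

lemma lapl_add {N : ℕ} {f g : Euc N → ℝ} {x : Euc N} (hf : ContDiffAt ℝ 2 f x)
    (hg : ContDiffAt ℝ 2 g x) : lapl (fun y => f y + g y) x = lapl f x + lapl g x := by
  unfold lapl
  rw [← Finset.sum_add_distrib]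
  refine Finset.sum_congr rfl fun i _ => ?_
  have : (fun y => fderiv ℝ (fun y => f y + g y) y (EuclideanSpace.single i 1)) =ᶠ[nhds x]
      (fun y => fderiv ℝ f y (EuclideanSpace.single i 1)
        + fderiv ℝ g y (EuclideanSpace.single i 1)) := by
    filter_upwards [cd2_ev hf, cd2_ev hg] with y h1 h2
    rw [fderiv_fun_add h1 h2]; rfl
  rw [this.fderiv_eq, fderiv_fun_add (cd2_fd hf _) (cd2_fd hg _)]; rfl

lemma lapl_mul {N : ℕ} {f g : Euc N → ℝ} {x : Euc N} (hf : ContDiffAt ℝ 2 f x)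
    (hg : ContDiffAt ℝ 2 g x) : lapl (fun y => f y * g y) x = lapl f x * g x +
      2 * (∑ i : Fin N, fderiv ℝ f x (EuclideanSpace.single i 1) *
        fderiv ℝ g x (EuclideanSpace.single i 1)) + f x * lapl g x := by
  unfold lapl
  rw [Finset.sum_mul, Finset.mul_sum, Finset.mul_sum, ← Finset.sum_add_distrib,
    ← Finset.sum_add_distrib]
  refine Finset.sum_congr rfl fun i _ => ?_
  have : (fun y => fderiv ℝ (fun y => f y * g y) y (EuclideanSpace.single i 1)) =ᶠ[nhds x]
      (fun y => f y * fderiv ℝ g y (EuclideanSpace.single i 1)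
        + g y * fderiv ℝ f y (EuclideanSpace.single i 1)) := by
    filter_upwards [cd2_ev hf, cd2_ev hg] with y h1 h2
    rw [fderiv_fun_mul h1 h2]; simp
  have hf1 := (cd2_ev hf).self_of_nhds
  have hg1 := (cd2_ev hg).self_of_nhds
  rw [this.fderiv_eq, fderiv_fun_add (hf1.fun_mul (cd2_fd hg _)) (hg1.fun_mul (cd2_fd hf _)),
    fderiv_fun_mul hf1 (cd2_fd hg _), fderiv_fun_mul hg1 (cd2_fd hf _)]
  simp
  ring

lemma lapl_comp {N : ℕ} {φ : Euc N → ℝ} {x : Euc N} (hφ : ContDiffAt ℝ 2 φ x)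
    {f f' : ℝ → ℝ} {f'' : ℝ} (hf : ∀ᶠ s in nhds (φ x), HasDerivAt f (f' s) s)
    (hf' : HasDerivAt f' f'' (φ x)) :
    lapl (fun y => f (φ y)) x = f' (φ x) * lapl φ x +
      f'' * ∑ i : Fin N, fderiv ℝ φ x (EuclideanSpace.single i 1) ^ 2 := by
  unfold lapl
  rw [Finset.mul_sum, Finset.mul_sum, ← Finset.sum_add_distrib]
  refine Finset.sum_congr rfl fun i _ => ?_
  have : (fun y => fderiv ℝ (fun y => f (φ y)) y (EuclideanSpace.single i 1)) =ᶠ[nhds x]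
      (fun y => f' (φ y) * fderiv ℝ φ y (EuclideanSpace.single i 1)) := by
    filter_upwards [cd2_ev hφ, hφ.continuousAt.eventually hf] with y h1 h2
    have := h2.comp_hasFDerivAt y h1.hasFDerivAt
    have h3 : fderiv ℝ (fun y => f (φ y)) y = f' (φ y) • fderiv ℝ φ y := this.fderiv
    rw [h3]; simp
  have h1 := (cd2_ev hφ).self_of_nhds
  have h4 : HasFDerivAt (fun y => f' (φ y)) (f'' • fderiv ℝ φ x) x :=
    hf'.comp_hasFDerivAt x h1.hasFDerivAt
  rw [this.fderiv_eq, (h4.fun_mul (cd2_fd hφ _).hasFDerivAt).fderiv]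
  simp
  ring

lemma fderiv_nsq {N : ℕ} (y x v : Euc N) :
    fderiv ℝ (fun z => ‖z - y‖ ^ 2) x v = 2 * inner ℝ (x - y) v := by
  have h : HasFDerivAt (fun z : Euc N => z - y) (ContinuousLinearMap.id ℝ (Euc N)) x :=
    (hasFDerivAt_id x).sub_const y
  rw [h.norm_sq.fderiv]
  simp [inner_sub_left]

lemma cd_nsq {N : ℕ} (y x : Euc N) {n} : ContDiffAt ℝ n (fun z : Euc N => ‖z - y‖ ^ 2) x := by
  have : ContDiffAt ℝ n (fun z : Euc N => z - y) x := contDiffAt_id.sub contDiffAt_const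
  exact this.norm_sq ℝ

lemma sum_fderiv_nsq {N : ℕ} (y x : Euc N) :
    ∑ i : Fin N, fderiv ℝ (fun z => ‖z - y‖ ^ 2) x (EuclideanSpace.single i 1) ^ 2
      = 4 * ‖x - y‖ ^ 2 := by
  rw [EuclideanSpace.norm_sq_eq, Finset.mul_sum]
  refine Finset.sum_congr rfl fun i _ => ?_
  rw [fderiv_nsq, EuclideanSpace.inner_single_right]
  simp; ring

lemma lapl_nsq {N : ℕ} (y x : Euc N) : lapl (fun z => ‖z - y‖ ^ 2) x = 2 * N := by
  unfold lapl
  have : ∀ i : Fin N, fderiv ℝ (fun w => fderiv ℝ (fun z => ‖z - y‖ ^ 2) w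
      (EuclideanSpace.single i 1)) x (EuclideanSpace.single i 1) = 2 := by
    intro i
    have h0 : (fun w => fderiv ℝ (fun z => ‖z - y‖ ^ 2) w (EuclideanSpace.single i (1:ℝ)))
      = fun w : Euc N => 2 * inner ℝ (w - y) (EuclideanSpace.single i (1:ℝ)) := by
      funext w; rw [fderiv_nsq]
    rw [h0]
    have h : HasFDerivAt (fun z : Euc N => z - y) (ContinuousLinearMap.id ℝ (Euc N)) x :=
      (hasFDerivAt_id x).sub_const y
    have h2 := (h.inner ℝ (hasFDerivAt_const (EuclideanSpace.single i (1:ℝ)) x)).const_mul 2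
    rw [h2.fderiv]
    simp
  simp only [this]
  simp
  ring

lemma lapl_radial {N : ℕ} (y x : Euc N) {f f' : ℝ → ℝ} {f'' : ℝ}
    (hf : ∀ᶠ s in nhds (‖x - y‖ ^ 2), HasDerivAt f (f' s) s)
    (hf' : HasDerivAt f' f'' (‖x - y‖ ^ 2)) :
    lapl (fun z => f (‖z - y‖ ^ 2)) x = 2 * N * f' (‖x - y‖ ^ 2) + 4 * ‖x - y‖ ^ 2 * f'' := by
  rw [lapl_comp (φ := fun z => ‖z - y‖ ^ 2) (cd_nsq y x) hf hf', lapl_nsq, sum_fderiv_nsq]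
  ring

lemma deriv2_nonpos {f : ℝ → ℝ} {x : ℝ} (hm : IsLocalMax f x) (hc : ContinuousAt f x) :
    deriv (deriv f) x ≤ 0 := by
  by_contra! h
  have h1 := isLocalMin_of_deriv_deriv_pos h hm.deriv_eq_zero hc
  have h2 : f =ᶠ[nhds x] fun _ => f x := by
    filter_upwards [hm, h1] with y a b
    exact le_antisymm a b
  have h3 := h2.deriv.deriv_eq
  simp at h3
  linarith

lemma lapl_nonpos {N : ℕ} {f : Euc N → ℝ} {x : Euc N} (hf : ContDiffAt ℝ 2 f x)
    (hm : IsLocalMax f x) : lapl f x ≤ 0 := by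
  unfold lapl
  refine Finset.sum_nonpos fun i _ => ?_
  set e : Euc N := EuclideanSpace.single i 1
  have hl : ∀ s : ℝ, HasDerivAt (fun s : ℝ => x + s • e) e s := by
    intro s
    simpa using ((hasDerivAt_id s).smul_const e).const_add x
  have hc : Tendsto (fun s : ℝ => x + s • e) (nhds 0) (nhds x) := by
    have := (hl 0).continuousAt.tendsto
    simpa using this
  have hm' : IsLocalMax (fun s : ℝ => f (x + s • e)) 0 := by
    have := hc.eventually hm
    unfold IsLocalMax IsMaxFilter
    simpa using this
  have hc' : ContinuousAt (fun s : ℝ => f (x + s • e)) 0 := by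
    have := hf.continuousAt.tendsto.comp hc
    unfold ContinuousAt
    simpa [Function.comp_def] using this
  have key := deriv2_nonpos hm' hc'
  have h1 : deriv (fun s : ℝ => f (x + s • e)) =ᶠ[nhds 0] fun s => fderiv ℝ f (x + s • e) e := by
    filter_upwards [hc.eventually (cd2_ev hf)] with s hs
    exact (hs.hasFDerivAt.comp_hasDerivAt s (hl s)).deriv
  rw [h1.deriv_eq] at key
  have h2 : HasFDerivAt (fun y => fderiv ℝ f y e) (fderiv ℝ (fun y => fderiv ℝ f y e) x) (x + (0:ℝ) • e) := by
    simpa using (cd2_fd hf e).hasFDerivAt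
  have h3 := (h2.comp_hasDerivAt 0 (hl 0)).deriv
  have h4 : deriv (fun s : ℝ => fderiv ℝ f (x + s • e) e) 0 = fderiv ℝ (fun y => fderiv ℝ f y e) x e := h3
  rw [h4] at key
  exact key

lemma lapl_smul {N : ℕ} {f : Euc N → ℝ} {x : Euc N} (c : ℝ) :
    lapl (fun y => f (c • y)) x = c ^ 2 * lapl f (c • x) := by
  unfold lapl
  rw [Finset.mul_sum]
  refine Finset.sum_congr rfl fun i _ => ?_
  have : (fun y => fderiv ℝ (fun y => f (c • y)) y (EuclideanSpace.single i (1:ℝ))) =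
    fun y => c * (fun z => fderiv ℝ f z (EuclideanSpace.single i (1:ℝ))) (c • y) := by
    funext y; rw [fderiv_comp_smul]; simp
  rw [this]
  have h : ∀ g : Euc N → ℝ, fderiv ℝ (fun y => c * g y) x = c • fderiv ℝ g x := by
    intro g
    have := congrFun (fderiv_const_smul_field (𝕜 := ℝ) (f := g) c) x
    simpa [Pi.smul_def] using this
  rw [h, fderiv_comp_smul (f := fun z => fderiv ℝ f z (EuclideanSpace.single i (1:ℝ)))]
  simp; ring

lemma cont_fd {N : ℕ} {f : Euc N → ℝ} (hf : ContDiff ℝ 2 f) (v : Euc N) :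
    ContDiff ℝ 1 (fun y => fderiv ℝ f y v) :=
  (hf.fderiv_right (m := 1) (by norm_num)).clm_apply contDiff_const

lemma cont_lapl {N : ℕ} {f : Euc N → ℝ} (hf : ContDiff ℝ 2 f) : Continuous (lapl f) := by
  unfold lapl
  refine continuous_finsetSum _ fun i _ => ?_
  exact ((cont_fd hf _).continuous_fderiv (by norm_num)).clm_apply continuous_const

lemma hcs_fd {N : ℕ} {f : Euc N → ℝ} (hf : HasCompactSupport f) (v : Euc N) :
    HasCompactSupport (fun y => fderiv ℝ f y v) := by
  have := (hf.fderiv (𝕜 := ℝ))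
  exact this.comp_left (g := fun L : Euc N →L[ℝ] ℝ => L v) (by simp)

lemma hcs_lapl {N : ℕ} {f : Euc N → ℝ} (hf : HasCompactSupport f) :
    HasCompactSupport (lapl f) := by
  refine HasCompactSupport.intro hf fun x hx => ?_
  have : f =ᶠ[nhds x] fun _ => 0 := by
    have := (isClosed_tsupport f).isOpen_compl.mem_nhds hx
    filter_upwards [this] with y hy
    exact image_eq_zero_of_notMem_tsupport hy
  rw [lapl_congr this]
  unfold lapl; simp

lemma ibp1 {N : ℕ} {f g : Euc N → ℝ} (hf : ContDiff ℝ 1 f) (hg : ContDiff ℝ 1 g)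
    (hc : HasCompactSupport f ∨ HasCompactSupport g) (v : Euc N) :
    ∫ x, fderiv ℝ f x v * g x = - ∫ x, f x * fderiv ℝ g x v := by
  have cf : Continuous fun x => fderiv ℝ f x v :=
    (hf.continuous_fderiv (by norm_num)).clm_apply continuous_const
  have cg : Continuous fun x => fderiv ℝ g x v :=
    (hg.continuous_fderiv (by norm_num)).clm_apply continuous_const
  have key := integral_mul_fderiv_eq_neg_fderiv_mul_of_integrable (μ := volume) (f := f) (g := g) (v := v)
    ?_ ?_ ?_ (fun x _ => hf.differentiable (by norm_num) x)
      (fun x _ => hg.differentiable (by norm_num) x)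
  · linarith
  · refine (cf.mul hg.continuous).integrable_of_hasCompactSupport ?_
    rcases hc with h | h
    · exact (hcs_fd h v).mul_right
    · exact h.mul_left
  · refine (hf.continuous.mul cg).integrable_of_hasCompactSupport ?_
    rcases hc with h | h
    · exact h.mul_right
    · exact (hcs_fd h v).mul_left
  · refine (hf.continuous.mul hg.continuous).integrable_of_hasCompactSupport ?_
    rcases hc with h | h
    · exact h.mul_right
    · exact h.mul_left

lemma ibp2 {N : ℕ} {f g : Euc N → ℝ} (hf : ContDiff ℝ 2 f) (hg : ContDiff ℝ 2 g)
    (hc : HasCompactSupport g) : ∫ x, lapl f x * g x = ∫ x, f x * lapl g x := by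
  unfold lapl
  simp only [Finset.sum_mul, Finset.mul_sum]
  have c1 : ∀ i : Fin N, Continuous fun x => fderiv ℝ (fun y => fderiv ℝ f y (EuclideanSpace.single i 1)) x (EuclideanSpace.single i 1) := fun i =>
    ((cont_fd hf _).continuous_fderiv (by norm_num)).clm_apply continuous_const
  have c2 : ∀ i : Fin N, Continuous fun x => fderiv ℝ (fun y => fderiv ℝ g y (EuclideanSpace.single i 1)) x (EuclideanSpace.single i 1) := fun i =>
    ((cont_fd hg _).continuous_fderiv (by norm_num)).clm_apply continuous_const
  rw [integral_finsetSum, integral_finsetSum]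
  · refine Finset.sum_congr rfl fun i _ => ?_
    rw [ibp1 (cont_fd hf _) (hg.of_le (by norm_num)) (Or.inr hc)]
    rw [ibp1 (hf.of_le (by norm_num)) (cont_fd hg _) (Or.inr (hcs_fd hc _))]
    simp
  · intro i _
    exact (hf.continuous.mul (c2 i)).integrable_of_hasCompactSupport ((hcs_fd (hcs_fd hc _) _).mul_left)
  · intro i _
    exact ((c1 i).mul hg.continuous).integrable_of_hasCompactSupport hc.mul_left

/-- differentiation under the integral sign -/
lemma deriv_param {N : ℕ} {F : ℝ → Euc N → ℝ} {J : Set ℝ} (hJ : IsOpen J) {k : Set (Euc N)}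
    (hk : IsCompact k) (hF : ContDiffOn ℝ 1 (fun p : ℝ × Euc N => F p.1 p.2) (J ×ˢ univ))
    (h0 : ∀ s ∈ J, ∀ y, y ∉ k → F s y = 0) {s : ℝ} (hs : s ∈ J) :
    HasDerivAt (fun s => ∫ y, F s y) (∫ y, deriv (fun s => F s y) s) s := by
  have ho : IsOpen (J ×ˢ (univ : Set (Euc N))) := hJ.prod isOpen_univ
  obtain ⟨ε, hε, hb⟩ := Metric.isOpen_iff.1 hJ s hs
  have hb' : closedBall s (ε/2) ⊆ J := (closedBall_subset_ball (by linarith)).trans hb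
  have hd : ∀ σ ∈ J, ∀ y, HasDerivAt (fun s => F s y)
      (fderiv ℝ (fun p : ℝ × Euc N => F p.1 p.2) (σ, y) (1, 0)) σ := by
    intro σ hσ y
    have h1 : DifferentiableAt ℝ (fun p : ℝ × Euc N => F p.1 p.2) (σ, y) :=
      (hF.contDiffAt (ho.mem_nhds ⟨hσ, mem_univ y⟩)).differentiableAt (by norm_num)
    have h2 : HasDerivAt (fun s : ℝ => (s, y)) ((1:ℝ), (0: Euc N)) σ :=
      (hasDerivAt_id σ).prodMk (hasDerivAt_const σ y)
    exact h1.hasFDerivAt.comp_hasDerivAt σ h2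
  have hcd : ContinuousOn (fun p : ℝ × Euc N => fderiv ℝ (fun p : ℝ × Euc N => F p.1 p.2) p (1, 0))
      (J ×ˢ univ) :=
    (hF.continuousOn_fderiv_of_isOpen ho (by norm_num)).clm_apply continuousOn_const
  obtain ⟨M, hM⟩ := (((isCompact_closedBall s (ε/2)).prod hk)).exists_bound_of_continuousOn
    (hcd.mono (prod_mono hb' (subset_univ k)))
  have hFc : ∀ σ ∈ J, Continuous (F σ) := by
    intro σ hσ
    have := hF.continuousOn.comp_continuous (f := fun y : Euc N => (σ, y)) (by fun_prop)
      (fun y => ⟨hσ, mem_univ y⟩)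
    exact this
  have hF'c : Continuous (fun y => deriv (fun s => F s y) s) := by
    have := hcd.comp_continuous (f := fun y : Euc N => (s, y)) (by fun_prop)
      (fun y => ⟨hs, mem_univ y⟩)
    refine this.congr fun y => ?_
    exact ((hd s hs y).deriv).symm
  refine (hasDerivAt_integral_of_dominated_loc_of_deriv_le (s := ball s (ε/2)) (μ := volume)
    (F := F) (F' := fun s y => deriv (fun s => F s y) s)
    (bound := k.indicator fun _ => M) (ball_mem_nhds s (by linarith)) ?_ ?_ ?_ ?_ ?_ ?_).2
  · filter_upwards [hJ.mem_nhds hs] with σ hσ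
    exact (hFc σ hσ).aestronglyMeasurable
  · exact (hFc s hs).integrable_of_hasCompactSupport (HasCompactSupport.intro hk (h0 s hs))
  · exact hF'c.aestronglyMeasurable
  · refine Eventually.of_forall fun y σ hσ => ?_
    by_cases hy : y ∈ k
    · rw [indicator_of_mem hy]
      have := hM (σ, y) ⟨ball_subset_closedBall hσ, hy⟩
      have hσ' := hb' (ball_subset_closedBall hσ)
      rw [(hd σ hσ' y).deriv]
      exact this
    · rw [indicator_of_notMem hy]
      have : (fun s => F s y) =ᶠ[nhds σ] fun _ => 0 := by
        filter_upwards [hJ.mem_nhds (hb' (ball_subset_closedBall hσ))] with τ hτ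
        exact h0 τ hτ y hy
      rw [this.deriv_eq]; simp
  · exact (integrable_indicator_iff hk.measurableSet).2 (integrableOn_const hk.measure_lt_top.ne (by simp))
  · refine Eventually.of_forall fun y σ hσ => ?_
    exact (hd σ (hb' (ball_subset_closedBall hσ)) y).differentiableAt.hasDerivAt

/-- smoothness of parametric integrals -/
lemma contDiff_param {N : ℕ} {P : Type} [NormedAddCommGroup P] [NormedSpace ℝ P]
    {F : P → Euc N → ℝ} {J : Set P} (hJ : IsOpen J) {k : Set (Euc N)}
    (hk : IsCompact k) {n : ℕ∞} (hF : ContDiffOn ℝ n (fun p : P × Euc N => F p.1 p.2) (J ×ˢ univ))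
    (h0 : ∀ s ∈ J, ∀ y, y ∉ k → F s y = 0) :
    ContDiffOn ℝ n (fun s => ∫ y, F s y) J := by
  have key := contDiffOn_convolution_right_with_param (μ := (volume : Measure (Euc N)))
    (f := fun _ : Euc N => (1:ℝ)) (ContinuousLinearMap.lsmul ℝ ℝ) (g := F) hJ hk
    (fun p x hp hx => h0 p hp x hx) (locallyIntegrable_const 1) hF
  have h2 : ContDiffOn ℝ n (fun s : P => (s, (0 : Euc N))) J := by fun_prop
  have := key.comp h2 (fun s hs => ⟨hs, mem_univ _⟩)
  refine this.congr fun s hs => ?_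
  simp only [Function.comp, convolution, ContinuousLinearMap.lsmul_apply, smul_eq_mul, one_mul, zero_sub]
  exact (integral_neg_eq_self (F s) volume).symm


lemma deriv_nonneg_of_left {f : ℝ → ℝ} {a t f' : ℝ} (hat : a < t) (hf : HasDerivAt f f' t)
    (h : ∀ s, a < s → s < t → f s ≤ f t) : 0 ≤ f' := by
  have h1 := (hasDerivAt_iff_tendsto_slope_left_right.1 hf).1
  refine ge_of_tendsto h1 ?_
  filter_upwards [Ioo_mem_nhdsLT hat] with s hs
  rw [slope_def_field]
  exact div_nonneg_of_nonpos (by linarith [h s hs.1 hs.2]) (by linarith [hs.2])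

section sol
variable {N : ℕ} {q : ℝ} {u : Euc N → ℝ → ℝ} {K : Set (Euc N)}

lemma sol_cdAt (hu : IsSol N q u K) {x : Euc N} {t : ℝ} (ht : 0 < t) :
    ContDiffAt ℝ 2 (fun p : Euc N × ℝ => u p.1 p.2) (x, t) :=
  hu.1.contDiffAt ((isOpen_univ.prod isOpen_Ioi).mem_nhds ⟨mem_univ _, ht⟩)

lemma sol_x (hu : IsSol N q u K) {t : ℝ} (ht : 0 < t) : ContDiff ℝ 2 (fun x => u x t) := by
  refine contDiff_iff_contDiffAt.2 fun x => ?_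
  exact (sol_cdAt hu ht).comp x (f := fun x : Euc N => (x, t)) (by fun_prop)

lemma sol_t (hu : IsSol N q u K) {x : Euc N} {t : ℝ} (ht : 0 < t) : DifferentiableAt ℝ (u x) t := by
  have := (sol_cdAt hu ht).comp t (f := fun t : ℝ => (x, t)) (by fun_prop)
  exact this.differentiableAt (by norm_num)

lemma comparison (hq : 1 < q) (hu : IsSol N q u K) {v : Euc N → ℝ → ℝ} {D O : Set (Euc N)}
    (hD : IsCompact D) (hO : IsOpen O) (hOD : O ⊆ D) {a b : ℝ} (ha : 0 < a)
    (hvc : ContinuousOn (fun p : Euc N × ℝ => v p.1 p.2) (D ×ˢ Icc a b))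
    (hv0 : ∀ x ∈ O, ∀ t ∈ Ioc a b, 0 ≤ v x t)
    (hvx : ∀ x ∈ O, ∀ t ∈ Ioc a b, ContDiffAt ℝ 2 (fun x => v x t) x)
    (hvt : ∀ x ∈ O, ∀ t ∈ Ioc a b, DifferentiableAt ℝ (v x) t)
    (hv : ∀ x ∈ O, ∀ t ∈ Ioc a b, 0 ≤ deriv (v x) t - lapl (fun y => v y t) x + v x t ^ q)
    (hb : ∀ x ∈ D, ∀ t ∈ Icc a b, t = a ∨ x ∉ O → u x t ≤ v x t) :
    ∀ x ∈ D, ∀ t ∈ Icc a b, u x t ≤ v x t := by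
  intro x hx t ht
  by_contra! hlt
  have huc : ContinuousOn (fun p : Euc N × ℝ => u p.1 p.2) (D ×ˢ Icc a b) :=
    hu.1.continuousOn.mono (prod_mono (subset_univ _) (fun s hs => lt_of_lt_of_le ha hs.1))
  obtain ⟨⟨x0, t0⟩, ⟨hx0, ht0⟩, hmax⟩ := (hD.prod (isCompact_Icc (a := a) (b := b))).exists_isMaxOn
    ⟨(x, t), hx, ht⟩ (huc.sub hvc)
  have hM : ∀ y ∈ D, ∀ s ∈ Icc a b, u y s - v y s ≤ u x0 t0 - v x0 t0 := fun y hy s hs =>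
    hmax (show (y, s) ∈ D ×ˢ Icc a b from ⟨hy, hs⟩)
  simp only at hx0 ht0
  have hpos : v x0 t0 < u x0 t0 := by have := hM x hx t ht; linarith
  have hne : ¬ (t0 = a ∨ x0 ∉ O) := fun h => absurd (hb x0 hx0 t0 ht0 h) (not_le.2 hpos)
  push Not at hne
  obtain ⟨hta, hxO⟩ := hne
  have hat : a < t0 := lt_of_le_of_ne ht0.1 (Ne.symm hta)
  have ht0' : t0 ∈ Ioc a b := ⟨hat, ht0.2⟩
  have ht0p : 0 < t0 := ha.trans hat
  have h1 : 0 ≤ deriv (u x0) t0 - deriv (v x0) t0 := by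
    refine deriv_nonneg_of_left (f := fun s => u x0 s - v x0 s) hat
      ((sol_t hu ht0p).hasDerivAt.sub (hvt x0 hxO t0 ht0').hasDerivAt) ?_
    intro s h1 h2
    exact hM x0 hx0 s ⟨h1.le, h2.le.trans ht0.2⟩
  have hux := (sol_x hu ht0p).contDiffAt (x := x0)
  have hvx' := hvx x0 hxO t0 ht0'
  have h2 : lapl (fun y => u y t0) x0 ≤ lapl (fun y => v y t0) x0 := by
    have e1 : (fun y => u y t0) = fun y => v y t0 + (u y t0 - v y t0) := by funext y; ring
    rw [e1, lapl_add hvx' (hux.sub hvx')]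
    have : lapl (fun y => u y t0 - v y t0) x0 ≤ 0 := by
      refine lapl_nonpos (hux.sub hvx') ?_
      filter_upwards [hO.mem_nhds hxO] with y hy
      exact hM y (hOD hy) t0 ht0
    linarith
  have h3 : v x0 t0 ^ q < u x0 t0 ^ q :=
    Real.rpow_lt_rpow (hv0 x0 hxO t0 ht0') hpos (by linarith)
  have h4 := hu.2.2.1 x0 t0 ht0p
  have h5 := hv x0 hxO t0 ht0'
  linarith

/-- the Osserman barrier -/
def zb (N : ℕ) (q L : ℝ) (y x : Euc N) : ℝ :=
  (((2 * N * (2 / (q - 1)) + 4 * (2 / (q - 1)) * (2 / (q - 1) + 1)) * L ^ 2) ^ (1 / (q - 1))) *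
    (L ^ 2 - ‖x - y‖ ^ 2) ^ (-(2 / (q - 1)))

lemma zb_pos (hq : 1 < q) {L : ℝ} (hL : 0 < L) {y x : Euc N} (hx : ‖x - y‖ < L) : 0 < zb N q L y x := by
  have h1 : 0 < q - 1 := by linarith
  have h2 : 0 < L ^ 2 - ‖x - y‖ ^ 2 := by nlinarith [norm_nonneg (x - y)]
  unfold zb
  positivity

lemma zb_cd {L : ℝ} (hL : 0 < L) {y x : Euc N} (hx : ‖x - y‖ < L) : ContDiffAt ℝ 2 (zb N q L y) x := by
  have h2 : 0 < L ^ 2 - ‖x - y‖ ^ 2 := by nlinarith [norm_nonneg (x - y)]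
  unfold zb
  refine contDiffAt_const.mul ?_
  exact (contDiffAt_const.sub (cd_nsq y x)).rpow_const_of_ne h2.ne'

lemma zb_super (hq : 1 < q) {L : ℝ} (hL : 0 < L) {y x : Euc N} (hx : ‖x - y‖ < L) :
    lapl (zb N q L y) x ≤ zb N q L y x ^ q := by
  have h1 : 0 < q - 1 := by linarith
  have h2 : 0 < L ^ 2 - ‖x - y‖ ^ 2 := by nlinarith [norm_nonneg (x - y)]
  set p := 2 / (q - 1) with hp
  have hp0 : 0 < p := by positivity
  set c := (2 * N * p + 4 * p * (p + 1)) with hc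
  have hc0 : 0 < c := by positivity
  set A := (c * L ^ 2) ^ (1 / (q - 1)) with hA
  have hA0 : 0 < A := by positivity
  have hz : zb N q L y = fun x => (fun s => A * (L ^ 2 - s) ^ (-p)) (‖x - y‖ ^ 2) := by
    funext x; rfl
  have hd : ∀ s < L ^ 2, ∀ e : ℝ, HasDerivAt (fun s => (L ^ 2 - s) ^ e) (-e * (L ^ 2 - s) ^ (e - 1)) s := by
    intro s hs e
    have := ((hasDerivAt_id' s).const_sub (L ^ 2)).rpow_const (p := e) (Or.inl (by linarith))
    exact this.congr_deriv (by ring)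
  have hlt : ‖x - y‖ ^ 2 < L ^ 2 := by linarith
  have hl : lapl (zb N q L y) x = 2 * N * (A * (p * (L ^ 2 - ‖x - y‖ ^ 2) ^ (-p - 1))) +
      4 * ‖x - y‖ ^ 2 * (A * (p * ((p + 1) * (L ^ 2 - ‖x - y‖ ^ 2) ^ (-p - 2)))) := by
    rw [hz]
    refine lapl_radial y x (f := fun s => A * (L ^ 2 - s) ^ (-p)) (f' := fun s => A * (p * (L ^ 2 - s) ^ (-p - 1))) ?_ ?_
    · filter_upwards [Iio_mem_nhds hlt] with s hs
      have := (hd s hs (-p)).const_mul A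
      simpa using this
    · have := ((hd _ hlt (-p - 1)).const_mul p).const_mul A
      exact this.congr_deriv (by ring_nf)
  have hzq : zb N q L y x ^ q = A * (c * L ^ 2) * (L ^ 2 - ‖x - y‖ ^ 2) ^ (-p - 2) := by
    rw [hz]; simp only
    rw [Real.mul_rpow hA0.le (by positivity), ← Real.rpow_mul h2.le]
    congr 1
    · rw [hA, ← Real.rpow_mul (by positivity)]
      have : 1 / (q - 1) * q = 1 / (q - 1) + 1 := by field_simp; ring
      rw [this, Real.rpow_add (by positivity), Real.rpow_one]
    · congr 1
      rw [hp]; field_simp; ring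
  have h3 : (L ^ 2 - ‖x - y‖ ^ 2) ^ (-p - 1) = (L ^ 2 - ‖x - y‖ ^ 2) * (L ^ 2 - ‖x - y‖ ^ 2) ^ (-p - 2) := by
    nth_rewrite 2 [← Real.rpow_one (L ^ 2 - ‖x - y‖ ^ 2)]
    rw [← Real.rpow_add h2]; ring_nf
  rw [hl, hzq, h3]
  have hB : 0 < (L ^ 2 - ‖x - y‖ ^ 2) ^ (-p - 2) := by positivity
  set B := (L ^ 2 - ‖x - y‖ ^ 2) ^ (-p - 2)
  have : 2 * N * p * (L ^ 2 - ‖x - y‖ ^ 2) + 4 * ‖x - y‖ ^ 2 * p * (p + 1) ≤ c * L ^ 2 := by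
    rw [hc, add_mul]
    have e1 : 2 * N * p * (L ^ 2 - ‖x - y‖ ^ 2) ≤ 2 * N * p * L ^ 2 := by
      gcongr; nlinarith [norm_nonneg (x - y)]
    have e2 : 4 * ‖x - y‖ ^ 2 * p * (p + 1) ≤ 4 * L ^ 2 * p * (p + 1) := by gcongr
    linarith
  calc _ = A * B * (2 * N * p * (L ^ 2 - ‖x - y‖ ^ 2) + 4 * ‖x - y‖ ^ 2 * p * (p + 1)) := by ring
    _ ≤ A * B * (c * L ^ 2) := by gcongr
    _ = _ := by ring

/-- barrier value bound on the half ball -/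
lemma zb_le (N : ℕ) (hq : 1 < q) : ∃ A : ℝ, 0 < A ∧ ∀ L : ℝ, 0 < L → ∀ y x : Euc N, ‖x - y‖ ≤ L / 2 →
    zb N q L y x ≤ A * L ^ (-(2 / (q - 1))) := by
  have h1 : 0 < q - 1 := by linarith
  set p := 2 / (q - 1) with hp
  have hp0 : 0 < p := by positivity
  set c := (2 * N * p + 4 * p * (p + 1)) with hc
  have hc0 : 0 < c := by positivity
  refine ⟨c ^ (1 / (q - 1)) * (1 / 2) ^ (-p), by positivity, ?_⟩
  intro L hL y x hx
  unfold zb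
  have h2 : (L ^ 2 - ‖x - y‖ ^ 2) ^ (-p) ≤ (L ^ 2 * (1 / 2)) ^ (-p) := by
    refine Real.rpow_le_rpow_of_nonpos (by positivity) ?_ (by linarith)
    nlinarith [norm_nonneg (x - y)]
  calc _ ≤ (c * L ^ 2) ^ (1 / (q - 1)) * (L ^ 2 * (1 / 2)) ^ (-p) := by
        gcongr
    _ = c ^ (1 / (q - 1)) * (1 / 2) ^ (-p) * L ^ (-p) := by
        rw [Real.mul_rpow hc0.le (by positivity), Real.mul_rpow (by positivity) (by positivity)]
        have : (L ^ 2) ^ (1 / (q - 1)) * (L ^ 2) ^ (-p) = L ^ (-p) := by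
          rw [← Real.rpow_add (by positivity), ← Real.rpow_natCast, ← Real.rpow_mul hL.le]
          congr 1
          rw [hp]; push_cast; field_simp; ring
        rw [← this]; ring

lemma zb_blow (N : ℕ) (hq : 1 < q) {L : ℝ} (hL : 0 < L) (M : ℝ) : ∃ L' : ℝ, 0 < L' ∧ L' < L ∧
    ∀ δ, L' ≤ δ → δ < L → ∀ y x : Euc N, ‖x - y‖ = δ → M ≤ zb N q L y x := by
  have h1 : 0 < q - 1 := by linarith
  have hp0 : 0 < 2 / (q - 1) := by positivity
  set p := 2 / (q - 1) with hp
  set A := ((2 * N * p + 4 * p * (p + 1)) * L ^ 2) ^ (1 / (q - 1)) with hA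
  have hA0 : 0 < A := by positivity
  have ht : Tendsto (fun s : ℝ => A * s ^ (-p)) (nhdsWithin 0 (Ioi 0)) atTop :=
    (tendsto_rpow_neg_nhdsGT_zero (neg_lt_zero.2 hp0)).const_mul_atTop hA0
  have hs : Tendsto (fun δ : ℝ => L ^ 2 - δ ^ 2) (nhdsWithin L (Iio L)) (nhdsWithin 0 (Ioi 0)) := by
    refine tendsto_nhdsWithin_iff.2 ⟨?_, ?_⟩
    · have : ContinuousAt (fun δ : ℝ => L ^ 2 - δ ^ 2) L := by fun_prop
      have := this.tendsto
      simp only [sub_self] at this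
      exact this.mono_left nhdsWithin_le_nhds
    · filter_upwards [Ioo_mem_nhdsLT hL] with δ hδ
      have := hδ.1; have := hδ.2
      simp only [mem_Ioi]; nlinarith
  have h := ((ht.comp hs).eventually_ge_atTop M).and (Ioo_mem_nhdsLT hL)
  obtain ⟨l, hl, hl2⟩ := (mem_nhdsLT_iff_exists_Ioo_subset).1 h
  refine ⟨max ((l + L) / 2) (L / 2), by positivity, ?_, ?_⟩
  · simp only [mem_Iio] at hl
    exact max_lt (by linarith) (by linarith)
  · intro δ h1 h2 y x hx
    simp only [mem_Iio] at hl
    have := hl2 (show δ ∈ Ioo l L from ⟨by linarith [(le_max_left _ _).trans h1], h2⟩)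
    have := this.1
    simp only [Function.comp] at this
    unfold zb
    rw [hx]
    exact this

lemma sol_bdd (hu : IsSol N q u K) {D : Set (Euc N)} (hD : IsCompact D) {a b : ℝ} (ha : 0 < a) :
    ∃ M, ∀ x ∈ D, ∀ t ∈ Icc a b, u x t ≤ M := by
  have huc : ContinuousOn (fun p : Euc N × ℝ => u p.1 p.2) (D ×ˢ Icc a b) :=
    hu.1.continuousOn.mono (prod_mono (subset_univ _) (fun s hs => lt_of_lt_of_le ha hs.1))
  obtain ⟨M, hM⟩ := (hD.prod (isCompact_Icc (a := a) (b := b))).exists_bound_of_continuousOn huc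
  exact ⟨M, fun x hx t ht => (le_abs_self _).trans (hM (x, t) ⟨hx, ht⟩)⟩

/-- general barrier comparison -/
lemma barrier (hq : 1 < q) (hu : IsSol N q u K) {f : Euc N → ℝ → ℝ} {S : Set (Euc N)}
    (hS : IsOpen S) {y : Euc N} {L a b : ℝ} (hL : 0 < L) (ha : 0 < a)
    (hfc : ContinuousOn (fun p : Euc N × ℝ => f p.1 p.2) (univ ×ˢ Icc a b))
    (hf0 : ∀ x, ∀ t ∈ Icc a b, 0 ≤ f x t)
    (hfx : ∀ t ∈ Icc a b, ContDiff ℝ 2 (fun x => f x t))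
    (hft : ∀ x, ∀ t ∈ Ioc a b, DifferentiableAt ℝ (f x) t)
    (hf : ∀ x, ∀ t ∈ Ioc a b, 0 ≤ deriv (f x) t - lapl (fun y => f y t) x + f x t ^ q)
    (hfa : ∀ x ∈ closure S, ‖x - y‖ ≤ L → u x a ≤ f x a)
    (hfS : ∀ x ∈ closure S, x ∉ S → ‖x - y‖ ≤ L → ∀ t ∈ Icc a b, u x t ≤ f x t) :
    ∀ x ∈ S, ‖x - y‖ < L → ∀ t ∈ Icc a b, u x t ≤ f x t + zb N q L y x := by
  intro x hx hxL t ht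
  obtain ⟨M, hM⟩ := sol_bdd hu (isCompact_closedBall y L) (a := a) (b := b) ha
  obtain ⟨L1, hL1, hL1L, hz⟩ := zb_blow N hq hL M
  set L' := max L1 ‖x - y‖ with hL'
  have hL'L : L' < L := max_lt hL1L hxL
  have hL'0 : 0 < L' := hL1.trans_le (le_max_left _ _)
  have key := comparison hq hu (v := fun x t => f x t + zb N q L y x)
    (D := closedBall y L' ∩ closure S) (O := ball y L' ∩ S)
    ((isCompact_closedBall y L').inter_right isClosed_closure) (isOpen_ball.inter hS)
    (inter_subset_inter ball_subset_closedBall subset_closure) (a := a) (b := b) ha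
    ?_ ?_ ?_ ?_ ?_ ?_
  · exact key x ⟨by simp [dist_eq_norm, hL'], subset_closure hx⟩ t ht
  · refine (hfc.mono (prod_mono (subset_univ _) subset_rfl)).add ?_
    have : ContinuousOn (zb N q L y) (closedBall y L' ∩ closure S) := by
      intro z hz
      refine (zb_cd hL ?_).continuousAt.continuousWithinAt
      have := hz.1; rw [mem_closedBall, dist_eq_norm] at this; linarith
    exact this.comp continuousOn_fst (fun p hp => hp.1)
  all_goals try
    rintro z ⟨hz1, hz2⟩ s hs
    have hs' : s ∈ Icc a b := ⟨hs.1.le, hs.2⟩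
    have hzL : ‖z - y‖ < L := by
      rw [mem_ball, dist_eq_norm] at hz1; linarith
  · exact add_nonneg (hf0 z s hs') (zb_pos hq hL hzL).le
  · exact (hfx s hs').contDiffAt.add (zb_cd hL hzL)
  · exact (hft z s hs).add_const _
  · rw [deriv_add_const, lapl_add (hfx s hs').contDiffAt (zb_cd hL hzL)]
    have := zb_super (q := q) hq hL hzL
    have h2 := hf z s hs
    have h3 := Real.add_rpow_le_rpow_add (hf0 z s hs') (zb_pos hq hL hzL).le hq.le
    have h3 : f z s ^ q + zb N q L y z ^ q ≤ (f z s + zb N q L y z) ^ q := h3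
    linarith
  · rintro z ⟨hz1, hz2⟩ s hs hor
    rw [mem_closedBall, dist_eq_norm] at hz1
    have hzL : ‖z - y‖ < L := by linarith
    have hzp := zb_pos hq hL hzL
    rcases hor with rfl | hor
    · linarith [hfa z hz2 hzL.le]
    · by_cases hzS : z ∈ S
      · have : ‖z - y‖ = L' := by
          by_contra hne
          exact hor ⟨by rw [mem_ball, dist_eq_norm]; exact lt_of_le_of_ne hz1 hne, hzS⟩
        have h1 := hz L' (le_max_left _ _) hL'L y z this
        have h2 := hM z (by rw [mem_closedBall, dist_eq_norm]; exact hzL.le) s hs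
        linarith [hf0 z s hs]
      · linarith [hfS z hz2 hzS hzL.le s hs]

end sol

section sol
variable {N : ℕ} {q : ℝ} {u : Euc N → ℝ → ℝ} {K : Set (Euc N)}

lemma trace_small (hu : IsSol N q u K) {E : Set (Euc N)} (hE : IsCompact E) (hEK : E ⊆ Kᶜ)
    {ε : ℝ} (hε : 0 < ε) : ∃ δ > 0, ∀ t, 0 < t → t < δ → ∀ x ∈ E, u x t ≤ ε := by
  have h := (hu.2.2.2 E hE hEK).eventually (gt_mem_nhds hε)
  obtain ⟨δ, hδ, hs⟩ := mem_nhdsGT_iff_exists_Ioo_subset.1 h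
  refine ⟨δ, hδ, fun t h0 h1 x hx => ?_⟩
  have h2 : sSup ((fun x => u x t) '' E) < ε := hs ⟨h0, h1⟩
  obtain ⟨M, hM⟩ := sol_bdd hu hE (a := t) (b := t) h0
  have : u x t ≤ sSup ((fun x => u x t) '' E) := by
    refine le_csSup ⟨M, ?_⟩ ⟨x, hx, rfl⟩
    rintro _ ⟨z, hz, rfl⟩
    exact hM z hz t ⟨le_rfl, le_rfl⟩
  linarith

lemma lapl_const (c : ℝ) (x : Euc N) : lapl (fun _ : Euc N => c) x = 0 := by
  unfold lapl; simp

lemma KO_t (N : ℕ) (hq : 1 < q) : ∃ A : ℝ, 0 < A ∧ ∀ u K, IsSol N q u K → ∀ (x : Euc N) t, 0 < t →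
    u x t ≤ A * t ^ (-(1 / (q - 1))) := by
  have h1 : 0 < q - 1 := by linarith
  obtain ⟨A, hA, hz⟩ := zb_le N hq
  set k := 1 / (q - 1) with hk
  have hk0 : 0 < k := by positivity
  refine ⟨((q - 1) / 2) ^ (-k) + A, by positivity, ?_⟩
  intro u K hu x T hT
  set τ := T / 2 with hτ
  obtain ⟨M, hM⟩ := sol_bdd hu (isCompact_closedBall x (√T)) (a := τ) (b := T) (by positivity)
  have ht : Tendsto (fun t : ℝ => ((q - 1) * (t - τ)) ^ (-k)) (nhdsWithin τ (Ioi τ)) atTop := by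
    refine (tendsto_rpow_neg_nhdsGT_zero (neg_lt_zero.2 hk0)).comp (tendsto_nhdsWithin_iff.2 ⟨?_, ?_⟩)
    · have : ContinuousAt (fun t : ℝ => (q - 1) * (t - τ)) τ := by fun_prop
      have := this.tendsto
      simp only [sub_self, mul_zero] at this
      exact this.mono_left nhdsWithin_le_nhds
    · filter_upwards [self_mem_nhdsWithin] with t ht
      simp only [mem_Ioi] at ht ⊢
      have : 0 < t - τ := by linarith
      positivity
  have hτT : τ < T := by linarith
  obtain ⟨a, ha1, ha2⟩ := ((ht.eventually_ge_atTop M).and (Ioo_mem_nhdsGT hτT)).exists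
  have hpos : ∀ t ∈ Icc a T, 0 < (q - 1) * (t - τ) := by
    intro t ht
    have : 0 < t - τ := by linarith [ha2.1, ht.1]
    positivity
  have hder : ∀ t ∈ Icc a T, HasDerivAt (fun t => ((q - 1) * (t - τ)) ^ (-k))
      (-((q - 1) * (t - τ)) ^ (-k - 1)) t := by
    intro t ht
    have := (((hasDerivAt_id' t).sub_const τ).const_mul (q - 1)).rpow_const (p := -k)
      (Or.inl (hpos t ht).ne')
    refine this.congr_deriv ?_
    have : (q - 1) * k = 1 := by rw [hk]; field_simp
    linear_combination (-(((q - 1) * (t - τ)) ^ (-k - 1))) * this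
  have key := barrier hq hu (f := fun _ t => ((q - 1) * (t - τ)) ^ (-k)) isOpen_univ (y := x)
    (L := √T) (a := a) (b := T) (by positivity) (by linarith [ha2.1]) ?_ ?_ ?_ ?_ ?_ ?_ ?_ x (mem_univ x) 
    (by simpa using hT) T ⟨ha2.2.le, le_rfl⟩
  · have h2 := hz (√T) (by positivity) x x (by simp; positivity)
    have h3 : √T ^ (-(2 / (q - 1))) = T ^ (-k) := by
      rw [Real.sqrt_eq_rpow, ← Real.rpow_mul hT.le]
      congr 1; rw [hk]; field_simp
    have h4 : ((q - 1) * (T - τ)) ^ (-k) = ((q - 1) / 2) ^ (-k) * T ^ (-k) := by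
      rw [← Real.mul_rpow (by positivity) hT.le]
      congr 1; rw [hτ]; ring
    rw [h3] at h2
    rw [h4] at key
    rw [add_mul]
    linarith
  · have : ContinuousOn (fun t => ((q - 1) * (t - τ)) ^ (-k)) (Icc a T) := fun t ht =>
      (hder t ht).continuousAt.continuousWithinAt
    exact this.comp continuousOn_snd (fun p hp => hp.2)
  · intro _ t ht; exact (Real.rpow_pos_of_pos (hpos t ht) _).le
  · intro t ht; exact contDiff_const
  · intro _ t ht; exact (hder t ⟨ht.1.le, ht.2⟩).differentiableAt
  · intro z t ht
    have ht' : t ∈ Icc a T := ⟨ht.1.le, ht.2⟩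
    rw [(hder t ht').deriv, lapl_const, ← Real.rpow_mul (hpos t ht').le]
    have : -k * q = -k - 1 := by rw [hk]; field_simp; ring
    rw [this]; simp
  · intro z _ hz
    refine (hM z ?_ a ⟨ha2.1.le, ha2.2.le⟩).trans ha1
    rwa [mem_closedBall, dist_eq_norm]
  · intro z _ h; exact absurd (mem_univ z) h

lemma KO_d (N : ℕ) (hq : 1 < q) : ∃ A : ℝ, 0 < A ∧ ∀ u K, IsSol N q u K → ∀ (x : Euc N) t L, 0 < t →
    0 < L → closedBall x L ⊆ Kᶜ → u x t ≤ A * L ^ (-(2 / (q - 1))) := by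
  obtain ⟨A, hA, hz⟩ := zb_le N hq
  refine ⟨A, hA, ?_⟩
  intro u K hu x T L hT hL hLK
  refine le_of_forall_pos_le_add fun ε hε => ?_
  obtain ⟨δ, hδ, hδ2⟩ := trace_small hu (isCompact_closedBall x L) hLK hε
  set a := min (δ / 2) T with ha
  have ha0 : 0 < a := by positivity
  have haT : a ≤ T := min_le_right _ _
  have haδ : a < δ := lt_of_le_of_lt (min_le_left _ _) (by linarith)
  have key := barrier hq hu (f := fun _ _ => ε) isOpen_univ (y := x)
    (L := L) (a := a) (b := T) hL ha0 continuousOn_const (fun _ _ _ => hε.le)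
    (fun _ _ => contDiff_const) (fun _ _ _ => differentiableAt_const _) ?_ ?_
    (fun z _ h => absurd (mem_univ z) h) x (mem_univ x)
    (by simpa using hL) T ⟨haT, le_rfl⟩
  · have h2 := hz L hL x x (by simp; positivity)
    linarith
  · intro z t ht
    rw [lapl_const]; simp; positivity
  · intro z _ hz
    refine hδ2 a ha0 haδ z ?_
    rwa [mem_closedBall, dist_eq_norm]

lemma decay (hq : 1 < q) (hu : IsSol N q u K) {r : ℝ} (hr : 0 < r) (hK : K ⊆ ball (0 : Euc N) r)
    {m : ℝ} (hm : 0 < m) {T : ℝ} (hT : 0 < T) : ∃ C : ℝ, 0 < C ∧ ∀ x : Euc N, r < ‖x‖ → ∀ t, 0 < t →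
      t ≤ T → u x t ≤ C * (1 + ‖x‖ ^ 2) ^ (-m) := by
  have h1 : 0 < q - 1 := by linarith
  obtain ⟨A, hA, hz⟩ := zb_le N hq
  -- bound on the sphere
  obtain ⟨M, hM0, hM⟩ : ∃ M : ℝ, 0 < M ∧ ∀ x : Euc N, ‖x‖ = r → ∀ t, 0 < t → t ≤ T → u x t ≤ M := by
    obtain ⟨δ, hδ, hδ2⟩ := trace_small hu (isCompact_sphere (0 : Euc N) r) (fun z hz hzK => by
      have := hK hzK; rw [mem_sphere] at hz; rw [mem_ball] at this; linarith) one_pos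
    obtain ⟨M, hM⟩ := sol_bdd hu (isCompact_sphere (0 : Euc N) r) (a := δ / 2) (b := T) (by positivity)
    refine ⟨max M 1, by positivity, fun x hx t h0 h1 => ?_⟩
    have hxs : x ∈ sphere (0 : Euc N) r := by simpa using hx
    by_cases h : t < δ
    · exact (hδ2 t h0 h x hxs).trans (le_max_right _ _)
    · exact (hM x hxs t ⟨by linarith, h1⟩).trans (le_max_left _ _)
  set B := M * (1 + r ^ 2) ^ m with hB
  have hB0 : 0 < B := by positivity
  set l := 4 * m * (m + 1) with hl
  have hl0 : 0 < l := by positivity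
  set f : Euc N → ℝ → ℝ := fun x t => B * exp (l * t) * (1 + ‖x - 0‖ ^ 2) ^ (-m) with hf
  refine ⟨B * exp (l * T), by positivity, ?_⟩
  intro x hx T' hT' hT'T
  have hlim : ∀ L : ℝ, 2 * ‖x‖ + 1 ≤ L → u x T' ≤ f x T' + A * L ^ (-(2 / (q - 1))) := by
    intro L hL
    have hL0 : 0 < L := by linarith [norm_nonneg x]
    obtain ⟨δ, hδ, hδ2⟩ := trace_small hu (E := closedBall (0 : Euc N) L ∩ (ball 0 r)ᶜ)
      ((isCompact_closedBall (0 : Euc N) L).inter_right isOpen_ball.isClosed_compl)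
      (fun z hz hzK => hz.2 (hK hzK)) (ε := B * (1 + L ^ 2) ^ (-m)) (by positivity)
    set a := min (δ / 2) T' with ha
    have ha0 : 0 < a := by positivity
    have haT : a ≤ T' := min_le_right _ _
    have haδ : a < δ := lt_of_le_of_lt (min_le_left _ _) (by linarith)
    have hSc : ∀ z : Euc N, z ∈ closure {z : Euc N | r < ‖z‖} → r ≤ ‖z‖ := by
      intro z hz
      have : closure {z : Euc N | r < ‖z‖} ⊆ {z | r ≤ ‖z‖} :=
        closure_minimal (fun z (hz : r < ‖z‖) => hz.le) (isClosed_le continuous_const continuous_norm)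
      exact this hz
    have hd : ∀ s, -1 < s → ∀ e : ℝ, HasDerivAt (fun s => (1 + s) ^ e) (e * (1 + s) ^ (e - 1)) s := by
      intro s hs e
      have := ((hasDerivAt_id' s).const_add 1).rpow_const (p := e) (Or.inl (by linarith))
      exact this.congr_deriv (by ring)
    have hpos : ∀ z : Euc N, (0:ℝ) < 1 + ‖z - 0‖ ^ 2 := fun z => by positivity
    have key := barrier hq hu (f := f) (S := {z | r < ‖z‖}) (isOpen_lt continuous_const continuous_norm)
      (y := 0) (L := L) (a := a) (b := T') hL0 ha0 ?_ (fun _ _ _ => by simp only [hf]; positivity) ?_ ?_ ?_ ?_ ?_ x hx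
      (by simp; linarith [norm_nonneg x]) T' ⟨haT, le_rfl⟩
    · have := hz L hL0 0 x (by simp; linarith)
      linarith
    · refine Continuous.continuousOn ?_
      simp only [hf]
      refine Continuous.mul (by fun_prop) (Continuous.rpow_const (by fun_prop) fun p => Or.inl (hpos _).ne')
    · intro t _
      refine contDiff_iff_contDiffAt.2 fun z => ?_
      exact contDiffAt_const.mul ((contDiffAt_const.add (cd_nsq 0 z)).rpow_const_of_ne (hpos z).ne')
    · intro z t _
      simp only [hf]
      fun_prop
    · intro z t ht
      have e1 : deriv (f z) t = l * f z t := by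
        have : HasDerivAt (f z) (B * (exp (l * t) * (l * 1)) * (1 + ‖z - 0‖ ^ 2) ^ (-m)) t := by
          simp only [hf]
          exact ((((hasDerivAt_id' t).const_mul l).exp).const_mul B).mul_const _
        rw [this.deriv]; simp only [hf]; ring
      set D := B * exp (l * t) with hD
      have hD0 : 0 < D := by positivity
      have hs1 : -1 < ‖z - 0‖ ^ 2 := by linarith [hpos z]
      have e2 : lapl (fun y => f y t) z = 2 * N * (D * (-m * (1 + ‖z - 0‖ ^ 2) ^ (-m - 1))) +
          4 * ‖z - 0‖ ^ 2 * (D * (-m * ((-m - 1) * (1 + ‖z - 0‖ ^ 2) ^ (-m - 2)))) := by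
        simp only [hf]
        refine lapl_radial 0 z (f := fun s => D * (1 + s) ^ (-m)) (f' := fun s => D * (-m * (1 + s) ^ (-m - 1))) ?_ ?_
        · filter_upwards [Ioi_mem_nhds hs1] with s hs
          exact (hd s hs (-m)).const_mul D
        · have := ((hd _ hs1 (-m - 1)).const_mul (-m)).const_mul D
          exact this.congr_deriv (by ring_nf)
      have e3 : lapl (fun y => f y t) z ≤ l * f z t := by
        rw [e2]
        simp only [hf]
        rw [← hD]
        have p1 : 0 < (1 + ‖z - 0‖ ^ 2) ^ (-m - 1) := Real.rpow_pos_of_pos (hpos z) _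
        have p2 : 0 < (1 + ‖z - 0‖ ^ 2) ^ (-m - 2) := Real.rpow_pos_of_pos (hpos z) _
        have p3 : (1 + ‖z - 0‖ ^ 2) ^ (-m) = (1 + ‖z - 0‖ ^ 2) ^ 2 * (1 + ‖z - 0‖ ^ 2) ^ (-m - 2) := by
          rw [← Real.rpow_natCast (1 + ‖z - 0‖ ^ 2) 2, ← Real.rpow_add (hpos z)]
          congr 1; push_cast; ring
        rw [p3]
        have n1 : 0 ≤ 2 * N * (D * (m * (1 + ‖z - 0‖ ^ 2) ^ (-m - 1))) := by positivity
        have n2 : ‖z - 0‖ ^ 2 ≤ (1 + ‖z - 0‖ ^ 2) ^ 2 := by nlinarith [sq_nonneg ‖z - 0‖]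
        have n3 : 0 ≤ D * (m * ((m + 1) * (1 + ‖z - 0‖ ^ 2) ^ (-m - 2))) := by positivity
        have n4 := mul_le_mul_of_nonneg_right n2 n3
        rw [hl]
        nlinarith
      have e4 : 0 ≤ f z t ^ q := Real.rpow_nonneg (by simp only [hf]; positivity) _
      rw [e1]; linarith
    · intro z hzc hzL
      have hzr := hSc z hzc
      have h := hδ2 a ha0 haδ z ⟨by simpa using hzL, by simpa using hzr⟩
      refine h.trans ?_
      simp only [hf]
      have b1 : (1 + L ^ 2) ^ (-m) ≤ (1 + ‖z - 0‖ ^ 2) ^ (-m) :=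
        Real.rpow_le_rpow_of_nonpos (hpos z) (by gcongr) (by linarith)
      have b2 : 1 ≤ exp (l * a) := Real.one_le_exp (by positivity)
      have b3 : B ≤ B * exp (l * a) := le_mul_of_one_le_right hB0.le b2
      gcongr
    · intro z hzc hzS hzL t ht
      have hzr : ‖z‖ = r := le_antisymm (not_lt.1 hzS) (hSc z hzc)
      have ht0 : 0 < t := ha0.trans_le ht.1
      refine (hM z hzr t ht0 (ht.2.trans hT'T)).trans ?_
      simp only [hf, sub_zero, hzr, hB]
      have b2 : 1 ≤ exp (l * t) := Real.one_le_exp (by positivity)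
      have : M * (1 + r ^ 2) ^ m * exp (l * t) * (1 + r ^ 2) ^ (-m) = M * exp (l * t) := by
        have : (1 + r ^ 2) ^ m * (1 + r ^ 2) ^ (-m) = 1 := by
          rw [← Real.rpow_add (by positivity)]; simp
        linear_combination M * exp (l * t) * this
      rw [this]
      exact le_mul_of_one_le_right hM0.le b2
  have hfin : u x T' ≤ f x T' := by
    have ht : Tendsto (fun L : ℝ => f x T' + A * L ^ (-(2 / (q - 1)))) atTop (nhds (f x T' + A * 0)) :=
      ((tendsto_rpow_neg_atTop (by positivity)).const_mul A).const_add _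
    rw [mul_zero, add_zero] at ht
    refine ge_of_tendsto ht ?_
    filter_upwards [eventually_ge_atTop (2 * ‖x‖ + 1)] with L hL using hlim L hL
  refine hfin.trans ?_
  simp only [hf, sub_zero]
  gcongr

end sol

section heat
variable {N : ℕ}

def GK (N : ℕ) (x : Euc N) (t : ℝ) : ℝ :=
  (4 * π * t) ^ (-(N : ℝ) / 2) * Real.exp (-‖x‖ ^ 2 / (4 * t))

lemma hp_eq (η : Euc N → ℝ) (x : Euc N) (t : ℝ) : heatPot N η x t = ∫ y, GK N (x - y) t * η y := rfl

lemma GK_pos (x : Euc N) {t : ℝ} (ht : 0 < t) : 0 < GK N x t := by unfold GK; positivity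

lemma GK_neg (x : Euc N) (t : ℝ) : GK N (-x) t = GK N x t := by unfold GK; rw [norm_neg]

lemma GK_cdAt (p : Euc N × ℝ) (hp : 0 < p.2) {n : WithTop ℕ∞} :
    ContDiffAt ℝ n (fun p : Euc N × ℝ => GK N p.1 p.2) p := by
  unfold GK
  refine ContDiffAt.mul ?_ ?_
  · refine ContDiffAt.rpow_const_of_ne (by fun_prop) (by positivity)
  · refine ContDiffAt.exp (ContDiffAt.div ?_ (by fun_prop) (by positivity))
    exact (contDiffAt_fst.norm_sq ℝ).neg

lemma GK_cd {t : ℝ} (ht : 0 < t) {n : WithTop ℕ∞} : ContDiff ℝ n (fun x => GK N x t) := by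
  refine contDiff_iff_contDiffAt.2 fun x => ?_
  exact (GK_cdAt (x, t) ht).comp x (f := fun x : Euc N => (x, t)) (by fun_prop)

lemma GK_integrable {t : ℝ} (ht : 0 < t) : Integrable (fun x : Euc N => GK N x t) := by
  unfold GK
  refine Integrable.const_mul ?_ _
  have h := GaussianFourier.integrable_cexp_neg_mul_sq_norm_add (V := Euc N) (b := (1 / (4 * t) : ℝ)) (by
    simp; positivity) 0 0
  have := h.norm
  refine this.congr (Eventually.of_forall fun x => ?_)
  simp only [Complex.norm_exp]
  congr 1
  simp [← Complex.ofReal_pow]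
  norm_cast
  field_simp

lemma GK_int {t : ℝ} (ht : 0 < t) : ∫ x : Euc N, GK N x t = 1 := by
  unfold GK
  rw [integral_const_mul]
  have h := GaussianFourier.integral_rexp_neg_mul_sq_norm (V := Euc N) (b := 1 / (4 * t)) (by positivity)
  have e : ∀ x : Euc N, rexp (-‖x‖ ^ 2 / (4 * t)) = rexp (-(1 / (4 * t)) * ‖x‖ ^ 2) := by
    intro x; congr 1; ring
  simp_rw [e]
  rw [h, finrank_euclideanSpace_fin]
  have : π / (1 / (4 * t)) = 4 * π * t := by field_simp
  rw [this, ← Real.rpow_add (by positivity)]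
  ring_nf; simp

def c2 (N : ℕ) : ℝ := 2 ^ ((N : ℝ) / 2)
lemma c2_pos : 0 < c2 N := by unfold c2; positivity

lemma c2_eq {t : ℝ} (ht : 0 < t) (x : Euc N) :
    c2 N * GK N x (2 * t) = (4 * π * t) ^ (-(N : ℝ) / 2) * Real.exp (-‖x‖ ^ 2 / (8 * t)) := by
  unfold c2 GK
  have : (4 * π * (2 * t)) = 2 * (4 * π * t) := by ring
  rw [this, Real.mul_rpow (by positivity) (by positivity), ← mul_assoc, ← mul_assoc,
    ← Real.rpow_add (by positivity)]
  ring_nf; simp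

lemma GK_le2 {t : ℝ} (ht : 0 < t) (x : Euc N) : GK N x t ≤ c2 N * GK N x (2 * t) := by
  rw [c2_eq ht]; unfold GK
  gcongr ?_ * rexp ?_
  rw [neg_div, neg_div]
  refine neg_le_neg ?_
  gcongr; norm_num

lemma nsq_GK_le {t : ℝ} (ht : 0 < t) (x : Euc N) :
    ‖x‖ ^ 2 * GK N x t ≤ 8 * t * (c2 N * GK N x (2 * t)) := by
  rw [c2_eq ht]; unfold GK
  have h1 : ‖x‖ ^ 2 / (8 * t) ≤ exp (‖x‖ ^ 2 / (8 * t)) := by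
    linarith [Real.add_one_le_exp (‖x‖ ^ 2 / (8 * t))]
  have h2 : ‖x‖ ^ 2 ≤ 8 * t * exp (‖x‖ ^ 2 / (8 * t)) := by
    rw [div_le_iff₀ (by positivity)] at h1; linarith
  have h3 : exp (-‖x‖ ^ 2 / (8 * t)) = exp (‖x‖ ^ 2 / (8 * t)) * exp (-‖x‖ ^ 2 / (4 * t)) := by
    rw [← Real.exp_add]; congr 1; field_simp; ring
  rw [h3]
  have : 0 ≤ (4 * π * t) ^ (-(N : ℝ) / 2) * exp (-‖x‖ ^ 2 / (4 * t)) := by positivity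
  nlinarith [mul_le_mul_of_nonneg_right h2 this]

lemma nsq_GK_integrable {t : ℝ} (ht : 0 < t) : Integrable (fun x : Euc N => ‖x‖ ^ 2 * GK N x t) := by
  refine (((GK_integrable (N := N) (t := 2 * t) (by positivity)).const_mul (c2 N)).const_mul (8 * t)).mono' ?_ ?_
  · exact ((continuous_norm.pow 2).mul (GK_cd (n := 0) ht).continuous).aestronglyMeasurable
  · refine Eventually.of_forall fun x => ?_
    rw [Real.norm_of_nonneg (mul_nonneg (by positivity) (GK_pos x ht).le)]
    exact nsq_GK_le ht x

lemma nsq_GK_int {t : ℝ} (ht : 0 < t) : ∫ x : Euc N, ‖x‖ ^ 2 * GK N x t ≤ 8 * t * c2 N := by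
  have := integral_mono (nsq_GK_integrable (N := N) ht) (((GK_integrable (N := N) (t := 2 * t) (by positivity)).const_mul (c2 N)).const_mul (8 * t)) (fun x => nsq_GK_le ht x)
  refine this.trans ?_
  rw [integral_const_mul, integral_const_mul, GK_int (by positivity), mul_one]

lemma GK_hasDeriv {t : ℝ} (ht : 0 < t) (x : Euc N) :
    HasDerivAt (fun t => GK N x t) (GK N x t * (‖x‖ ^ 2 / (4 * t ^ 2) - N / (2 * t))) t := by
  unfold GK
  have h1 := ((hasDerivAt_id' t).const_mul (4 * π)).rpow_const (p := -(N : ℝ) / 2) (Or.inl (by positivity))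
  have h2 := ((hasDerivAt_const t (-‖x‖ ^ 2)).fun_div ((hasDerivAt_id' t).const_mul 4) (by positivity)).exp
  refine (h1.fun_mul h2).congr_deriv ?_
  rw [Real.rpow_sub_one (by positivity)]
  field_simp
  ring

lemma GK_lapl {t : ℝ} (ht : 0 < t) (y x : Euc N) :
    lapl (fun z => GK N (z - y) t) x = GK N (x - y) t * (‖x - y‖ ^ 2 / (4 * t ^ 2) - N / (2 * t)) := by
  unfold GK
  have hd : ∀ s, HasDerivAt (fun s : ℝ => exp (-s / (4 * t))) (exp (-s / (4 * t)) * (-1 / (4 * t))) s := by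
    intro s
    exact ((hasDerivAt_id' s).fun_neg.div_const (4 * t)).exp
  have h := lapl_radial y x (f := fun s => (4 * π * t) ^ (-(N : ℝ) / 2) * exp (-s / (4 * t)))
    (f' := fun s => (4 * π * t) ^ (-(N : ℝ) / 2) * (exp (-s / (4 * t)) * (-1 / (4 * t))))
    (Eventually.of_forall fun s => (hd s).const_mul _) (((hd _).mul_const _).const_mul _)
  rw [h]
  field_simp
  ring

lemma GK_fd {t : ℝ} (ht : 0 < t) (x v : Euc N) :
    fderiv ℝ (fun z => GK N z t) x v = - GK N x t * inner ℝ x v / (2 * t) := by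
  have h1 : DifferentiableAt ℝ (fun z : Euc N => ‖z - 0‖ ^ 2) x := (cd_nsq 0 x (n := 1)).differentiableAt (by norm_num)
  have hd : ∀ s, HasDerivAt (fun s : ℝ => (4 * π * t) ^ (-(N : ℝ) / 2) * exp (-s / (4 * t))) ((4 * π * t) ^ (-(N : ℝ) / 2) * (exp (-s / (4 * t)) * (-1 / (4 * t)))) s := by
    intro s
    exact (((hasDerivAt_id' s).fun_neg.div_const (4 * t)).exp).const_mul _
  have h2 := ((hd _).comp_hasFDerivAt x h1.hasFDerivAt).fderiv
  have h3 : (fun z => GK N z t) = (fun s : ℝ => (4 * π * t) ^ (-(N : ℝ) / 2) * exp (-s / (4 * t))) ∘ (fun z : Euc N => ‖z - 0‖ ^ 2) := by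
    funext z; simp [GK]
  rw [h3, h2]
  rw [ContinuousLinearMap.smul_apply, fderiv_nsq]
  unfold GK
  simp
  field_simp
  ring

end heat

section hp
variable {N : ℕ} {η : Euc N → ℝ}

lemma hp_cdOn {n : ℕ∞} (hη : ContDiff ℝ n η) (hc : HasCompactSupport η) :
    ContDiffOn ℝ n (fun p : Euc N × ℝ => heatPot N η p.1 p.2) (univ ×ˢ Ioi 0) := by
  refine contDiff_param (P := Euc N × ℝ) (F := fun p y => GK N (p.1 - y) p.2 * η y)
    (isOpen_univ.prod isOpen_Ioi) hc ?_ ?_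
  · rintro ⟨⟨x, t⟩, y⟩ hp
    have ht : 0 < t := hp.1.2
    refine ContDiffAt.contDiffWithinAt ?_
    refine ContDiffAt.mul ?_ ?_
    · exact (GK_cdAt (x - y, t) ht).comp ((x, t), y) (f := fun p : (Euc N × ℝ) × Euc N => (p.1.1 - p.2, p.1.2)) (by fun_prop)
    · exact hη.contDiffAt.comp _ contDiffAt_snd
  · intro p _ y hy
    simp [image_eq_zero_of_notMem_tsupport hy]

lemma hp_cdAt {n : ℕ∞} (hη : ContDiff ℝ n η) (hc : HasCompactSupport η) (x : Euc N) {t : ℝ} (ht : 0 < t) :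
    ContDiffAt ℝ n (fun p : Euc N × ℝ => heatPot N η p.1 p.2) (x, t) :=
  (hp_cdOn hη hc).contDiffAt ((isOpen_univ.prod isOpen_Ioi).mem_nhds ⟨mem_univ _, ht⟩)

lemma hp_cd {n : ℕ∞} (hη : ContDiff ℝ n η) (hc : HasCompactSupport η) {t : ℝ} (ht : 0 < t) :
    ContDiff ℝ n (fun x => heatPot N η x t) := by
  refine contDiff_iff_contDiffAt.2 fun x => ?_
  exact (hp_cdAt hη hc x ht).comp x (f := fun x : Euc N => (x, t)) (by fun_prop)

lemma hp_integrand (hη : Continuous η) (hc : HasCompactSupport η) (x : Euc N) {t : ℝ} (ht : 0 < t) :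
    Integrable (fun y => GK N (x - y) t * η y) := by
  refine Continuous.integrable_of_hasCompactSupport ?_ hc.mul_left
  exact ((GK_cd (n := 0) ht).continuous.comp (continuous_const.sub continuous_id)).mul hη

lemma hp_fdA (hη : ContDiff ℝ 1 η) (hc : HasCompactSupport η) (x v : Euc N) {t : ℝ} (ht : 0 < t) :
    fderiv ℝ (fun x => heatPot N η x t) x v = ∫ y, fderiv ℝ (fun z => GK N z t) (x - y) v * η y := by
  have h1 := deriv_param (N := N) (F := fun s y => GK N (x + s • v - y) t * η y) isOpen_univ hc (s := 0) ?_ ?_ (mem_univ _)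
  · have h2 : DifferentiableAt ℝ (fun x => heatPot N η x t) (x + (0:ℝ) • v) :=
      (hp_cd (n := 1) (by exact_mod_cast hη) hc ht).differentiable (by norm_num) _
    have hl : HasDerivAt (fun s : ℝ => x + s • v) v 0 := by
      simpa using ((hasDerivAt_id (0:ℝ)).smul_const v).const_add x
    have h3 := h2.hasFDerivAt.comp_hasDerivAt 0 hl
    have h4 := h3.unique h1
    rw [zero_smul, add_zero] at h4
    rw [h4]
    refine integral_congr_ae (Eventually.of_forall fun y => ?_)
    have hl2 : HasDerivAt (fun s : ℝ => x + s • v - y) v 0 := hl.sub_const y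
    have h5 : DifferentiableAt ℝ (fun z => GK N z t) (x + (0:ℝ) • v - y) :=
      (GK_cd (n := 1) ht).differentiable (by norm_num) _
    have h6 := (h5.hasFDerivAt.comp_hasDerivAt 0 hl2).mul_const (η y)
    rw [zero_smul, add_zero] at h6
    exact h6.deriv
  · refine ContDiff.contDiffOn (ContDiff.mul ?_ (hη.comp contDiff_snd))
    exact (GK_cd (n := 1) ht).comp (f := fun p : ℝ × Euc N => x + p.1 • v - p.2) (by fun_prop)
  · intro p _ y hy
    simp [image_eq_zero_of_notMem_tsupport hy]

lemma hp_fd (hη : ContDiff ℝ 1 η) (hc : HasCompactSupport η) (x v : Euc N) {t : ℝ} (ht : 0 < t) :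
    fderiv ℝ (fun x => heatPot N η x t) x v = heatPot N (fun y => fderiv ℝ η y v) x t := by
  rw [hp_fdA hη hc x v ht, hp_eq]
  have h := ibp1 (f := fun y => GK N (x - y) t) (g := η)
    ((GK_cd (n := 1) ht).comp (contDiff_const.sub contDiff_id)) hη (Or.inr hc) v
  have h2 : ∀ y, fderiv ℝ (fun y => GK N (x - y) t) y v = - fderiv ℝ (fun z => GK N z t) (x - y) v := by
    intro y
    have h5 : DifferentiableAt ℝ (fun z => GK N z t) (x - y) :=
      (GK_cd (n := 1) ht).differentiable (by norm_num) _
    have h6 : HasFDerivAt (fun y : Euc N => x - y) (-ContinuousLinearMap.id ℝ (Euc N)) y :=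
      (hasFDerivAt_id y).const_sub x
    have := (h5.hasFDerivAt.comp y h6).fderiv
    have e : (fun y => GK N (x - y) t) = (fun z => GK N z t) ∘ (fun y => x - y) := rfl
    rw [e, this]; simp
  simp_rw [h2, neg_mul] at h
  rw [integral_neg] at h
  linarith

lemma hp_dtA (hη : ContDiff ℝ 1 η) (hc : HasCompactSupport η) (x : Euc N) {t : ℝ} (ht : 0 < t) :
    HasDerivAt (fun t => heatPot N η x t)
      (∫ y, GK N (x - y) t * (‖x - y‖ ^ 2 / (4 * t ^ 2) - N / (2 * t)) * η y) t := by
  have h1 := deriv_param (N := N) (F := fun s y => GK N (x - y) s * η y) isOpen_Ioi hc (s := t) ?_ ?_ ht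
  · refine h1.congr_deriv (integral_congr_ae (Eventually.of_forall fun y => ?_))
    exact ((GK_hasDeriv ht (x - y)).mul_const _).deriv
  · rintro ⟨s, y⟩ hp
    refine ContDiffAt.contDiffWithinAt (ContDiffAt.mul ?_ (hη.contDiffAt.comp _ contDiffAt_snd))
    exact (GK_cdAt (x - y, s) hp.1).comp (s, y) (f := fun p : ℝ × Euc N => (x - p.2, p.1)) (by fun_prop)
  · intro p _ y hy
    simp [image_eq_zero_of_notMem_tsupport hy]

lemma GK_sub_comm (x y : Euc N) (t : ℝ) : GK N (x - y) t = GK N (y - x) t := by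
  rw [← GK_neg, neg_sub]

lemma hp_dt (hη : ContDiff ℝ 2 η) (hc : HasCompactSupport η) (x : Euc N) {t : ℝ} (ht : 0 < t) :
    HasDerivAt (fun t => heatPot N η x t) (heatPot N (lapl η) x t) t := by
  refine (hp_dtA (hη.of_le (by norm_num)) hc x ht).congr_deriv ?_
  rw [hp_eq]
  have h := ibp2 (f := fun y => GK N (y - x) t) (g := η)
    ((GK_cd (n := 2) ht).comp (contDiff_id.sub contDiff_const)) hη hc
  simp_rw [GK_lapl ht] at h
  have e : ∀ y : Euc N, GK N (x - y) t = GK N (y - x) t := fun y => GK_sub_comm x y t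
  have e2 : ∀ y : Euc N, ‖x - y‖ = ‖y - x‖ := fun y => norm_sub_rev x y
  simp_rw [e, e2]
  exact h

lemma hp_lapl (hη : ContDiff ℝ 2 η) (hc : HasCompactSupport η) (x : Euc N) {t : ℝ} (ht : 0 < t) :
    lapl (fun x => heatPot N η x t) x = heatPot N (lapl η) x t := by
  have h1 : ∀ v : Euc N, (fun y => fderiv ℝ (fun x => heatPot N η x t) y v) =
      fun y => heatPot N (fun y => fderiv ℝ η y v) y t := by
    intro v; funext y; exact hp_fd (hη.of_le (by norm_num)) hc y v ht
  unfold lapl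
  simp_rw [h1]
  have h2 : ∀ v : Euc N, fderiv ℝ (fun y => heatPot N (fun y => fderiv ℝ η y v) y t) x v = 
      heatPot N (fun y => fderiv ℝ (fun y => fderiv ℝ η y v) y v) x t := by
    intro v; exact hp_fd (cont_fd hη v) (hcs_fd hc v) x v ht
  simp_rw [h2, hp_eq, Finset.mul_sum]
  rw [integral_finsetSum]
  intro i _
  refine hp_integrand ?_ (hcs_fd (hcs_fd hc _) _) x ht
  exact ((cont_fd hη _).continuous_fderiv (by norm_num)).clm_apply continuous_const

lemma hp_nonneg (h0 : ∀ y, 0 ≤ η y) (x : Euc N) {t : ℝ} (ht : 0 < t) : 0 ≤ heatPot N η x t := by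
  rw [hp_eq]
  exact integral_nonneg fun y => mul_nonneg (GK_pos _ ht).le (h0 y)

lemma GK_sub_integrable (x : Euc N) {t : ℝ} (ht : 0 < t) : Integrable fun y => GK N (x - y) t := 
  (GK_integrable (N := N) ht).comp_sub_left x

lemma GK_sub_int (x : Euc N) {t : ℝ} (ht : 0 < t) : ∫ y, GK N (x - y) t = 1 := by
  rw [integral_sub_left_eq_self (fun y => GK N y t), GK_int ht]

lemma hp_le {M : ℝ} (hη : Continuous η) (hc : HasCompactSupport η) (h1 : ∀ y, η y ≤ M) (x : Euc N)
    {t : ℝ} (ht : 0 < t) : heatPot N η x t ≤ M := by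
  rw [hp_eq]
  calc _ ≤ ∫ y, GK N (x - y) t * M := integral_mono (hp_integrand hη hc x ht)
          ((GK_sub_integrable x ht).mul_const M)
          (fun y => mul_le_mul_of_nonneg_left (h1 y) (GK_pos _ ht).le)
    _ = M := by rw [integral_mul_const, GK_sub_int x ht, one_mul]

lemma hp_abs_le {f g : Euc N → ℝ} (hg : Continuous g) (hc : HasCompactSupport g) 
    (h : ∀ y, |f y| ≤ g y) (x : Euc N) {t : ℝ} (ht : 0 < t) : |heatPot N f x t| ≤ heatPot N g x t := by
  rw [hp_eq, hp_eq]
  rw [← Real.norm_eq_abs]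
  refine (norm_integral_le_of_norm_le (hp_integrand hg hc x ht) (Eventually.of_forall fun y => ?_))
  rw [norm_mul, Real.norm_of_nonneg (GK_pos _ ht).le]
  exact mul_le_mul_of_nonneg_left (h y) (GK_pos _ ht).le

lemma hp_int (hη : Continuous η) (hc : HasCompactSupport η) {t : ℝ} (ht : 0 < t) :
    Integrable (fun x => heatPot N η x t) ∧ ∫ x, heatPot N η x t = ∫ x, η x := by
  have hi : Integrable η := hη.integrable_of_hasCompactSupport hc
  have e : (fun x => heatPot N η x t) = convolution η (fun x => GK N x t) (ContinuousLinearMap.lsmul ℝ ℝ) volume := by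
    funext x
    simp only [convolution, hp_eq, ContinuousLinearMap.lsmul_apply, smul_eq_mul]
    exact integral_congr_ae (Eventually.of_forall fun y => mul_comm _ _)
  rw [e]
  refine ⟨hi.integrable_convolution _ (GK_integrable ht), ?_⟩
  rw [integral_convolution _ hi (GK_integrable ht), GK_int ht]
  simp

/-- large time bounds -/
lemma hp_fd_bd (hη : ContDiff ℝ 1 η) (hc : HasCompactSupport η) (h0 : ∀ y, 0 ≤ η y) (x : Euc N) {t : ℝ} (ht : 0 < t) :
    ‖fderiv ℝ (fun x => heatPot N η x t) x‖ ≤ 9 * c2 N * (√t)⁻¹ * heatPot N η x (2 * t) := by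
  have hp := hp_nonneg h0 x (t := 2 * t) (by positivity)
  have hc2 := c2_pos (N := N)
  refine ContinuousLinearMap.opNorm_le_bound _ (by positivity) fun v => ?_
  rw [hp_fdA hη hc x v ht, hp_eq]
  calc _ ≤ ∫ y, (9 * c2 N * (√t)⁻¹ * ‖v‖) * (GK N (x - y) (2 * t) * η y) := by
        refine (norm_integral_le_of_norm_le ((hp_integrand hη.continuous hc x (by positivity)).const_mul _) (Eventually.of_forall fun y => ?_))
        rw [norm_mul, Real.norm_of_nonneg (h0 y), ← mul_assoc]
        refine mul_le_mul_of_nonneg_right ?_ (h0 y)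
        rw [GK_fd ht]
        set z := x - y
        have a1 := GK_le2 ht z
        have a2 := nsq_GK_le ht z
        have a3 := GK_pos z ht
        have a4 : |inner ℝ z v| ≤ ‖z‖ * ‖v‖ := abs_real_inner_le_norm z v
        rw [norm_div, norm_mul, norm_neg, Real.norm_of_nonneg a3.le, Real.norm_of_nonneg (by positivity : 0 ≤ 2 * t), Real.norm_eq_abs]
        rw [div_le_iff₀ (by positivity)]
        have hs : 0 < √t := Real.sqrt_pos.2 ht
        have hst : √t * √t = t := Real.mul_self_sqrt ht.le
        have a5 : √t * (‖z‖ * GK N z t) ≤ 9 * c2 N * GK N z (2 * t) * t := by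
          have : √t * ‖z‖ ≤ t + ‖z‖ ^ 2 := by nlinarith [sq_nonneg (√t - ‖z‖), norm_nonneg z]
          nlinarith
        have a6 : ‖z‖ * GK N z t ≤ (√t)⁻¹ * (9 * c2 N * GK N z (2 * t) * t) := by
          rw [inv_mul_eq_div, le_div_iff₀ hs]; linarith
        have a7 : 0 ≤ (√t)⁻¹ * (9 * c2 N * GK N z (2 * t) * t) * ‖v‖ := by
          have := GK_pos z (t := 2 * t) (by positivity)
          positivity
        calc GK N z t * |inner ℝ z v| ≤ GK N z t * (‖z‖ * ‖v‖) := by gcongr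
          _ = (‖z‖ * GK N z t) * ‖v‖ := by ring
          _ ≤ ((√t)⁻¹ * (9 * c2 N * GK N z (2 * t) * t)) * ‖v‖ := by gcongr
          _ ≤ _ := by nlinarith
    _ = _ := by rw [integral_const_mul]; ring

lemma hp_dt_bd (hη : ContDiff ℝ 1 η) (hc : HasCompactSupport η) (h0 : ∀ y, 0 ≤ η y) (x : Euc N) {t : ℝ} (ht : 0 < t) :
    |deriv (fun t => heatPot N η x t) t| ≤ (2 + N) * c2 N * t⁻¹ * heatPot N η x (2 * t) := by
  rw [(hp_dtA hη hc x ht).deriv, hp_eq, ← integral_const_mul, ← Real.norm_eq_abs]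
  refine (norm_integral_le_of_norm_le ((hp_integrand hη.continuous hc x (by positivity)).const_mul _) (Eventually.of_forall fun y => ?_))
  rw [norm_mul, Real.norm_of_nonneg (h0 y), ← mul_assoc]
  refine mul_le_mul_of_nonneg_right ?_ (h0 y)
  set z := x - y
  have a1 := GK_le2 ht z
  have a2 := nsq_GK_le ht z
  have a3 := GK_pos z ht
  have hN : (0:ℝ) ≤ N := Nat.cast_nonneg N
  rw [norm_mul, Real.norm_of_nonneg a3.le, Real.norm_eq_abs]
  have : |‖z‖ ^ 2 / (4 * t ^ 2) - N / (2 * t)| ≤ ‖z‖ ^ 2 / (4 * t ^ 2) + N / (2 * t) := by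
    have p1 : 0 ≤ ‖z‖ ^ 2 / (4 * t ^ 2) := by positivity
    have p2 : 0 ≤ (N:ℝ) / (2 * t) := by positivity
    rw [abs_le]; constructor <;> linarith
  calc _ ≤ GK N z t * (‖z‖ ^ 2 / (4 * t ^ 2) + N / (2 * t)) := by gcongr
    _ = (‖z‖ ^ 2 * GK N z t) / (4 * t ^ 2) + GK N z t * (N / (2 * t)) := by ring
    _ ≤ (8 * t * (c2 N * GK N z (2 * t))) / (4 * t ^ 2) + (c2 N * GK N z (2 * t)) * (N / t) := by
        gcongr <;> linarith
    _ = _ := by field_simp; ring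

end hp

section Rn
variable {N : ℕ} {η : Euc N → ℝ}

def RR (N : ℕ) (η : Euc N → ℝ) (x : Euc N) (t : ℝ) : ℝ :=
  ‖fderiv ℝ (fun y => heatPot N η y t) x‖ ^ 2 + |deriv (fun τ => heatPot N η x τ) t|

lemma RR_nonneg (x : Euc N) (t : ℝ) : 0 ≤ RR N η x t := by unfold RR; positivity

lemma Rnorm_eq (q : ℝ) : Rnorm N q η = ∫ t in Ioi (0:ℝ), ∫ x, RR N η x t ^ (q / (q - 1)) := rfl

lemma rpow_le_lin {X Y p : ℝ} (h0 : 0 ≤ X) (h1 : X ≤ Y) (hp : 1 ≤ p) : X ^ p ≤ Y ^ (p - 1) * X := by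
  rcases h0.eq_or_lt with h | h
  · rw [← h, Real.zero_rpow (by linarith)]; simp
  · have : X ^ p = X ^ (p - 1) * X := by
      rw [← Real.rpow_add_one h.ne']; ring_nf
    rw [this]
    gcongr

lemma hp_const_mul (c : ℝ) (f : Euc N → ℝ) (x : Euc N) (t : ℝ) :
    heatPot N (fun y => c * f y) x t = c * heatPot N f x t := by
  rw [hp_eq, hp_eq, ← integral_const_mul]
  congr 1; funext y; ring

lemma RR_cont (hη : ContDiff ℝ 2 η) (hc : HasCompactSupport η) :
    ContinuousOn (fun p : ℝ × Euc N => RR N η p.2 p.1) (Ioi 0 ×ˢ univ) := by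
  set H : Euc N × ℝ → ℝ := fun p => heatPot N η p.1 p.2 with hH
  have ho : IsOpen ((univ : Set (Euc N)) ×ˢ Ioi (0:ℝ)) := isOpen_univ.prod isOpen_Ioi
  have hcd : ContDiffOn ℝ 2 H (univ ×ˢ Ioi 0) := hp_cdOn (n := 2) hη hc
  have h1 : ContinuousOn (fderiv ℝ H) (univ ×ˢ Ioi 0) := hcd.continuousOn_fderiv_of_isOpen ho (by norm_num)
  have h2 : ContinuousOn (fun p : ℝ × Euc N => fderiv ℝ H (p.2, p.1)) (Ioi 0 ×ˢ univ) :=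
    h1.comp (by fun_prop) (fun p hp => ⟨mem_univ _, hp.1⟩)
  have h3 : ContinuousOn (fun p : ℝ × Euc N => ‖(fderiv ℝ H (p.2, p.1)).comp (ContinuousLinearMap.inl ℝ (Euc N) ℝ)‖ ^ 2 + |fderiv ℝ H (p.2, p.1) (0, 1)|) (Ioi 0 ×ˢ univ) := by
    refine ContinuousOn.add ?_ ?_
    · exact ((h2.clm_comp continuousOn_const).norm).pow 2
    · exact (h2.clm_apply continuousOn_const).abs
  refine h3.congr ?_
  rintro ⟨t, x⟩ hp
  have ht : 0 < t := hp.1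
  have hd : DifferentiableAt ℝ H (x, t) := (hp_cdAt (n := 2) hη hc x ht).differentiableAt (by norm_num)
  have e1 : HasFDerivAt (fun y => heatPot N η y t) ((fderiv ℝ H (x, t)).comp (ContinuousLinearMap.inl ℝ (Euc N) ℝ)) x :=
    HasFDerivAt.comp (g := H) (f := fun y : Euc N => (y, t)) x hd.hasFDerivAt (hasFDerivAt_prodMk_left x t)
  have e2 : HasDerivAt (fun τ => heatPot N η x τ) (fderiv ℝ H (x, t) (0, 1)) t := by
    have : HasDerivAt (fun s : ℝ => (x, s)) ((0 : Euc N), (1:ℝ)) t :=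
      (hasDerivAt_const t x).prodMk (hasDerivAt_id' t)
    exact hd.hasFDerivAt.comp_hasDerivAt t this
  simp only [RR]
  rw [e1.fderiv, e2.deriv]

lemma RR_bd1 (hη : ContDiff ℝ 2 η) (hc : HasCompactSupport η) {p : ℝ} (hp : 1 ≤ p) :
    ∃ f : Euc N → ℝ, Continuous f ∧ HasCompactSupport f ∧ ∀ x t, 0 < t → RR N η x t ^ p ≤ heatPot N f x t := by
  set g : Euc N → ℝ := fun y => ‖fderiv ℝ η y‖ + |lapl η y| with hg
  have g1 : Continuous g := (hη.continuous_fderiv (by norm_num)).norm.add (cont_lapl hη).abs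
  have g2 : HasCompactSupport g := (hc.fderiv (𝕜 := ℝ)).norm.add (hcs_lapl hc).norm
  have g0 : ∀ y, 0 ≤ g y := fun y => by positivity
  obtain ⟨M, hM⟩ := g1.bounded_above_of_compact_support g2
  have hM' : ∀ y, g y ≤ M := fun y => (le_abs_self _).trans (hM y)
  have hM0 : 0 ≤ M := (norm_nonneg _).trans (hM 0)
  refine ⟨fun y => (((M + 1) * M) ^ (p - 1) * (M + 1)) * g y, by fun_prop, g2.mul_left, ?_⟩
  intro x t ht
  have hh0 := hp_nonneg g0 x ht
  have hhM := hp_le g1 g2 hM' x ht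
  set h := heatPot N g x t with hh
  have b1 : ‖fderiv ℝ (fun y => heatPot N η y t) x‖ ≤ h := by
    refine ContinuousLinearMap.opNorm_le_bound _ hh0 fun v => ?_
    rw [hp_fd (hη.of_le (by norm_num)) hc x v ht, mul_comm, hh, ← hp_const_mul]
    refine hp_abs_le (by fun_prop) g2.mul_left (fun y => ?_) x ht
    have := (fderiv ℝ η y).le_opNorm v
    rw [Real.norm_eq_abs] at this
    refine this.trans ?_
    rw [mul_comm]
    have : ‖fderiv ℝ η y‖ ≤ g y := by simp only [hg]; linarith [abs_nonneg (lapl η y)]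
    exact mul_le_mul_of_nonneg_left this (norm_nonneg v)
  have b2 : |deriv (fun τ => heatPot N η x τ) t| ≤ h := by
    rw [(hp_dt hη hc x ht).deriv]
    refine hp_abs_le g1 g2 (fun y => ?_) x ht
    simp only [hg]; linarith [norm_nonneg (fderiv ℝ η y)]
  have b3 : RR N η x t ≤ (M + 1) * h := by
    unfold RR
    have : ‖fderiv ℝ (fun y => heatPot N η y t) x‖ ^ 2 ≤ h ^ 2 := by gcongr
    nlinarith
  have b4 : RR N η x t ≤ (M + 1) * M := b3.trans (by gcongr)
  rw [hp_const_mul, ← hh]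
  calc _ ≤ ((M + 1) * M) ^ (p - 1) * RR N η x t := rpow_le_lin (RR_nonneg x t) b4 hp
    _ ≤ ((M + 1) * M) ^ (p - 1) * ((M + 1) * h) := by gcongr
    _ = _ := by ring

lemma RR_bd2 (hη : ContDiff ℝ 1 η) (hc : HasCompactSupport η) (h01 : ∀ y, 0 ≤ η y ∧ η y ≤ 1) {p : ℝ} (hp : 1 ≤ p) :
    ∃ D : ℝ, 0 ≤ D ∧ ∀ x t, 0 < t → RR N η x t ^ p ≤ D * t ^ (-p) * heatPot N η x (2 * t) := by
  have hc2 := c2_pos (N := N)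
  set D := 81 * c2 N ^ 2 + (2 + N) * c2 N with hD
  refine ⟨D ^ p, by positivity, ?_⟩
  intro x t ht
  have a1 := hp_fd_bd hη hc (fun y => (h01 y).1) x ht
  have a2 := hp_dt_bd hη hc (fun y => (h01 y).1) x ht
  have a3 := hp_nonneg (fun y => (h01 y).1) x (t := 2 * t) (by positivity)
  have a4 := hp_le hη.continuous hc (fun y => (h01 y).2) x (t := 2 * t) (by positivity)
  set h := heatPot N η x (2 * t)
  have b : RR N η x t ≤ D * (t⁻¹ * h) := by
    unfold RR
    have : ‖fderiv ℝ (fun y => heatPot N η y t) x‖ ^ 2 ≤ (9 * c2 N * (√t)⁻¹ * h) ^ 2 := by gcongr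
    have e : (9 * c2 N * (√t)⁻¹ * h) ^ 2 = 81 * c2 N ^ 2 * t⁻¹ * h ^ 2 := by
      rw [mul_pow, mul_pow, inv_pow, Real.sq_sqrt ht.le]; ring
    have e2 : 81 * c2 N ^ 2 * t⁻¹ * h ^ 2 ≤ 81 * c2 N ^ 2 * t⁻¹ * h := by
      gcongr; nlinarith
    rw [hD]; nlinarith
  calc _ ≤ (D * (t⁻¹ * h)) ^ p := Real.rpow_le_rpow (RR_nonneg x t) b (by linarith)
    _ = D ^ p * (t ^ (-p) * h ^ p) := by
        rw [Real.mul_rpow (by positivity) (by positivity), Real.mul_rpow (by positivity) a3, Real.inv_rpow ht.le, Real.rpow_neg ht.le]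
    _ ≤ D ^ p * (t ^ (-p) * h) := by
        have := rpow_le_lin a3 a4 hp
        rw [Real.one_rpow, one_mul] at this
        gcongr
    _ = _ := by ring

lemma RR_x (hη : ContDiff ℝ 2 η) (hc : HasCompactSupport η) {p : ℝ} (hp : 1 ≤ p) {t : ℝ} (ht : 0 < t) :
    Integrable (fun x => RR N η x t ^ p) := by
  obtain ⟨f, f1, f2, f3⟩ := RR_bd1 hη hc hp
  refine (hp_int f1 f2 ht).1.mono' ?_ (Eventually.of_forall fun x => ?_)
  · have h : Continuous (fun x => RR N η x t) := by
      rw [← continuousOn_univ]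
      exact (RR_cont hη hc).comp (f := fun x : Euc N => (t, x)) (by fun_prop) (fun x _ => ⟨ht, mem_univ _⟩)
    exact (h.rpow_const fun x => Or.inr (by linarith)).aestronglyMeasurable
  · rw [Real.norm_of_nonneg (Real.rpow_nonneg (RR_nonneg x t) _)]
    exact f3 x t ht

lemma RR_t (hη : ContDiff ℝ 2 η) (hc : HasCompactSupport η) (h01 : ∀ y, 0 ≤ η y ∧ η y ≤ 1) {p : ℝ} (hp : 1 < p) :
    IntegrableOn (fun t => ∫ x, RR N η x t ^ p) (Ioi 0) := by
  have hm : AEStronglyMeasurable (fun t => ∫ x, RR N η x t ^ p) (volume.restrict (Ioi 0)) := by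
    have h1 : ContinuousOn (fun z : ℝ × Euc N => RR N η z.2 z.1 ^ p) (Ioi 0 ×ˢ univ) :=
      (RR_cont hη hc).rpow_const fun x _ => Or.inr (by linarith)
    have h2 : AEStronglyMeasurable (fun z : ℝ × Euc N => RR N η z.2 z.1 ^ p) ((volume.restrict (Ioi (0:ℝ))).prod (volume : Measure (Euc N))) := by
      have : (volume.restrict (Ioi (0:ℝ))).prod (volume : Measure (Euc N)) = (volume.prod volume).restrict (Ioi (0:ℝ) ×ˢ univ) := by
        rw [← Measure.prod_restrict, Measure.restrict_univ]
      rw [this]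
      exact h1.aestronglyMeasurable (measurableSet_Ioi.prod MeasurableSet.univ)
    exact h2.integral_prod_right'
  have hn : ∀ t, 0 ≤ ∫ x, RR N η x t ^ p := fun t => integral_nonneg fun x => Real.rpow_nonneg (RR_nonneg x t) _
  rw [← Ioc_union_Ioi_eq_Ioi (zero_le_one (α := ℝ))]
  refine IntegrableOn.union ?_ ?_
  · obtain ⟨f, f1, f2, f3⟩ := RR_bd1 hη hc hp.le
    refine (integrableOn_const (μ := volume) (s := Ioc (0:ℝ) 1) (C := ∫ x, f x) (by simp) (by simp)).mono' (hm.mono_set Ioc_subset_Ioi_self) ?_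
    refine (ae_restrict_iff' measurableSet_Ioc).2 (Eventually.of_forall fun t ht => ?_)
    rw [Real.norm_of_nonneg (hn t), ← (hp_int f1 f2 ht.1).2]
    exact integral_mono (RR_x hη hc hp.le ht.1) (hp_int f1 f2 ht.1).1 fun x => f3 x t ht.1
  · obtain ⟨D, hD, hb⟩ := RR_bd2 (hη.of_le (by norm_num)) hc h01 hp.le
    refine ((((integrableOn_Ioi_rpow_of_lt (a := -p) (by linarith) one_pos)).const_mul D).mul_const (∫ x, η x)).mono' (hm.mono_set (Ioi_subset_Ioi zero_le_one)) ?_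
    refine (ae_restrict_iff' measurableSet_Ioi).2 (Eventually.of_forall fun t ht => ?_)
    have ht0 : 0 < t := lt_trans one_pos ht
    have hi := hp_int hη.continuous hc (t := 2 * t) (by positivity)
    rw [Real.norm_of_nonneg (hn t), ← hi.2, ← integral_const_mul]
    exact integral_mono (RR_x hη hc hp.le ht0) (hi.1.const_mul _) fun x => hb x t ht0

lemma RR_le {q : ℝ} (hq : 1 < q) (hη : ContDiff ℝ 2 η) (hc : HasCompactSupport η) (h01 : ∀ y, 0 ≤ η y ∧ η y ≤ 1)
    {a b : ℝ} (ha : 0 < a) (hab : a ≤ b) :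
    IntegrableOn (fun t => ∫ x, RR N η x t ^ (q / (q - 1))) (Icc a b) ∧
    ∫ t in a..b, ∫ x, RR N η x t ^ (q / (q - 1)) ≤ Rnorm N q η := by
  have hp : 1 < q / (q - 1) := by rw [lt_div_iff₀ (by linarith)]; linarith
  have h := RR_t hη hc h01 hp
  refine ⟨h.mono_set fun t ht => ha.trans_le ht.1, ?_⟩
  rw [Rnorm_eq, intervalIntegral.integral_of_le hab]
  refine setIntegral_mono_set h ?_ ?_
  · exact Eventually.of_forall fun t => integral_nonneg fun x => Real.rpow_nonneg (RR_nonneg x t) _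
  · exact (LE.le.eventuallyLE fun t ht => ha.trans ht.1)

end Rn

section phi
variable {N : ℕ} {η : Euc N → ℝ} {K : Set (Euc N)}

lemma eta_quad (hη : ContDiff ℝ 2 η) (hc : HasCompactSupport η) (h01 : ∀ y, 0 ≤ η y ∧ η y ≤ 1)
    (hK : ∀ x ∈ K, η x = 1) : ∃ C : ℝ, 0 ≤ C ∧ ∀ k ∈ K, ∀ z, 1 - η z ≤ C * ‖z - k‖ ^ 2 := by
  obtain ⟨L, hL⟩ := (hη.fderiv_right (m := 1) (by norm_num)).lipschitzWith_of_hasCompactSupport (hc.fderiv (𝕜 := ℝ)) (by norm_num)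
  refine ⟨L, L.2, fun k hk z => ?_⟩
  have h0 : fderiv ℝ η k = 0 := by
    refine IsLocalMax.fderiv_eq_zero (Eventually.of_forall fun y => ?_)
    rw [hK k hk]; exact (h01 y).2
  have h1 : ∀ y ∈ closedBall k ‖z - k‖, ‖fderiv ℝ η y‖ ≤ L * ‖z - k‖ := by
    intro y hy
    have := hL.dist_le_mul y k
    rw [h0, dist_zero_right] at this
    refine this.trans ?_
    gcongr
    exact hy
  have := (convex_closedBall k ‖z - k‖).norm_image_sub_le_of_norm_fderiv_le (𝕜 := ℝ) (f := η) (x := k) (y := z)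
    (fun y _ => hη.differentiable (by norm_num) y) h1 (by simp) (by simp [dist_eq_norm])
  rw [hK k hk, Real.norm_eq_abs] at this
  have h2 := neg_abs_le (η z - 1)
  nlinarith

lemma one_sub_hp (hη : Continuous η) (hc : HasCompactSupport η) (x : Euc N) {t : ℝ} (ht : 0 < t) :
    1 - heatPot N η x t = ∫ y, GK N (x - y) t * (1 - η y) := by
  rw [hp_eq]
  simp_rw [mul_sub, mul_one]
  rw [integral_sub (GK_sub_integrable x ht) (hp_integrand hη hc x ht), GK_sub_int x ht]

lemma phi_bd (hη : ContDiff ℝ 2 η) (hc : HasCompactSupport η) (h01 : ∀ y, 0 ≤ η y ∧ η y ≤ 1)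
    (hK : ∀ x ∈ K, η x = 1) : ∃ C : ℝ, 0 ≤ C ∧ ∀ k ∈ K, ∀ x t, 0 < t → 
      1 - heatPot N η x t ≤ C * (‖x - k‖ ^ 2 + t) := by
  obtain ⟨C, hC, hb⟩ := eta_quad hη hc h01 hK
  have hc2 := c2_pos (N := N)
  refine ⟨2 * C * (1 + 8 * c2 N), by positivity, fun k hk x t ht => ?_⟩
  rw [one_sub_hp hη.continuous hc x ht]
  have i1 : Integrable fun y => GK N (x - y) t * (1 - η y) := by
    simp_rw [mul_sub, mul_one]
    exact (GK_sub_integrable x ht).sub (hp_integrand hη.continuous hc x ht)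
  have i2 : Integrable fun y => ‖x - y‖ ^ 2 * GK N (x - y) t := (nsq_GK_integrable (N := N) ht).comp_sub_left x
  have i3 := GK_sub_integrable x ht
  have e2 : ∫ y, ‖x - y‖ ^ 2 * GK N (x - y) t ≤ 8 * t * c2 N := by
    rw [integral_sub_left_eq_self (fun y => ‖y‖ ^ 2 * GK N y t)]; exact nsq_GK_int ht
  calc _ ≤ ∫ y, (2 * C) * (‖x - y‖ ^ 2 * GK N (x - y) t) + (2 * C * ‖x - k‖ ^ 2) * GK N (x - y) t := by
        refine integral_mono i1 ((i2.const_mul _).add (i3.const_mul _)) fun y => ?_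
        have b1 := hb k hk y
        have b2 := GK_pos (x - y) ht
        have b3 : ‖y - k‖ ≤ ‖x - y‖ + ‖x - k‖ := by
          have := norm_sub_le (x - k) (x - y)
          rw [sub_sub_sub_cancel_left] at this; linarith
        have b4 : ‖y - k‖ ^ 2 ≤ 2 * (‖x - y‖ ^ 2 + ‖x - k‖ ^ 2) := by
          nlinarith [norm_nonneg (y - k), sq_nonneg (‖x - y‖ - ‖x - k‖)]
        have b5 : 1 - η y ≤ C * (2 * (‖x - y‖ ^ 2 + ‖x - k‖ ^ 2)) := b1.trans (by gcongr)
        simp only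
        nlinarith [mul_le_mul_of_nonneg_left b5 b2.le]
    _ = (2 * C) * (∫ y, ‖x - y‖ ^ 2 * GK N (x - y) t) + 2 * C * ‖x - k‖ ^ 2 := by
        rw [integral_add (i2.const_mul _) (i3.const_mul _), integral_const_mul, integral_const_mul, GK_sub_int x ht, mul_one]
    _ ≤ (2 * C) * (8 * t * c2 N) + 2 * C * ‖x - k‖ ^ 2 := by gcongr
    _ ≤ _ := by
        have : 0 ≤ C * t := by positivity
        have : 0 ≤ C * c2 N * ‖x - k‖ ^ 2 := by positivity
        nlinarith

lemma vol_ball_le (R : ℝ) (hR : 0 < R) : (volume (ball (0 : Euc N) R)).toReal ≤ (2 * R) ^ N := by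
  have h1 : ball (0 : Euc N) R ⊆ (WithLp.ofLp : Euc N → (Fin N → ℝ)) ⁻¹' (ball 0 R) := by
    intro x hx
    simp only [mem_preimage, mem_ball, dist_zero_right] at hx ⊢
    rw [pi_norm_lt_iff hR]
    intro i
    exact (PiLp.norm_apply_le x i).trans_lt hx
  have h2 := measure_mono (μ := volume) h1
  rw [(PiLp.volume_preserving_ofLp (Fin N)).measure_preimage measurableSet_ball.nullMeasurableSet, Real.volume_pi_ball _ hR] at h2
  rw [Fintype.card_fin] at h2
  exact ENNReal.toReal_le_of_le_ofReal (by positivity) h2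

lemma phi_low (hN : 1 ≤ N) (hη : Continuous η) (h01 : ∀ y, 0 ≤ η y ∧ η y ≤ 1) {R : ℝ} (hR : 0 < R)
    (hs : tsupport η ⊆ ball 0 R) (x : Euc N) :
    heatPot N η x (R ^ 2) ≤ π ^ (-(1:ℝ) / 2) := by
  have hR2 : 0 < R ^ 2 := by positivity
  have hz : ∀ y, y ∉ ball (0 : Euc N) R → η y = 0 := fun y hy => image_eq_zero_of_notMem_tsupport fun h => hy (hs h)
  have hc : HasCompactSupport η := by
    refine HasCompactSupport.intro (isCompact_closedBall (0 : Euc N) R) fun y hy => hz y fun h => hy (ball_subset_closedBall h)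
  set A := (4 * π * R ^ 2) ^ (-(N : ℝ) / 2) with hA
  have hA0 : 0 < A := by positivity
  rw [hp_eq]
  calc _ ≤ ∫ y, (ball (0 : Euc N) R).indicator (fun _ => A) y := by
        refine integral_mono (hp_integrand hη hc x hR2) ((integrable_indicator_iff measurableSet_ball).2 (integrableOn_const measure_ball_lt_top.ne (by simp))) fun y => ?_
        by_cases hy : y ∈ ball (0 : Euc N) R
        · rw [indicator_of_mem hy]
          simp only
          have g0 := GK_pos (x - y) hR2
          have : GK N (x - y) (R ^ 2) ≤ A := by
            unfold GK
            refine mul_le_of_le_one_right hA0.le ?_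
            rw [Real.exp_le_one_iff, neg_div]
            simp only [Left.neg_nonpos_iff]; positivity
          nlinarith [(h01 y).1, (h01 y).2]
        · rw [indicator_of_notMem hy]; simp [hz y hy]
    _ = (volume (ball (0 : Euc N) R)).toReal * A := by
        rw [integral_indicator measurableSet_ball, setIntegral_const]; rfl
    _ ≤ (2 * R) ^ N * A := by gcongr; exact vol_ball_le R hR
    _ = π ^ (-(N:ℝ) / 2) := by
        have e : 4 * π * R ^ 2 = π * (2 * R) ^ (2:ℝ) := by rw [Real.rpow_two]; ring
        rw [hA, e, Real.mul_rpow (by positivity) (by positivity), ← Real.rpow_mul (by positivity), ← Real.rpow_natCast, mul_left_comm, ← Real.rpow_add (by positivity)]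
        have : (N:ℝ) + 2 * (-N / 2) = 0 := by ring
        rw [this]; simp
    _ ≤ _ := by
        refine Real.rpow_le_rpow_of_exponent_le (by linarith [Real.two_le_pi]) ?_
        have : (1:ℝ) ≤ N := by exact_mod_cast hN
        linarith

end phi

section en
variable {N : ℕ} {q : ℝ} {u : Euc N → ℝ → ℝ} {K : Set (Euc N)}

lemma integral_eq_of_sub {A B : Euc N → ℝ} (hi : Integrable (fun x => A x - B x))
    (h0 : ∫ x, (A x - B x) = 0) : ∫ x, A x = ∫ x, B x := by
  by_cases hB : Integrable B
  · have hA : Integrable A := (hi.add hB).congr (Eventually.of_forall fun x => by simp)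
    rw [integral_sub hA hB] at h0; linarith
  · have hA : ¬ Integrable A := fun hA => hB ((hA.sub hi).congr (Eventually.of_forall fun x => by simp))
    rw [integral_undef hA, integral_undef hB]

lemma integral_le_of_le {A B : Euc N → ℝ} (hB : Integrable B) (hB0 : ∀ x, 0 ≤ B x) (h : ∀ x, A x ≤ B x) :
    ∫ x, A x ≤ ∫ x, B x := by
  by_cases hA : Integrable A
  · exact integral_mono hA hB h
  · rw [integral_undef hA]; exact integral_nonneg hB0

lemma energy_deriv (hu : IsSol N q u K) {J : Set ℝ} (hJ : IsOpen J) (hJ0 : J ⊆ Ioi 0)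
    {Φ : Euc N → ℝ → ℝ} (hΦ : ContDiffOn ℝ 2 (fun p : Euc N × ℝ => Φ p.1 p.2) (univ ×ˢ J))
    {χ : Euc N → ℝ} (hχ : ContDiff ℝ 2 χ) (hc : HasCompactSupport χ) {t : ℝ} (ht : t ∈ J) :
    HasDerivAt (fun t => ∫ x, u x t * Φ x t * χ x)
      (∫ x, ((u x t * (deriv (Φ x) t + lapl (fun y => Φ y t) x) - u x t ^ q * Φ x t) * χ x +
        u x t * (2 * (∑ i : Fin N, fderiv ℝ (fun y => Φ y t) x (EuclideanSpace.single i 1) *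
        fderiv ℝ χ x (EuclideanSpace.single i 1)) + Φ x t * lapl χ x))) t := by
  have ho : IsOpen ((univ : Set (Euc N)) ×ˢ J) := isOpen_univ.prod hJ
  have hΦat : ∀ x, ∀ t ∈ J, ContDiffAt ℝ 2 (fun p : Euc N × ℝ => Φ p.1 p.2) (x, t) := fun x t ht =>
    hΦ.contDiffAt (ho.mem_nhds ⟨mem_univ _, ht⟩)
  have huat : ∀ x, ∀ t ∈ J, ContDiffAt ℝ 2 (fun p : Euc N × ℝ => u p.1 p.2) (x, t) := fun x t ht =>
    hu.1.contDiffAt ((isOpen_univ.prod isOpen_Ioi).mem_nhds ⟨mem_univ _, hJ0 ht⟩)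
  have hΦx : ContDiff ℝ 2 (fun x => Φ x t) := contDiff_iff_contDiffAt.2 fun x =>
    (hΦat x t ht).comp x (f := fun x : Euc N => (x, t)) (by fun_prop)
  have hux : ContDiff ℝ 2 (fun x => u x t) := contDiff_iff_contDiffAt.2 fun x =>
    (huat x t ht).comp x (f := fun x : Euc N => (x, t)) (by fun_prop)
  have hΦt : ∀ x, DifferentiableAt ℝ (Φ x) t := fun x =>
    ((hΦat x t ht).comp t (f := fun t : ℝ => (x, t)) (by fun_prop)).differentiableAt (by norm_num)
  have hut : ∀ x, DifferentiableAt ℝ (u x) t := fun x =>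
    ((huat x t ht).comp t (f := fun t : ℝ => (x, t)) (by fun_prop)).differentiableAt (by norm_num)
  have h1 := deriv_param (N := N) (F := fun t x => u x t * Φ x t * χ x) hJ hc (s := t) ?_ ?_ ht
  · refine h1.congr_deriv ?_
    have hg : ContDiff ℝ 2 (fun x => Φ x t * χ x) := hΦx.mul hχ
    have hgc : HasCompactSupport (fun x => Φ x t * χ x) := hc.mul_left
    have hib := ibp2 hux hg hgc
    have i1 : Integrable (fun x => lapl (fun y => u y t) x * (Φ x t * χ x)) :=
      ((cont_lapl hux).mul hg.continuous).integrable_of_hasCompactSupport hgc.mul_left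
    have i2 : Integrable (fun x => u x t * lapl (fun x => Φ x t * χ x) x) :=
      (hux.continuous.mul (cont_lapl hg)).integrable_of_hasCompactSupport (hcs_lapl hgc).mul_left
    have e : ∀ x, deriv (fun s => u x s * Φ x s * χ x) t - ((u x t * (deriv (Φ x) t + lapl (fun y => Φ y t) x) - u x t ^ q * Φ x t) * χ x +
        u x t * (2 * (∑ i : Fin N, fderiv ℝ (fun y => Φ y t) x (EuclideanSpace.single i 1) *
        fderiv ℝ χ x (EuclideanSpace.single i 1)) + Φ x t * lapl χ x)) = 
        lapl (fun y => u y t) x * (Φ x t * χ x) - u x t * lapl (fun x => Φ x t * χ x) x := by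
      intro x
      have hd := (((hut x).hasDerivAt.fun_mul (hΦt x).hasDerivAt).mul_const (χ x)).deriv
      rw [hd, lapl_mul hΦx.contDiffAt hχ.contDiffAt]
      have hpde := hu.2.2.1 x t (hJ0 ht)
      linear_combination (Φ x t * χ x) * hpde
    refine integral_eq_of_sub ?_ ?_
    · simp_rw [e]; exact i1.sub i2
    · simp_rw [e]; rw [integral_sub i1 i2, hib, sub_self]
  · rintro ⟨s, x⟩ hp
    refine ContDiffAt.contDiffWithinAt ?_
    have c1 : ContDiffAt ℝ 1 (fun p : ℝ × Euc N => u p.2 p.1) (s, x) :=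
      (((huat x s hp.1).of_le (by norm_num : (1:WithTop ℕ∞) ≤ 2))).comp (s, x) (f := fun p : ℝ × Euc N => (p.2, p.1)) (by fun_prop)
    have c2 : ContDiffAt ℝ 1 (fun p : ℝ × Euc N => Φ p.2 p.1) (s, x) :=
      (((hΦat x s hp.1).of_le (by norm_num : (1:WithTop ℕ∞) ≤ 2))).comp (s, x) (f := fun p : ℝ × Euc N => (p.2, p.1)) (by fun_prop)
    exact (c1.mul c2).mul ((hχ.of_le (by norm_num : (1:WithTop ℕ∞) ≤ 2)).contDiffAt.comp _ contDiffAt_snd)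
  · intro s _ y hy
    simp [image_eq_zero_of_notMem_tsupport hy]

/-- cutoffs -/
def bet (N : ℕ) : ContDiffBump (0 : Euc N) := ⟨1, 2, by norm_num, by norm_num⟩
def chi (N : ℕ) (n : ℕ) (x : Euc N) : ℝ := bet N ((n : ℝ)⁻¹ • x)

lemma chi_cd (n : ℕ) : ContDiff ℝ 2 (chi N n) := by
  unfold chi
  exact ((bet N).contDiff (n := 2)).comp (by fun_prop)

lemma chi_01 (n : ℕ) (x : Euc N) : 0 ≤ chi N n x ∧ chi N n x ≤ 1 := ⟨(bet N).nonneg, (bet N).le_one⟩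

lemma chi_one {n : ℕ} (hn : 1 ≤ n) {x : Euc N} (hx : ‖x‖ ≤ n) : chi N n x = 1 := by
  refine (bet N).one_of_mem_closedBall ?_
  have hn' : (0:ℝ) < n := by positivity
  rw [mem_closedBall, dist_zero_right, norm_smul, norm_inv, Real.norm_of_nonneg hn'.le]
  change _ ≤ (1:ℝ)
  rw [inv_mul_le_iff₀ hn']; linarith

lemma chi_hcs {n : ℕ} (hn : 1 ≤ n) : HasCompactSupport (chi N n) := by
  refine HasCompactSupport.intro (isCompact_closedBall (0 : Euc N) (2 * n)) fun x hx => ?_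
  refine (bet N).zero_of_le_dist ?_
  have hn' : (0:ℝ) < n := by positivity
  rw [mem_closedBall, dist_zero_right] at hx
  rw [dist_zero_right, norm_smul, norm_inv, Real.norm_of_nonneg hn'.le]
  change (2:ℝ) ≤ _
  rw [le_inv_mul_iff₀ hn']; push Not at hx; linarith

lemma chi_ev {n : ℕ} (hn : 1 ≤ n) {x : Euc N} (hx : ‖x‖ < n) : chi N n =ᶠ[nhds x] fun _ => 1 := by
  have : {y : Euc N | ‖y‖ < n} ∈ nhds x := (isOpen_lt continuous_norm continuous_const).mem_nhds hx
  filter_upwards [this] with y hy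
  exact chi_one hn (le_of_lt hy)

lemma chi_bd (N : ℕ) : ∃ B : ℝ, 0 ≤ B ∧ ∀ n : ℕ, 1 ≤ n → ∀ x : Euc N,
    (∀ i, |fderiv ℝ (chi N n) x (EuclideanSpace.single i 1)| ≤ B) ∧ |lapl (chi N n) x| ≤ B := by
  have hb : ContDiff ℝ 2 (bet N : Euc N → ℝ) := (bet N).contDiff
  have hbc : HasCompactSupport (bet N : Euc N → ℝ) := (bet N).hasCompactSupport
  obtain ⟨B1, h1⟩ := (hb.continuous_fderiv (by norm_num)).bounded_above_of_compact_support (hbc.fderiv (𝕜 := ℝ))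
  obtain ⟨B2, h2⟩ := (cont_lapl hb).bounded_above_of_compact_support (hcs_lapl hbc)
  have hB1 : 0 ≤ B1 := (norm_nonneg _).trans (h1 0)
  have hB2 : 0 ≤ B2 := (norm_nonneg _).trans (h2 0)
  refine ⟨B1 + B2, by positivity, fun n hn x => ?_⟩
  have hn0 : (0:ℝ) ≤ (n:ℝ)⁻¹ := by positivity
  have hn1 : (n:ℝ)⁻¹ ≤ 1 := inv_le_one_of_one_le₀ (by exact_mod_cast hn)
  constructor
  · intro i
    have e : fderiv ℝ (chi N n) x = (n:ℝ)⁻¹ • fderiv ℝ (bet N) ((n:ℝ)⁻¹ • x) := by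
      unfold chi; rw [fderiv_comp_smul]
    rw [e]
    have := (fderiv ℝ (bet N) ((n:ℝ)⁻¹ • x)).le_opNorm (EuclideanSpace.single i 1)
    have h3 := h1 ((n:ℝ)⁻¹ • x)
    have h4 : ‖(EuclideanSpace.single i 1 : Euc N)‖ = 1 := by simp
    rw [h4, mul_one] at this
    change |(n:ℝ)⁻¹ * _| ≤ _
    rw [abs_mul, abs_of_nonneg hn0]
    calc _ ≤ 1 * (B1) := mul_le_mul hn1 (this.trans h3) (abs_nonneg _) zero_le_one
      _ ≤ _ := by linarith
  · have e : lapl (chi N n) x = (n:ℝ)⁻¹ ^ 2 * lapl (bet N) ((n:ℝ)⁻¹ • x) := by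
      unfold chi; rw [lapl_smul]
    rw [e, abs_mul, abs_of_nonneg (by positivity)]
    calc _ ≤ 1 * B2 := mul_le_mul (pow_le_one₀ hn0 hn1) (h2 _) (abs_nonneg _) zero_le_one
      _ ≤ _ := by linarith

lemma energy (hq : 1 < q) (hu : IsSol N q u K) {r : ℝ} (hr : 0 < r) (hK : K ⊆ ball (0 : Euc N) r) {T : ℝ} (hT : 0 < T) :
    ∃ err : ℕ → ℝ, Tendsto err atTop (nhds 0) ∧ ∀ (M a b : ℝ) (J : Set ℝ) (Φ k : Euc N → ℝ → ℝ), 0 ≤ M → 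
      0 < a → a ≤ b → b ≤ T → IsOpen J → J ⊆ Ioi 0 → Icc a b ⊆ J →
      ContDiffOn ℝ 2 (fun p : Euc N × ℝ => Φ p.1 p.2) (univ ×ˢ J) →
      (∀ x, ∀ t ∈ Icc a b, |Φ x t| ≤ M) → 
      (∀ x, ∀ t ∈ Icc a b, ∀ i, |fderiv ℝ (fun y => Φ y t) x (EuclideanSpace.single i 1)| ≤ M) →
      (∀ x t, 0 ≤ k x t) → (∀ t ∈ Icc a b, Integrable (fun x => k x t)) →
      IntegrableOn (fun t => ∫ x, k x t) (Icc a b) →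
      (∀ x, ∀ t ∈ Icc a b, u x t * (deriv (Φ x) t + lapl (fun y => Φ y t) x) - u x t ^ q * Φ x t ≤ k x t) →
      ∀ n : ℕ, 1 ≤ n → r < n → 
        ∫ x, u x b * Φ x b * chi N n x ≤ (∫ x, u x a * Φ x a * chi N n x) + (∫ t in a..b, ∫ x, k x t) + M * err n := by
  obtain ⟨B, hB, hχ⟩ := chi_bd N
  obtain ⟨C, hC, hdec⟩ := decay hq hu hr hK (m := ((N:ℝ) + 1) / 2) (by positivity) hT
  set w : Euc N → ℝ := fun x => (1 + ‖x‖ ^ 2) ^ (-((N:ℝ) + 1) / 2) with hw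
  have hwi : Integrable w := integrable_rpow_neg_one_add_norm_sq (by simp)
  have hw0 : ∀ x, 0 ≤ w x := fun x => by positivity
  set S : ℕ → Set (Euc N) := fun n => {x | (n:ℝ) ≤ ‖x‖} with hS
  have hSm : ∀ n, MeasurableSet (S n) := fun n => measurableSet_le measurable_const measurable_norm
  refine ⟨fun n => T * ((2 * N + 1) * B * C) * ∫ x, (S n).indicator w x, ?_, ?_⟩
  · have : Tendsto (fun n : ℕ => ∫ x, (S n).indicator w x) atTop (nhds (∫ x : Euc N, (0:ℝ))) := by
      refine tendsto_integral_of_dominated_convergence w (fun n => (hwi.indicator (hSm n)).aestronglyMeasurable) hwi ?_ ?_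
      · intro n; refine Eventually.of_forall fun x => ?_
        rw [Real.norm_of_nonneg (indicator_nonneg (fun x _ => hw0 x) x)]
        exact indicator_le_self' (fun x _ => hw0 x) x
      · refine Eventually.of_forall fun x => ?_
        refine tendsto_const_nhds.congr' ?_
        obtain ⟨m, hm⟩ := exists_nat_gt ‖x‖
        filter_upwards [eventually_ge_atTop m] with n hn
        rw [indicator_of_notMem]
        simp only [hS, mem_ofPred_eq, not_le]
        exact hm.trans_le (by exact_mod_cast hn)
    simpa using this.const_mul (T * ((2 * N + 1) * B * C))
  · intro M a b J Φ k hM ha hab hbT hJ hJ0 hIJ hΦ hΦM hΦM' hk0 hki hkt hle n hn hrn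
    have hder : ∀ t ∈ Icc a b, _ := fun t ht => energy_deriv hu hJ hJ0 hΦ (chi_cd n) (chi_hcs (N := N) hn) (hIJ ht)
    set E := M * ((2 * N + 1) * B * C) * ∫ x, (S n).indicator w x with hE
    have hI0 : 0 ≤ ∫ x, (S n).indicator w x := integral_nonneg fun x => indicator_nonneg (fun x _ => hw0 x) x
    have hE0 : 0 ≤ E := by positivity
    have key := intervalIntegral.sub_le_integral_of_hasDeriv_right_of_le (φ := fun t => (∫ x, k x t) + E) hab
      (fun t ht => (hder t ht).continuousAt.continuousWithinAt) 
      (fun t ht => (hder t ⟨ht.1.le, ht.2.le⟩).hasDerivWithinAt) (hkt.add (integrableOn_const (by simp) (by simp))) ?_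
    · rw [intervalIntegral.integral_add ((intervalIntegrable_iff_integrableOn_Icc_of_le hab).2 hkt) (by simp), intervalIntegral.integral_const, smul_eq_mul] at key
      have : (b - a) * E ≤ T * E := by gcongr; linarith
      have e2 : T * E = M * (T * ((2 * N + 1) * B * C) * ∫ x, (S n).indicator w x) := by rw [hE]; ring
      simp only
      linarith
    · intro t ht
      have ht' : t ∈ Icc a b := ⟨ht.1.le, ht.2.le⟩
      have ht0 : 0 < t := ha.trans ht.1
      have i1 : Integrable (fun x => M * ((2 * N + 1) * B * C) * (S n).indicator w x) := (hwi.indicator (hSm n)).const_mul _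
      have : (∫ x, k x t) + E = ∫ x, (k x t + M * ((2 * N + 1) * B * C) * (S n).indicator w x) := by
        rw [integral_add (hki t ht') i1, integral_const_mul]
      rw [this]
      refine integral_le_of_le ((hki t ht').add i1) (fun x => ?_) (fun x => ?_)
      · have := indicator_nonneg (s := S n) (fun x _ => hw0 x) x
        have := hk0 x t
        positivity
      · refine add_le_add ?_ ?_
        · have c := chi_01 n x
          have h1 := hle x t ht'
          have h2 := hk0 x t
          nlinarith
        · have hux := hu.2.1 x t ht0
          by_cases hx : x ∈ S n
          · rw [indicator_of_mem hx]
            have hx' : (n:ℝ) ≤ ‖x‖ := hx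
            have hd := hdec x (hrn.trans_le hx') t ht0 (ht'.2.trans hbT)
            have e3 : C * (1 + ‖x‖ ^ 2) ^ (-(((N:ℝ) + 1) / 2)) = C * w x := by simp only [hw]; rw [neg_div]
            rw [e3] at hd
            have s1 : (∑ i : Fin N, fderiv ℝ (fun y => Φ y t) x (EuclideanSpace.single i 1) *
              fderiv ℝ (chi N n) x (EuclideanSpace.single i 1)) ≤ N * (M * B) := by
              calc _ ≤ ∑ i : Fin N, M * B := by
                    refine Finset.sum_le_sum fun i _ => (le_abs_self _).trans ?_
                    rw [abs_mul]
                    exact mul_le_mul (hΦM' x t ht' i) ((hχ n hn x).1 i) (abs_nonneg _) hM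
                _ = _ := by simp
            have s2 : Φ x t * lapl (chi N n) x ≤ M * B := by
              refine (le_abs_self _).trans ?_
              rw [abs_mul]
              exact mul_le_mul (hΦM x t ht') (hχ n hn x).2 (abs_nonneg _) hM
            have s3 : 0 ≤ (2 * N + 1) * (M * B) := by positivity
            calc _ ≤ u x t * ((2 * N + 1) * (M * B)) := by gcongr; linarith
              _ ≤ (C * w x) * ((2 * N + 1) * (M * B)) := by gcongr
              _ = _ := by ring
          · rw [indicator_of_notMem hx]
            have hx' : ‖x‖ < n := not_le.1 hx
            have e := chi_ev hn hx'
            rw [lapl_congr e, lapl_const, e.fderiv_eq]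
            simp

end en

section ph2
variable {N : ℕ} {q : ℝ} {u : Euc N → ℝ → ℝ} {K : Set (Euc N)}

lemma GK_le_const {t s : ℝ} (hs : 0 < s) (hst : s ≤ t) (x : Euc N) : GK N x t ≤ (4 * π * s) ^ (-(N:ℝ) / 2) := by
  have ht : 0 < t := hs.trans_le hst
  unfold GK
  calc _ ≤ (4 * π * t) ^ (-(N:ℝ) / 2) := by
        refine mul_le_of_le_one_right (by positivity) ?_
        rw [Real.exp_le_one_iff, neg_div]
        simp only [Left.neg_nonpos_iff]; positivity
    _ ≤ _ := by
        refine Real.rpow_le_rpow_of_nonpos (by positivity) (by gcongr) ?_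
        rw [neg_div]; simp only [Left.neg_nonpos_iff]; positivity

lemma phase2 (hq : 1 < q) (hu : IsSol N q u K) {r : ℝ} (hr : 0 < r) (hK : K ⊆ ball (0 : Euc N) r)
    {s T A : ℝ} (hs : 0 < s) (hsT : s < T) {e : ℕ → ℝ} (he : Tendsto e atTop (nhds 0))
    (hA : ∀ n : ℕ, 1 ≤ n → r < n → ∫ x, u x s * chi N n x ≤ A + e n) (x0 : Euc N) :
    u x0 T ≤ 4 * (4 * π * (T - s)) ^ (-(N:ℝ) / 2) * A := by
  have hT : 0 < T := hs.trans hsT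
  have hTs : 0 < T - s := by linarith
  have hc2 := c2_pos (N := N)
  set D := (4 * π * (T - s)) ^ (-(N:ℝ) / 2) with hD
  have hD0 : 0 < D := by positivity
  obtain ⟨err, herr, hen⟩ := energy hq hu hr hK hT
  set u0 := u x0 T with hu0
  have hu0p : 0 < u0 := hu.2.1 x0 T hT
  have huc : Continuous (fun x => u x T) := (sol_x hu hT).continuous
  obtain ⟨δ, hδ, hδ2⟩ : ∃ δ > 0, ∀ y, dist y x0 < δ → u0 / 2 ≤ u y T := by
    obtain ⟨δ, hδ, h⟩ := Metric.eventually_nhds_iff.1 (huc.continuousAt.eventually (lt_mem_nhds (show u0 / 2 < u x0 T by linarith)))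
    exact ⟨δ, hδ, fun y hy => (h hy).le⟩
  set ε := δ ^ 2 / (16 * c2 N) with hε
  have hε0 : 0 < ε := by positivity
  set Φ : Euc N → ℝ → ℝ := fun y t => GK N (y - x0) (T + ε - t) with hΦ
  set M := (4 * π * ε) ^ (-(N:ℝ) / 2) * (1 + 1 / (2 * ε) + 4 * c2 N) with hM
  set M0 := (4 * π * ε) ^ (-(N:ℝ) / 2) with hM0
  have hM0p : 0 < M0 := by positivity
  have hMp : 0 ≤ M := by positivity
  have hcd : ContDiffOn ℝ 2 (fun p : Euc N × ℝ => Φ p.1 p.2) (univ ×ˢ Ioo 0 (T + ε)) := by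
    rintro ⟨x, t⟩ hp
    refine ContDiffAt.contDiffWithinAt ?_
    exact (GK_cdAt (x - x0, T + ε - t) (by have := hp.2.2; simp only at this ⊢; linarith)).comp (x, t) (f := fun p : Euc N × ℝ => (p.1 - x0, T + ε - p.2)) (by fun_prop)
  have hb1 : ∀ x, ∀ t ∈ Icc s T, 0 < Φ x t ∧ Φ x t ≤ M0 := fun x t ht =>
    ⟨GK_pos _ (by linarith [ht.2]), GK_le_const hε0 (by linarith [ht.2]) _⟩
  have key := hen M s T (Ioo 0 (T + ε)) Φ (fun _ _ => 0) hMp hs hsT.le le_rfl isOpen_Ioo (fun t ht => ht.1)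
    (fun t ht => ⟨hs.trans_le ht.1, by linarith [ht.2]⟩) hcd ?_ ?_ (fun _ _ => le_rfl) (fun _ _ => integrable_zero _ _ _)
    (by simp) ?_
  · have hlow : ∀ n : ℕ, 1 ≤ n → ‖x0‖ + δ ≤ n → u0 / 4 ≤ ∫ x, u x T * Φ x T * chi N n x := by
      intro n hn hn2
      have e1 : ∀ x, Φ x T = GK N (x - x0) ε := by intro x; simp only [hΦ]; congr 1; ring
      have i2 : Integrable fun y => ‖y - x0‖ ^ 2 * GK N (y - x0) ε := (nsq_GK_integrable (N := N) hε0).comp_sub_right x0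
      have i3 : Integrable fun y => GK N (y - x0) ε := (GK_integrable (N := N) hε0).comp_sub_right x0
      have I2 : ∫ y, ‖y - x0‖ ^ 2 * GK N (y - x0) ε ≤ 8 * ε * c2 N := by
        rw [integral_sub_right_eq_self (fun y => ‖y‖ ^ 2 * GK N y ε)]; exact nsq_GK_int hε0
      have I3 : ∫ y, GK N (y - x0) ε = 1 := by
        rw [integral_sub_right_eq_self (fun y => GK N y ε)]; exact GK_int hε0
      calc u0 / 4 = u0 / 2 - u0 / (2 * δ ^ 2) * (8 * ε * c2 N) := by
            rw [hε]; field_simp; norm_num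
        _ ≤ u0 / 2 * (∫ y, GK N (y - x0) ε) - u0 / (2 * δ ^ 2) * (∫ y, ‖y - x0‖ ^ 2 * GK N (y - x0) ε) := by
            rw [I3, mul_one]; gcongr
        _ = ∫ y, (u0 / 2 * GK N (y - x0) ε - u0 / (2 * δ ^ 2) * (‖y - x0‖ ^ 2 * GK N (y - x0) ε)) := by
            rw [integral_sub (i3.const_mul _) (i2.const_mul _), integral_const_mul, integral_const_mul]
        _ ≤ _ := by
            refine integral_mono ((i3.const_mul _).sub (i2.const_mul _)) ?_ fun y => ?_
            · refine Continuous.integrable_of_hasCompactSupport ?_ (chi_hcs hn).mul_left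
              simp_rw [e1]
              exact (huc.mul ((GK_cd (n := 0) hε0).continuous.comp (continuous_id.sub continuous_const))).mul (chi_cd n).continuous
            · simp only
              rw [e1]
              have g := GK_pos (y - x0) hε0
              have : u0 / 2 - u0 / (2 * δ ^ 2) * ‖y - x0‖ ^ 2 ≤ u y T * chi N n y := by
                by_cases hy : dist y x0 < δ
                · rw [chi_one hn, mul_one]
                  · have := hδ2 y hy
                    have : 0 ≤ u0 / (2 * δ ^ 2) * ‖y - x0‖ ^ 2 := by positivity
                    linarith
                  · rw [dist_eq_norm] at hy
                    have := norm_le_norm_add_norm_sub' y x0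
                    linarith
                · have p1 := (hu.2.1 y T hT)
                  have p2 := (chi_01 n y).1
                  rw [dist_eq_norm] at hy
                  have p3 : δ ^ 2 ≤ ‖y - x0‖ ^ 2 := by gcongr; linarith
                  have p4 : u0 / 2 ≤ u0 / (2 * δ ^ 2) * ‖y - x0‖ ^ 2 := by
                    calc u0 / 2 = u0 / (2 * δ ^ 2) * δ ^ 2 := by field_simp
                      _ ≤ _ := by gcongr
                  have : 0 ≤ u y T * chi N n y := by positivity
                  linarith
              nlinarith [mul_le_mul_of_nonneg_right this g.le]
    have hup : ∀ n : ℕ, 1 ≤ n → r < n → ∫ x, u x s * Φ x s * chi N n x ≤ D * (A + e n) := by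
      intro n hn hrn
      refine le_trans ?_ (mul_le_mul_of_nonneg_left (hA n hn hrn) hD0.le)
      rw [← integral_const_mul]
      have hsT' : s ∈ Icc s T := ⟨le_rfl, hsT.le⟩
      refine integral_le_of_le ?_ (fun x => ?_) fun x => ?_
      · exact (((sol_x hu hs).continuous.mul (chi_cd n).continuous).integrable_of_hasCompactSupport (chi_hcs hn).mul_left).const_mul _
      · have := hu.2.1 x s hs
        have := (chi_01 n x).1
        positivity
      · have a1 := hu.2.1 x s hs
        have a2 := (chi_01 n x).1
        have a3 : Φ x s ≤ D := GK_le_const hTs (by linarith) _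
        calc _ = Φ x s * (u x s * chi N n x) := by ring
          _ ≤ _ := by gcongr
    have hlim : Tendsto (fun n => D * (A + e n) + M * err n) atTop (nhds (D * (A + 0) + M * 0)) :=
      ((he.const_add A).const_mul D).add (herr.const_mul M)
    have : u0 / 4 ≤ D * (A + 0) + M * 0 := by
      refine ge_of_tendsto hlim ?_
      obtain ⟨m, hm⟩ := exists_nat_gt (max (max 1 r) (‖x0‖ + δ))
      filter_upwards [eventually_ge_atTop m] with n hn
      have hn' : max (max 1 r) (‖x0‖ + δ) < n := hm.trans_le (by exact_mod_cast hn)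
      rw [max_lt_iff, max_lt_iff] at hn'
      have hn1 : 1 ≤ n := by exact_mod_cast hn'.1.1.le
      have k1 := key n hn1 hn'.1.2
      simp only [integral_zero, intervalIntegral.integral_zero, add_zero] at k1
      linarith [hlow n hn1 hn'.2.le, hup n hn1 hn'.1.2]
    linarith
  · intro x t ht
    rw [abs_of_pos (hb1 x t ht).1]
    refine (hb1 x t ht).2.trans ?_
    rw [hM]
    refine le_mul_of_one_le_right hM0p.le ?_
    have : 0 < 1 / (2 * ε) := by positivity
    linarith
  · intro x t ht i
    have ht' : 0 < T + ε - t := by linarith [ht.2]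
    have e1 : fderiv ℝ (fun y => Φ y t) x = fderiv ℝ (fun z => GK N z (T + ε - t)) (x - x0) := by
      simp only [hΦ]
      rw [fderiv_comp_sub (f := fun z => GK N z (T + ε - t)) x0]
    rw [e1, GK_fd ht']
    set z := x - x0
    set σ := T + ε - t with hσ
    have hσε : ε ≤ σ := by linarith [ht.2]
    have a1 := GK_pos z ht'
    have a2 := nsq_GK_le ht' z
    have a3 : GK N z σ ≤ M0 := GK_le_const hε0 hσε z
    have a4 : GK N z (2 * σ) ≤ M0 := GK_le_const hε0 (by linarith) z
    have a5 : |inner ℝ z (EuclideanSpace.single i (1:ℝ))| ≤ ‖z‖ := by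
      have := abs_real_inner_le_norm z (EuclideanSpace.single i (1:ℝ)); simpa using this
    rw [abs_div, abs_mul, abs_neg, abs_of_pos a1, abs_of_pos (by positivity : 0 < 2 * σ), div_le_iff₀ (by positivity)]
    have a6 : ‖z‖ ≤ 1 + ‖z‖ ^ 2 := by nlinarith [sq_nonneg (‖z‖ - 1), norm_nonneg z]
    calc GK N z σ * _ ≤ GK N z σ * (1 + ‖z‖ ^ 2) := by gcongr; exact a5.trans a6
      _ ≤ M0 + 8 * σ * (c2 N * M0) := by
          have : 8 * σ * (c2 N * GK N z (2 * σ)) ≤ 8 * σ * (c2 N * M0) := by gcongr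
          nlinarith
      _ ≤ _ := by
          have h1 : 1 ≤ 1 / (2 * ε) * (2 * σ) := by
            rw [one_div, inv_mul_eq_div, le_div_iff₀ (by positivity)]; linarith
          rw [hM]
          have : 0 ≤ M0 * (2 * σ) := by positivity
          nlinarith [mul_le_mul_of_nonneg_left h1 hM0p.le]
  · intro x t ht
    have ht' : 0 < T + ε - t := by linarith [ht.2]
    have h1 : HasDerivAt (Φ x) (-(GK N (x - x0) (T + ε - t) * (‖x - x0‖ ^ 2 / (4 * (T + ε - t) ^ 2) - N / (2 * (T + ε - t))))) t := by
      have := (GK_hasDeriv ht' (x - x0)).comp t ((hasDerivAt_id' t).const_sub (T + ε))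
      exact this.congr_deriv (by ring)
    have h2 := GK_lapl ht' x0 x
    have h3 : lapl (fun y => Φ y t) x = lapl (fun z => GK N (z - x0) (T + ε - t)) x := rfl
    rw [h1.deriv, h3, h2]
    have h4 : 0 ≤ u x t ^ q * Φ x t := mul_nonneg (Real.rpow_nonneg (hu.2.1 x t (hs.trans_le ht.1)).le _) (hb1 x t ht).1.le
    simp only [neg_add_cancel, mul_zero]
    linarith

end ph2

section ph1
variable {N : ℕ} {q : ℝ} {u : Euc N → ℝ → ℝ} {K : Set (Euc N)} {η : Euc N → ℝ}

lemma ph_01 (hη : Continuous η) (hc : HasCompactSupport η) (h01 : ∀ y, 0 ≤ η y ∧ η y ≤ 1) (x : Euc N)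
    {t : ℝ} (ht : 0 < t) : 0 ≤ 1 - heatPot N η x t ∧ 1 - heatPot N η x t ≤ 1 := by
  have h1 := hp_le hη hc (fun y => (h01 y).2) x ht
  have h2 := hp_nonneg (fun y => (h01 y).1) x ht
  constructor <;> linarith

lemma ph_fd (hη : ContDiff ℝ 2 η) (hc : HasCompactSupport η) (x v : Euc N) {t : ℝ} (ht : 0 < t) :
    fderiv ℝ (fun y => 1 - heatPot N η y t) x v = - fderiv ℝ (fun y => heatPot N η y t) x v := by
  have := fderiv_const_sub (𝕜 := ℝ) (f := fun y => heatPot N η y t) (x := x) (1:ℝ)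
  rw [this]; rfl

lemma ph_lapl (hη : ContDiff ℝ 2 η) (hc : HasCompactSupport η) (x : Euc N) {t : ℝ} (ht : 0 < t) :
    lapl (fun y => 1 - heatPot N η y t) x = - heatPot N (lapl η) x t := by
  rw [← hp_lapl hη hc x ht]
  unfold lapl
  rw [← Finset.sum_neg_distrib]
  refine Finset.sum_congr rfl fun i _ => ?_
  have : (fun y => fderiv ℝ (fun y => 1 - heatPot N η y t) y (EuclideanSpace.single i 1)) =
     fun y => - fderiv ℝ (fun y => heatPot N η y t) y (EuclideanSpace.single i 1) := by
    funext y; exact ph_fd hη hc y _ ht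
  rw [this, fderiv_fun_neg]; rfl

lemma young_pt (hq : 1 < q) {U φ B R : ℝ} (hU : 0 ≤ U) (hφ : 0 ≤ φ) (hB : 0 ≤ B) (hR : 0 ≤ R) :
    U * (φ ^ (2 * (q / (q - 1)) - 2) * (B * R)) - U ^ q * φ ^ (2 * (q / (q - 1))) ≤
      B ^ (q / (q - 1)) * R ^ (q / (q - 1)) := by
  have h1 : 0 < q - 1 := by linarith
  have hconj : q.HolderConjugate (q / (q - 1)) := Real.HolderConjugate.conjExponent hq
  have hy := Real.young_inequality_of_nonneg (a := U * φ ^ (2 * (q / (q - 1)) - 2)) (b := B * R)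
    (by positivity) (by positivity) hconj
  have hq' : 1 < q / (q - 1) := by rw [lt_div_iff₀ h1]; linarith
  rw [Real.mul_rpow hU (by positivity), ← Real.rpow_mul hφ, Real.mul_rpow hB hR] at hy
  have he : (2 * (q / (q - 1)) - 2) * q = 2 * (q / (q - 1)) := by field_simp; ring
  rw [he] at hy
  have h2 : U ^ q * φ ^ (2 * (q / (q - 1))) / q ≤ U ^ q * φ ^ (2 * (q / (q - 1))) :=
    div_le_self (by positivity) hq.le
  have h3 : B ^ (q / (q - 1)) * R ^ (q / (q - 1)) / (q / (q - 1)) ≤ B ^ (q / (q - 1)) * R ^ (q / (q - 1)) :=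
    div_le_self (by positivity) hq'.le
  rw [← mul_assoc]
  linarith

def B0 (N : ℕ) (p : ℝ) : ℝ := 2 * p + p * (p - 1) * N

lemma Phi_ineq (hq : 1 < q) (hη : ContDiff ℝ 2 η) (hc : HasCompactSupport η)
    (h01 : ∀ y, 0 ≤ η y ∧ η y ≤ 1) {p : ℝ} (hp : p = 2 * (q / (q - 1))) (x : Euc N) {t U : ℝ} (ht : 0 < t) (hU : 0 < U) :
    U * (deriv (fun t => (1 - heatPot N η x t) ^ p) t + lapl (fun y => (1 - heatPot N η y t) ^ p) x)
      - U ^ q * (1 - heatPot N η x t) ^ p ≤ B0 N p ^ (q / (q - 1)) * RR N η x t ^ (q / (q - 1)) := by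
  have h1 : 0 < q - 1 := by linarith
  have hq' : 1 < q / (q - 1) := by rw [lt_div_iff₀ h1]; linarith
  have hp2 : 2 < p := by linarith
  have hB : 0 ≤ B0 N p := by
    unfold B0
    have : 0 ≤ p - 1 := by linarith
    positivity
  obtain ⟨hφ0, hφ1⟩ := ph_01 hη.continuous hc h01 x ht
  have hdt := hp_dt hη hc x ht
  have hD := ((hdt.const_sub 1).rpow_const (p := p) (Or.inr (by linarith))).deriv
  have hcd : ContDiff ℝ 2 (fun y => 1 - heatPot N η y t) := contDiff_const.sub (hp_cd (n := 2) hη hc ht)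
  have hL := lapl_comp (φ := fun y => 1 - heatPot N η y t) (x := x) hcd.contDiffAt
    (f := fun s => s ^ p) (f' := fun s => p * s ^ (p - 1)) (f'' := p * ((p - 1) * (1 - heatPot N η x t) ^ (p - 1 - 1)))
    (Eventually.of_forall fun s => Real.hasDerivAt_rpow_const (Or.inr (by linarith)))
    ((Real.hasDerivAt_rpow_const (Or.inr (by linarith))).const_mul p)
  rw [hD, hL, ph_lapl hη hc x ht]
  set φ := 1 - heatPot N η x t with hφ
  have hRR : RR N η x t = ‖fderiv ℝ (fun y => heatPot N η y t) x‖ ^ 2 + |heatPot N (lapl η) x t| := by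
    unfold RR; rw [hdt.deriv]
  set h := heatPot N (lapl η) x t
  set G := ‖fderiv ℝ (fun y => heatPot N η y t) x‖ with hG
  have hsum : ∑ i : Fin N, fderiv ℝ (fun y => 1 - heatPot N η y t) x (EuclideanSpace.single i 1) ^ 2 ≤ N * G ^ 2 := by
    calc _ ≤ ∑ i : Fin N, G ^ 2 := by
          refine Finset.sum_le_sum fun i _ => ?_
          rw [ph_fd hη hc x _ ht, neg_sq, ← sq_abs]
          have := (fderiv ℝ (fun y => heatPot N η y t) x).le_opNorm (EuclideanSpace.single i 1)
          rw [Real.norm_eq_abs] at this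
          simp only [EuclideanSpace.norm_single, norm_one, mul_one] at this
          gcongr
      _ = _ := by simp
  set S := ∑ i : Fin N, fderiv ℝ (fun y => 1 - heatPot N η y t) x (EuclideanSpace.single i 1) ^ 2 with hS
  have hpow : φ ^ (p - 1) ≤ φ ^ (p - 2) :=
    Real.rpow_le_rpow_of_exponent_ge' hφ0 hφ1 (by linarith) (by linarith)
  have e1 : φ ^ (p - 1 - 1) = φ ^ (p - 2) := by congr 1; ring
  rw [e1]
  have hkey : (-h * p * φ ^ (p - 1) + (p * φ ^ (p - 1) * -h + p * ((p - 1) * φ ^ (p - 2)) * S)) ≤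
      φ ^ (p - 2) * (B0 N p * RR N η x t) := by
    rw [hRR]
    have a1 : -h * (2 * p * φ ^ (p - 1)) ≤ |h| * (2 * p * φ ^ (p - 2)) := by
      have := neg_le_abs h
      gcongr
    have a2 : p * ((p - 1) * φ ^ (p - 2)) * S ≤ p * ((p - 1) * φ ^ (p - 2)) * (N * G ^ 2) := by
      have : 0 ≤ p - 1 := by linarith
      gcongr
    have a3 : 0 ≤ φ ^ (p - 2) * (2 * p * G ^ 2 + p * (p - 1) * N * |h|) := by
      have : 0 ≤ p - 1 := by linarith
      positivity
    unfold B0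
    nlinarith [a1, a2, a3]
  have := young_pt hq hU.le hφ0 hB (RR_nonneg (η := η) x t)
  rw [← hp] at this
  have := mul_le_mul_of_nonneg_left hkey hU.le
  linarith

lemma Phi_fd (hη : ContDiff ℝ 2 η) (hc : HasCompactSupport η)
    (h01 : ∀ y, 0 ≤ η y ∧ η y ≤ 1) {p : ℝ} (hp : 2 < p) : ∃ M : ℝ, 1 ≤ M ∧ ∀ (x : Euc N) t, 0 < t → ∀ i,
      |fderiv ℝ (fun y => (1 - heatPot N η y t) ^ p) x (EuclideanSpace.single i 1)| ≤ M := by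
  have hη1 : ContDiff ℝ 1 η := hη.of_le (by norm_num)
  obtain ⟨L, hL⟩ := (hη1.continuous_fderiv (by norm_num)).bounded_above_of_compact_support (hc.fderiv (𝕜 := ℝ))
  have hL0 : 0 ≤ L := (norm_nonneg _).trans (hL 0)
  refine ⟨1 + p * L, by nlinarith, fun x t ht i => ?_⟩
  obtain ⟨hφ0, hφ1⟩ := ph_01 hη.continuous hc h01 x ht
  have hcd : ContDiff ℝ 2 (fun y => 1 - heatPot N η y t) := contDiff_const.sub (hp_cd (n := 2) hη hc ht)
  have hd := ((hcd.differentiable (by norm_num)) x).hasFDerivAt.rpow_const (p := p) (Or.inr (by linarith))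
  rw [hd.fderiv]
  simp only [ContinuousLinearMap.smul_apply, smul_eq_mul]
  rw [ph_fd hη hc x _ ht, hp_fd hη1 hc x _ ht]
  have hb : ∀ y, |fderiv ℝ η y (EuclideanSpace.single i 1)| ≤ L := fun y => by
    have := (fderiv ℝ η y).le_opNorm (EuclideanSpace.single i 1)
    rw [Real.norm_eq_abs] at this
    simp only [EuclideanSpace.norm_single, norm_one, mul_one] at this
    exact this.trans (hL y)
  have hcont : Continuous (fun y => fderiv ℝ η y (EuclideanSpace.single i 1)) := (cont_fd hη _).continuous
  have hcs := hcs_fd hc (EuclideanSpace.single i 1)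
  have h1 : |heatPot N (fun y => fderiv ℝ η y (EuclideanSpace.single i 1)) x t| ≤ L :=
    (hp_abs_le (g := fun y => |fderiv ℝ η y (EuclideanSpace.single i 1)|) hcont.abs
      (hcs.comp_left (g := fun z : ℝ => |z|) (by simp)) (fun y => le_rfl) x ht).trans
      (hp_le hcont.abs (hcs.comp_left (g := fun z : ℝ => |z|) (by simp)) hb x ht)
  have h2 : (1 - heatPot N η x t) ^ (p - 1) ≤ 1 := Real.rpow_le_one hφ0 hφ1 (by linarith)
  have h3 : 0 ≤ (1 - heatPot N η x t) ^ (p - 1) := by positivity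
  rw [abs_mul, abs_neg, abs_of_nonneg (by positivity)]
  have : p * (1 - heatPot N η x t) ^ (p - 1) ≤ p * 1 := by gcongr
  calc _ ≤ (p * 1) * L := by gcongr
    _ ≤ _ := by linarith

end ph1

section ph1b
variable {N : ℕ} {q : ℝ} {u : Euc N → ℝ → ℝ} {K : Set (Euc N)} {η : Euc N → ℝ}

lemma init_bd (hq : 1 < q) (hu : IsSol N q u K) (hKc : IsCompact K) (hη : ContDiff ℝ 2 η) (hc : HasCompactSupport η)
    (h01 : ∀ y, 0 ≤ η y ∧ η y ≤ 1) (hK : ∀ x ∈ K, η x = 1) {p : ℝ} (hp : 1 / (q - 1) ≤ p) :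
    ∃ D : ℝ, ∀ x t, 0 < t → u x t * (1 - heatPot N η x t) ^ p ≤ D := by
  have h1 : 0 < q - 1 := by linarith
  have hk0 : 0 < 1 / (q - 1) := by positivity
  obtain ⟨A, hA, hAt⟩ := KO_t N hq
  obtain ⟨A', hA', hAd⟩ := KO_d N hq
  obtain ⟨C, hC, hφC⟩ := phi_bd hη hc h01 hK
  set k := 1 / (q - 1) with hk
  have h2k : 2 / (q - 1) = 2 * k := by rw [hk]; ring
  rw [h2k] at hAd
  refine ⟨A' + A * (2 * C) ^ k + A' * (8 * C) ^ k, fun x t ht => ?_⟩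
  have p1 : 0 ≤ A * (2 * C) ^ k := by positivity
  have p2 : 0 ≤ A' * (8 * C) ^ k := by positivity
  obtain ⟨hφ0, hφ1⟩ := ph_01 hη.continuous hc h01 x ht
  set φ := 1 - heatPot N η x t with hφ
  have hpk : φ ^ p ≤ φ ^ k := Real.rpow_le_rpow_of_exponent_ge' hφ0 hφ1 hk0.le hp
  have hu0 : 0 < u x t := hu.2.1 x t ht
  rcases K.eq_empty_or_nonempty with hE | hne
  · have := hAd u K hu x t 1 ht one_pos (by rw [hE]; simp)
    rw [Real.one_rpow, mul_one] at this
    have h2 : φ ^ p ≤ 1 := Real.rpow_le_one hφ0 hφ1 (hk0.le.trans hp)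
    have h3 : u x t * φ ^ p ≤ u x t := mul_le_of_le_one_right hu0.le h2
    linarith
  obtain ⟨k0, hk0K, hmin⟩ := hKc.exists_isMinOn hne (f := fun z => ‖x - z‖) (by fun_prop)
  have hm : ∀ z ∈ K, ‖x - k0‖ ≤ ‖x - z‖ := fun z hz => hmin hz
  have hφb := hφC k0 hk0K x t ht
  have step : u x t * φ ^ p ≤ u x t * φ ^ k := by gcongr
  by_cases hcase : ‖x - k0‖ ^ 2 ≤ t
  · have h2 : φ ≤ 2 * C * t := by
      refine hφb.trans ?_
      nlinarith
    have h3 := hAt u K hu x t ht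
    have h4 : u x t * φ ^ k ≤ (A * t ^ (-k)) * (2 * C * t) ^ k := by gcongr
    have h5 : (A * t ^ (-k)) * (2 * C * t) ^ k = A * (2 * C) ^ k := by
      rw [Real.mul_rpow (by positivity) ht.le, Real.rpow_neg ht.le]
      have : t ^ k ≠ 0 := by positivity
      field_simp
    linarith
  · push Not at hcase
    have hd : 0 < ‖x - k0‖ := by
      by_contra hcon
      have : ‖x - k0‖ = 0 := le_antisymm (not_lt.1 hcon) (norm_nonneg _)
      rw [this] at hcase; norm_num at hcase; linarith
    set L := ‖x - k0‖ / 2 with hL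
    have hL0 : 0 < L := by positivity
    have h3 := hAd u K hu x t L ht hL0 (by
      intro z hz hzK
      have := hm z hzK
      rw [mem_closedBall, dist_eq_norm, norm_sub_rev] at hz
      linarith)
    have h2 : φ ≤ 8 * C * L ^ 2 := by
      refine hφb.trans ?_
      have : ‖x - k0‖ = 2 * L := by rw [hL]; ring
      rw [this] at hcase ⊢
      nlinarith
    have h4 : u x t * φ ^ k ≤ (A' * L ^ (-(2 * k))) * (8 * C * L ^ 2) ^ k := by gcongr
    have h5 : (A' * L ^ (-(2 * k))) * (8 * C * L ^ 2) ^ k = A' * (8 * C) ^ k := by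
      rw [Real.mul_rpow (by positivity) (by positivity), Real.rpow_neg hL0.le, ← Real.rpow_natCast L 2, ← Real.rpow_mul hL0.le]
      push_cast
      have : L ^ (2 * k) ≠ 0 := by positivity
      field_simp
    linarith

lemma init_pt (hq : 1 < q) (hu : IsSol N q u K) (hη : ContDiff ℝ 2 η) (hc : HasCompactSupport η)
    (h01 : ∀ y, 0 ≤ η y ∧ η y ≤ 1) (hK : ∀ x ∈ K, η x = 1) {p : ℝ} (hp : 1 / (q - 1) < p) (x : Euc N) :
    Tendsto (fun t => u x t * (1 - heatPot N η x t) ^ p) (nhdsWithin 0 (Ioi 0)) (nhds 0) := by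
  have h1 : 0 < q - 1 := by linarith
  have hk0 : 0 < 1 / (q - 1) := by positivity
  have hpos : ∀ t, 0 < t → 0 ≤ u x t * (1 - heatPot N η x t) ^ p := fun t ht => by
    have := (hu.2.1 x t ht).le
    have := (ph_01 hη.continuous hc h01 x ht).1
    positivity
  by_cases hx : x ∈ K
  · obtain ⟨A, hA, hAt⟩ := KO_t N hq
    obtain ⟨C, hC, hφC⟩ := phi_bd hη hc h01 hK
    set k := 1 / (q - 1) with hk
    have hlim : Tendsto (fun t : ℝ => A * C ^ p * t ^ (p - k)) (nhdsWithin 0 (Ioi 0)) (nhds 0) := by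
      have h := ((Real.continuous_rpow_const (q := p - k) (by linarith)).tendsto 0).const_mul (A * C ^ p)
      rw [Real.zero_rpow (by linarith), mul_zero] at h
      exact h.mono_left nhdsWithin_le_nhds
    refine squeeze_zero' (eventually_mem_nhdsWithin.mono fun t ht => hpos t ht)
      (eventually_mem_nhdsWithin.mono fun t ht => ?_) hlim
    have ht : 0 < t := ht
    have h2 := hφC x hx x t ht
    simp only [sub_self, norm_zero] at h2
    norm_num at h2
    have h2' : 1 - heatPot N η x t ≤ C * t := by linarith
    have h3 := hAt u K hu x t ht
    have h0 := (ph_01 hη.continuous hc h01 x ht).1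
    calc _ ≤ (A * t ^ (-k)) * (C * t) ^ p := by
          have := (hu.2.1 x t ht).le
          have : 0 ≤ p := by linarith
          gcongr
      _ = _ := by
          rw [Real.mul_rpow hC ht.le, sub_eq_add_neg, Real.rpow_add ht]; ring
  · rw [Metric.tendsto_nhdsWithin_nhds]
    intro ε hε
    obtain ⟨δ, hδ, hs⟩ := trace_small hu (E := {x}) isCompact_singleton (by simpa using hx) (half_pos hε)
    refine ⟨δ, hδ, fun t ht htd => ?_⟩
    have ht : 0 < t := ht
    rw [Real.dist_eq, sub_zero, abs_of_pos ht] at htd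
    rw [Real.dist_eq, sub_zero, abs_of_nonneg (hpos t ht)]
    have h2 := hs t ht htd x rfl
    obtain ⟨h3, h4⟩ := ph_01 hη.continuous hc h01 x ht
    have h5 : (1 - heatPot N η x t) ^ p ≤ 1 := Real.rpow_le_one h3 h4 (by linarith)
    have := mul_le_of_le_one_right (hu.2.1 x t ht).le h5
    linarith

lemma init_lim (hq : 1 < q) (hu : IsSol N q u K) (hKc : IsCompact K) (hη : ContDiff ℝ 2 η) (hc : HasCompactSupport η)
    (h01 : ∀ y, 0 ≤ η y ∧ η y ≤ 1) (hK : ∀ x ∈ K, η x = 1) {p : ℝ} (hp : 1 / (q - 1) < p) {n : ℕ} (hn : 1 ≤ n) :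
    Tendsto (fun t => ∫ x, u x t * (1 - heatPot N η x t) ^ p * chi N n x) (nhdsWithin 0 (Ioi 0)) (nhds 0) := by
  have h1 : 0 < q - 1 := by linarith
  have hk0 : 0 < 1 / (q - 1) := by positivity
  obtain ⟨D, hD⟩ := init_bd hq hu hKc hη hc h01 hK hp.le
  have h := tendsto_integral_filter_of_dominated_convergence (μ := (volume : Measure (Euc N)))
    (l := nhdsWithin (0:ℝ) (Ioi 0)) (F := fun t x => u x t * (1 - heatPot N η x t) ^ p * chi N n x)
    (f := fun _ => 0) (fun x => D * chi N n x) ?_ ?_ ?_ ?_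
  · simpa using h
  · refine eventually_mem_nhdsWithin.mono fun t ht => ?_
    have ht : 0 < t := ht
    refine Continuous.aestronglyMeasurable ?_
    exact ((sol_x hu ht).continuous.mul ((continuous_const.sub (hp_cd (n := 2) hη hc ht).continuous).rpow_const
      (fun x => Or.inr (by linarith)))).mul (chi_cd n).continuous
  · refine eventually_mem_nhdsWithin.mono fun t ht => Eventually.of_forall fun x => ?_
    have ht : 0 < t := ht
    have h0 := (hu.2.1 x t ht).le
    have h0' := (ph_01 hη.continuous hc h01 x ht).1
    have h3 := (chi_01 n x).1
    rw [Real.norm_of_nonneg (by positivity)]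
    exact mul_le_mul_of_nonneg_right (hD x t ht) h3
  · exact ((chi_cd n).continuous.integrable_of_hasCompactSupport (chi_hcs hn)).const_mul D
  · refine Eventually.of_forall fun x => ?_
    simpa using (init_pt hq hu hη hc h01 hK hp x).mul_const (chi N n x)

lemma Rnorm_nonneg : 0 ≤ Rnorm N q η := by
  rw [Rnorm_eq]
  refine integral_nonneg fun t => integral_nonneg fun x => ?_
  have := RR_nonneg (η := η) x t
  positivity

lemma phase1 (hN : 1 ≤ N) (hq : 1 < q) (hu : IsSol N q u K) (hKc : IsCompact K) {r ρ : ℝ} (hr : 0 < r) (hρ : 0 < ρ)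
    (hKr : K ⊆ ball (0 : Euc N) r) (hη : ContDiff ℝ 2 η) (hc : HasCompactSupport η)
    (hs : tsupport η ⊆ ball (0 : Euc N) (r + ρ))
    (h01 : ∀ y, 0 ≤ η y ∧ η y ≤ 1) (hK : ∀ x ∈ K, η x = 1) {p : ℝ} (hp : p = 2 * (q / (q - 1))) :
    ∃ e : ℕ → ℝ, Tendsto e atTop (nhds 0) ∧ ∀ n : ℕ, 1 ≤ n → r < n →
      (1 - π ^ (-(1:ℝ) / 2)) ^ p * ∫ x, u x ((r + ρ) ^ 2) * chi N n x ≤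
        B0 N p ^ (q / (q - 1)) * Rnorm N q η + e n := by
  have h1 : 0 < q - 1 := by linarith
  have hq' : 1 < q / (q - 1) := by rw [lt_div_iff₀ h1]; linarith
  have hp2 : 2 < p := by linarith
  have hpk : 1 / (q - 1) < p := by
    rw [hp, ← mul_div_assoc]; gcongr; linarith
  have hB : 0 ≤ B0 N p := by
    unfold B0
    have : 0 ≤ p - 1 := by linarith
    positivity
  have hR : 0 < r + ρ := by linarith
  set s := (r + ρ) ^ 2 with hsd
  have hs0 : 0 < s := by positivity
  obtain ⟨err, herr, hen⟩ := energy hq hu hr hKr hs0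
  obtain ⟨M, hM1, hM⟩ := Phi_fd hη hc h01 hp2
  refine ⟨fun n => M * err n, by simpa using herr.const_mul M, fun n hn hrn => ?_⟩
  set Cq := B0 N p ^ (q / (q - 1)) with hCq
  have hCq0 : 0 ≤ Cq := by positivity
  have hPhi : ContDiffOn ℝ 2 (fun z : Euc N × ℝ => (1 - heatPot N η z.1 z.2) ^ p) (univ ×ˢ Ioi 0) := by
    have := (contDiffOn_const (c := (1:ℝ))).sub (hp_cdOn (n := 2) hη hc)
    exact ContDiffOn.rpow_const_of_le (m := 2) (by exact_mod_cast this) (by push_cast; linarith)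
  have hE : ∀ a, 0 < a → a ≤ s → ∫ x, u x s * (1 - heatPot N η x s) ^ p * chi N n x ≤
      (∫ x, u x a * (1 - heatPot N η x a) ^ p * chi N n x) + Cq * Rnorm N q η + M * err n := by
    intro a ha has
    obtain ⟨hI, hle⟩ := RR_le hq hη hc h01 ha has
    have := hen M a s (Ioi 0) (fun x t => (1 - heatPot N η x t) ^ p) (fun x t => Cq * RR N η x t ^ (q / (q - 1)))
      (by linarith) ha has le_rfl isOpen_Ioi subset_rfl (fun t ht => ha.trans_le ht.1) hPhi
      (fun x t ht => by
        obtain ⟨h3, h4⟩ := ph_01 hη.continuous hc h01 x (ha.trans_le ht.1)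
        rw [abs_of_nonneg (by positivity)]
        exact (Real.rpow_le_one h3 h4 (by linarith)).trans hM1)
      (fun x t ht i => hM x t (ha.trans_le ht.1) i)
      (fun x t => by have := RR_nonneg (η := η) x t; positivity)
      (fun t ht => (RR_x hη hc hq'.le (ha.trans_le ht.1)).const_mul Cq)
      (by simp_rw [integral_const_mul]; exact hI.const_mul Cq)
      (fun x t ht => Phi_ineq hq hη hc h01 hp x (ha.trans_le ht.1) (hu.2.1 x t (ha.trans_le ht.1)))
      n hn hrn
    simp_rw [integral_const_mul] at this
    rw [intervalIntegral.integral_const_mul] at this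
    have h2 := mul_le_mul_of_nonneg_left hle hCq0
    linarith
  have hlim := init_lim hq hu hKc hη hc h01 hK hpk hn
  have hlim2 := (hlim.add_const (Cq * Rnorm N q η)).add_const (M * err n)
  have hfin : ∫ x, u x s * (1 - heatPot N η x s) ^ p * chi N n x ≤ Cq * Rnorm N q η + M * err n := by
    have := ge_of_tendsto hlim2 (b := ∫ x, u x s * (1 - heatPot N η x s) ^ p * chi N n x) (by
      have hm : Ioc 0 s ∈ nhdsWithin (0:ℝ) (Ioi 0) := Ioc_mem_nhdsGT hs0
      filter_upwards [hm] with a ha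
      exact hE a ha.1 ha.2)
    linarith
  refine le_trans ?_ hfin
  rw [← integral_const_mul]
  have hcu := (sol_x hu hs0).continuous
  have hcc := (chi_cd (N := N) n).continuous
  have hpi : π ^ (-(1:ℝ) / 2) ≤ 1 := by
    refine Real.rpow_le_one_of_one_le_of_nonpos (by linarith [Real.pi_gt_three]) (by norm_num)
  refine integral_mono ?_ ?_ fun x => ?_
  · exact ((hcu.mul hcc).integrable_of_hasCompactSupport ((chi_hcs hn).mul_left)).const_mul _
  · refine Continuous.integrable_of_hasCompactSupport ?_ ((chi_hcs hn).mul_left)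
    exact (hcu.mul ((continuous_const.sub (hp_cd (n := 2) hη hc hs0).continuous).rpow_const
      (fun x => Or.inr (by linarith)))).mul hcc
  · have hl := phi_low hN hη.continuous h01 hR hs x
    have h0 := (hu.2.1 x s hs0).le
    have h3 := (chi_01 n x).1
    have h4 : (1 - π ^ (-(1:ℝ) / 2)) ^ p ≤ (1 - heatPot N η x s) ^ p :=
      Real.rpow_le_rpow (by linarith) (by linarith) (by linarith)
    calc (1 - π ^ (-(1:ℝ) / 2)) ^ p * (u x s * chi N n x) ≤ (1 - heatPot N η x s) ^ p * (u x s * chi N n x) := by gcongr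
      _ = _ := by ring

end ph1b

theorem stmt12 (N : ℕ) (hN : 1 ≤ N) (q : ℝ) (hq : 1 < q) :
    ∃ C : ℝ, 0 < C ∧
      ∀ r ρ : ℝ, 0 < r → 0 < ρ →
        ∀ K : Set (Euc N), IsCompact K → K ⊆ Metric.ball (0 : Euc N) r →
          ∀ η : Euc N → ℝ, TestFun N r ρ K η →
            ∀ u : Euc N → ℝ → ℝ, IsSol N q u K →
              ∀ x : Euc N,
                u x ((r + 2 * ρ) ^ 2) ≤
                  C * Rnorm N q η / (ρ * (r + ρ)) ^ ((N : ℝ) / 2) := by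
  have h1 : 0 < q - 1 := by linarith
  have hq' : 1 < q / (q - 1) := by rw [lt_div_iff₀ h1]; linarith
  set p := 2 * (q / (q - 1)) with hp
  have hp2 : 2 < p := by linarith
  have hB : 0 < B0 N p := by
    unfold B0
    have : 0 ≤ p - 1 := by linarith
    positivity
  have hpi : π ^ (-(1:ℝ) / 2) < 1 :=
    Real.rpow_lt_one_of_one_lt_of_neg (by linarith [Real.pi_gt_three]) (by norm_num)
  set c0 := (1 - π ^ (-(1:ℝ) / 2)) ^ p with hc0
  have hc0p : 0 < c0 := Real.rpow_pos_of_pos (by linarith) _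
  set Cq := B0 N p ^ (q / (q - 1)) with hCq
  have hCq0 : 0 < Cq := by positivity
  refine ⟨4 * (c0⁻¹ * Cq), by positivity, ?_⟩
  intro r ρ hr hρ K hKc hKr η ⟨hη', hc, hs, h01, hK⟩ u hu x
  have hη : ContDiff ℝ 2 η := hη'.of_le (WithTop.coe_le_coe.2 (le_top (a := (2 : ℕ∞))))
  obtain ⟨e, he, hA⟩ := phase1 hN hq hu hKc hr hρ hKr hη hc hs h01 hK hp
  have hRn : 0 ≤ Rnorm N q η := Rnorm_nonneg
  have hmain := phase2 hq hu hr hKr (s := (r + ρ) ^ 2) (T := (r + 2 * ρ) ^ 2) (A := c0⁻¹ * (Cq * Rnorm N q η))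
    (e := fun n => c0⁻¹ * e n) (by positivity) (by nlinarith) (by simpa using he.const_mul c0⁻¹)
    (fun n hn hrn => by
      have := hA n hn hrn
      rw [← mul_add, ← div_eq_inv_mul, le_div_iff₀ hc0p, mul_comm]
      exact this) x
  refine hmain.trans ?_
  have hX : 0 < ρ * (r + ρ) := by positivity
  have hle : (4 * π * ((r + 2 * ρ) ^ 2 - (r + ρ) ^ 2)) ^ (-(N:ℝ) / 2) ≤ (ρ * (r + ρ)) ^ (-(N:ℝ) / 2) := by
    refine Real.rpow_le_rpow_of_nonpos hX ?_ (by rw [neg_div]; simp only [Left.neg_nonpos_iff]; positivity)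
    have h3 := Real.pi_gt_three
    have h4 : ρ * (r + ρ) ≤ (r + 2 * ρ) ^ 2 - (r + ρ) ^ 2 := by nlinarith
    nlinarith
  have e1 : (ρ * (r + ρ)) ^ (-(N:ℝ) / 2) = ((ρ * (r + ρ)) ^ ((N:ℝ) / 2))⁻¹ := by
    rw [neg_div, Real.rpow_neg hX.le]
  rw [e1] at hle
  calc _ ≤ 4 * ((ρ * (r + ρ)) ^ ((N:ℝ) / 2))⁻¹ * (c0⁻¹ * (Cq * Rnorm N q η)) := by gcongr
    _ = _ := by rw [div_eq_mul_inv]; ring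

end
end

section
/- (I) Let M, a > 0 and let η ∈ L^∞(ℝ^N) satisfy 0 ≤ η(x) ≤ M e^{−a|x|²} for a.e. x ∈ ℝ^N. Then for every t > 0 and x ∈ ℝ^N: 0 ≤ ℍ[η](x,t) ≤ M (4at+1)^{−N/2} e^{−a|x|²/(4at+1)}. (II) Let M, a, b > 0; then there exists C = C(N,a,b) > 0 such that if η ∈ L^∞(ℝ^N) satisfies 0 ≤ η(x) ≤ M e^{−a((|x|−b)₊)²} for a.e. x, then 0 ≤ ℍ[η](x,t) ≤ C M (4at+1)^{−N/2} e^{−a((|x|−b)₊)²/(4at+1)} for every t > 0 and x ∈ ℝ^N, where (r)₊ = max{r,0}. -/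
open MeasureTheory Real Set Filter Metric

noncomputable section

lemma aux_gauss_integrable (N : ℕ) (c : ℝ) (hc : 0 < c) :
    Integrable (fun y : Euc N => Real.exp (-c * ‖y‖ ^ 2)) := by
  have h := GaussianFourier.integrable_cexp_neg_mul_sq_norm_add (V := Euc N) (b := (c : ℂ))
    (by simpa using hc) 0 0
  have h2 := h.norm
  refine h2.congr (Filter.Eventually.of_forall fun y => ?_)
  simp [Complex.norm_exp, ← Complex.ofReal_pow]

lemma aux_gauss (N : ℕ) (c : ℝ) (hc : 0 < c) :
    ∫ y : Euc N, Real.exp (-c * ‖y‖ ^ 2) = (π / c) ^ ((N : ℝ) / 2) := by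
  have := GaussianFourier.integral_rexp_neg_mul_sq_norm (V := Euc N) hc
  simpa using this

lemma aux_heat (N : ℕ) (η : Euc N → ℝ) (x z : Euc N) (t A c : ℝ) (ht : 0 < t) (hc : 0 < c)
    (h0 : ∀ᵐ y : Euc N, 0 ≤ η y)
    (h1 : ∀ᵐ y : Euc N, Real.exp (-‖x - y‖ ^ 2 / (4 * t)) * η y
      ≤ A * Real.exp (-c * ‖y - z‖ ^ 2)) :
    0 ≤ heatPot N η x t ∧
      heatPot N η x t ≤ (4 * π * t) ^ (-(N : ℝ) / 2) * A * (π / c) ^ ((N : ℝ) / 2) := by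
  have hk : 0 < (4 * π * t) ^ (-(N : ℝ) / 2) := by positivity
  have hnn : ∀ᵐ y : Euc N,
      0 ≤ (4 * π * t) ^ (-(N : ℝ) / 2) * Real.exp (-‖x - y‖ ^ 2 / (4 * t)) * η y := by
    filter_upwards [h0] with y hy
    positivity
  refine ⟨integral_nonneg_of_ae hnn, ?_⟩
  have hi : Integrable (fun y : Euc N => (4 * π * t) ^ (-(N : ℝ) / 2) * A *
      Real.exp (-c * ‖y - z‖ ^ 2)) :=
    ((aux_gauss_integrable N c hc).comp_sub_right z).const_mul _
  have := integral_mono_of_nonneg (μ := volume) hnn hi (by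
    filter_upwards [h1] with y hy
    have := mul_le_mul_of_nonneg_left hy hk.le
    linarith)
  refine this.trans_eq ?_
  rw [integral_const_mul, integral_sub_right_eq_self (fun y : Euc N => Real.exp (-c * ‖y‖ ^ 2)) z,
    aux_gauss N c hc]

lemma aux_lemA (N : ℕ) (y p : Euc N) (b s : ℝ) (hb : 0 < b) (hs : ‖p‖ = s) :
    max (‖y - p‖ - b) 0 ^ 2 ≤
      max (‖y‖ - b) 0 ^ 2 + 2 * b * s - 2 * inner ℝ y p + s ^ 2 := by
  have h1 : ‖y - p‖ ^ 2 = ‖y‖ ^ 2 - 2 * inner ℝ y p + ‖p‖ ^ 2 := norm_sub_sq_real y p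
  have h2 : inner ℝ y p ≤ ‖y‖ * ‖p‖ := real_inner_le_norm y p
  have h3 : ‖y‖ ≤ ‖y - p‖ + ‖p‖ := by simpa using norm_add_le (y - p) p
  have h4 : ‖y - p‖ ≤ ‖y‖ + ‖p‖ := norm_sub_le y p
  have hp := norm_nonneg p
  have hy := norm_nonneg y
  have hw := norm_nonneg (y - p)
  rw [hs] at *
  generalize inner ℝ y p = i at *
  generalize ‖y - p‖ = w at *
  generalize ‖y‖ = r at *
  rcases le_total (w - b) 0 with hwb | hwb <;> rcases le_total (r - b) 0 with hrb | hrb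
  · rw [max_eq_right hwb, max_eq_right hrb]
    nlinarith
  · rw [max_eq_right hwb, max_eq_left hrb]
    nlinarith [sq_nonneg (r - b - s)]
  · rw [max_eq_left hwb, max_eq_right hrb]
    nlinarith
  · rw [max_eq_left hwb, max_eq_left hrb]
    nlinarith

lemma aux_key (N : ℕ) (x : Euc N) (a b t : ℝ) (ha : 0 < a) (hb : 0 < b) (ht : 0 < t) :
    ∃ p : Euc N, ∀ y : Euc N,
      a * max (‖x‖ - b) 0 ^ 2 / (4 * a * t + 1) + ‖y - (x - (4 * a * t) • p)‖ ^ 2 / (4 * t)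
        + a * max (‖y - p‖ - b) 0 ^ 2 ≤ ‖x - y‖ ^ 2 / (4 * t) + a * max (‖y‖ - b) 0 ^ 2 := by
  have hl : 0 < 4 * a * t + 1 := by positivity
  rcases le_total (‖x‖ - b) 0 with hx | hx
  · refine ⟨0, fun y => ?_⟩
    rw [max_eq_right hx]
    simp [norm_sub_rev x y]
  · set s := (‖x‖ - b) / (4 * a * t + 1) with hsdef
    have hR : 0 < ‖x‖ := by linarith
    have hs0 : 0 ≤ s := by positivity
    have hxs : ‖x‖ = b + (4 * a * t + 1) * s := by rw [hsdef]; field_simp; ring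
    refine ⟨(s / ‖x‖) • x, fun y => ?_⟩
    set p := (s / ‖x‖) • x with hp
    have hps : ‖p‖ = s := by
      rw [hp, norm_smul, Real.norm_of_nonneg (by positivity)]; field_simp
    have hxp : inner ℝ x p = ‖x‖ * s := by
      rw [hp, inner_smul_right, real_inner_self_eq_norm_sq]; field_simp
    have hA := aux_lemA N y p b s hb hps
    have e1 : ‖y - (x - (4 * a * t) • p)‖ ^ 2 =
        ‖x - y‖ ^ 2 - 2 * (4 * a * t) * (inner ℝ x p - inner ℝ y p) + (4 * a * t) ^ 2 * s ^ 2 := by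
      have : y - (x - (4 * a * t) • p) = -((x - y) - (4 * a * t) • p) := by abel
      rw [this, norm_neg, norm_sub_sq_real, inner_smul_right, inner_sub_left, norm_smul, mul_pow,
        hps, Real.norm_eq_abs, sq_abs]
      ring
    rw [max_eq_left hx, e1, hxp]
    have e2 : ‖x‖ - b = (4 * a * t + 1) * s := by linarith
    rw [e2, hxs]
    have e3 : a * ((4 * a * t + 1) * s) ^ 2 / (4 * a * t + 1) = a * ((4 * a * t + 1) * s ^ 2) := by
      field_simp
    have e4 : (‖x - y‖ ^ 2 - 2 * (4 * a * t) * ((b + (4 * a * t + 1) * s) * s - inner ℝ y p)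
        + (4 * a * t) ^ 2 * s ^ 2) / (4 * t) = ‖x - y‖ ^ 2 / (4 * t)
        - 2 * a * ((b + (4 * a * t + 1) * s) * s - inner ℝ y p) + 4 * a ^ 2 * t * s ^ 2 := by
      field_simp
    rw [e3, e4]
    have := mul_le_mul_of_nonneg_left hA ha.le
    linarith

lemma aux_rpow (N : ℕ) (u v w : ℝ) (hu : 0 < u) (hv : 0 < v) (hw : 0 < w) (h : w * v ≤ u) :
    w ^ ((N : ℝ) / 2) * u ^ (-(N : ℝ) / 2) ≤ v ^ (-(N : ℝ) / 2) := by
  have e : -(N : ℝ) / 2 = -((N : ℝ) / 2) := by ring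
  rw [e, Real.rpow_neg hu.le, Real.rpow_neg hv.le, ← div_eq_mul_inv, div_le_iff₀ (by positivity),
    inv_mul_eq_div, le_div_iff₀ (by positivity), ← Real.mul_rpow hw.le hv.le]
  exact Real.rpow_le_rpow (by positivity) h (by positivity)

/-- Lemma 2.16: Gaussian upper bounds propagated by the heat potential. -/
theorem stmt13 (N : ℕ) :
    (∀ M a : ℝ, 0 < M → 0 < a →
      ∀ η : Euc N → ℝ, Measurable η →
        (∀ᵐ x : Euc N, 0 ≤ η x ∧ η x ≤ M * Real.exp (-a * ‖x‖ ^ 2)) →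
        ∀ (x : Euc N) (t : ℝ), 0 < t →
          0 ≤ heatPot N η x t ∧
            heatPot N η x t ≤
              M * (4 * a * t + 1) ^ (-(N : ℝ) / 2) *
                Real.exp (-a * ‖x‖ ^ 2 / (4 * a * t + 1))) ∧
    (∀ M a b : ℝ, 0 < M → 0 < a → 0 < b →
      ∃ C : ℝ, 0 < C ∧
        ∀ η : Euc N → ℝ, Measurable η →
          (∀ᵐ x : Euc N, 0 ≤ η x ∧ η x ≤ M * Real.exp (-a * max (‖x‖ - b) 0 ^ 2)) →
          ∀ (x : Euc N) (t : ℝ), 0 < t →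
            0 ≤ heatPot N η x t ∧
              heatPot N η x t ≤
                C * M * (4 * a * t + 1) ^ (-(N : ℝ) / 2) *
                  Real.exp (-a * max (‖x‖ - b) 0 ^ 2 / (4 * a * t + 1))) := by
  constructor
  · intro M a hM ha η _ hη x t ht
    have hl : 0 < 4 * a * t + 1 := by positivity
    have := aux_heat N η x ((4 * a * t + 1)⁻¹ • x) t
      (M * Real.exp (-a * ‖x‖ ^ 2 / (4 * a * t + 1))) ((4 * a * t + 1) / (4 * t)) ht (by positivity)
      (hη.mono fun y hy => hy.1) (by
        filter_upwards [hη] with y hy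
        refine (mul_le_mul_of_nonneg_left hy.2 (Real.exp_pos _).le).trans_eq ?_
        rw [mul_left_comm, ← Real.exp_add, mul_assoc, ← Real.exp_add]
        congr 2
        rw [norm_sub_sq_real, norm_sub_sq_real, inner_smul_right, norm_smul, mul_pow,
          Real.norm_eq_abs, sq_abs, real_inner_comm]
        field_simp
        ring)
    refine ⟨this.1, this.2.trans ?_⟩
    have := aux_rpow N (4 * π * t) (4 * a * t + 1) (π / ((4 * a * t + 1) / (4 * t)))
      (by positivity) (by positivity) (by positivity) (by field_simp; rfl)
    have h2 := mul_le_mul_of_nonneg_left this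
      (show 0 ≤ M * Real.exp (-a * ‖x‖ ^ 2 / (4 * a * t + 1)) by positivity)
    linarith
  · intro M a b hM ha hb
    set K := Real.exp (a * b ^ 2) * (4 : ℝ) ^ ((N : ℝ) / 2) with hK
    have hKpos : 0 < K := by positivity
    refine ⟨(2 : ℝ) ^ ((N : ℝ) / 2) + K, by positivity, ?_⟩
    intro η _ hη x t ht
    have hl : 0 < 4 * a * t + 1 := by positivity
    obtain ⟨p, hp⟩ := aux_key N x a b t ha hb ht
    set G := Real.exp (-a * max (‖x‖ - b) 0 ^ 2 / (4 * a * t + 1)) with hG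
    have hGpos : 0 < G := Real.exp_pos _
    have H1 := aux_heat N η x (x - (4 * a * t) • p) t (M * G) (1 / (4 * t)) ht (by positivity)
      (hη.mono fun y hy => hy.1) (by
        filter_upwards [hη] with y hy
        refine (mul_le_mul_of_nonneg_left hy.2 (Real.exp_pos _).le).trans ?_
        rw [mul_left_comm, ← Real.exp_add, mul_assoc, ← Real.exp_add]
        refine mul_le_mul_of_nonneg_left (Real.exp_le_exp.2 ?_) hM.le
        have h1 := hp y
        have h2 : 0 ≤ a * max (‖y - p‖ - b) 0 ^ 2 := by positivity
        have e1 : -a * max (‖x‖ - b) 0 ^ 2 / (4 * a * t + 1)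
          = -(a * max (‖x‖ - b) 0 ^ 2 / (4 * a * t + 1)) := by ring
        have e2 : -‖x - y‖ ^ 2 / (4 * t) = -(‖x - y‖ ^ 2 / (4 * t)) := by ring
        have e3 : -(1 / (4 * t)) * ‖y - (x - (4 * a * t) • p)‖ ^ 2
          = -(‖y - (x - (4 * a * t) • p)‖ ^ 2 / (4 * t)) := by ring
        rw [e1, e2, e3]
        linarith)
    have H2 := aux_heat N η x p t (M * G * Real.exp (a * b ^ 2)) (a / 2) ht (by positivity)
      (hη.mono fun y hy => hy.1) (by
        filter_upwards [hη] with y hy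
        refine (mul_le_mul_of_nonneg_left hy.2 (Real.exp_pos _).le).trans ?_
        rw [mul_left_comm, ← Real.exp_add, mul_assoc, mul_assoc, ← Real.exp_add, ← Real.exp_add]
        refine mul_le_mul_of_nonneg_left (Real.exp_le_exp.2 ?_) hM.le
        have h1 := hp y
        have h2 : 0 ≤ ‖y - (x - (4 * a * t) • p)‖ ^ 2 / (4 * t) := by positivity
        have e1 : -a * max (‖x‖ - b) 0 ^ 2 / (4 * a * t + 1)
          = -(a * max (‖x‖ - b) 0 ^ 2 / (4 * a * t + 1)) := by ring
        have e2 : -‖x - y‖ ^ 2 / (4 * t) = -(‖x - y‖ ^ 2 / (4 * t)) := by ring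
        have h3 : ‖y - p‖ ^ 2 ≤ 2 * max (‖y - p‖ - b) 0 ^ 2 + 2 * b ^ 2 := by
          have := le_max_left (‖y - p‖ - b) 0
          have h0 := le_max_right (‖y - p‖ - b) 0
          nlinarith [norm_nonneg (y - p), sq_nonneg (max (‖y - p‖ - b) 0 - b)]
        have h4 := mul_le_mul_of_nonneg_left h3 ha.le
        rw [e1, e2]
        linarith)
    refine ⟨H1.1, ?_⟩
    have hlp : 0 < (4 * a * t + 1) ^ (-(N : ℝ) / 2) := by positivity
    rcases le_total (4 * a * t) 1 with hat | hat
    · have hc := aux_rpow N (4 * π * t) ((4 * a * t + 1) / 2) (π / (1 / (4 * t)))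
        (by positivity) (by positivity) (by positivity) (by
          have : 0 < 4 * π * t := by positivity
          have e : π / (1 / (4 * t)) = 4 * π * t := by field_simp
          rw [e]; nlinarith)
      have e : ((4 * a * t + 1) / 2) ^ (-(N : ℝ) / 2)
          = 2 ^ ((N : ℝ) / 2) * (4 * a * t + 1) ^ (-(N : ℝ) / 2) := by
        rw [Real.div_rpow hl.le (by norm_num), neg_div, Real.rpow_neg (by norm_num : (0:ℝ) ≤ 2)]
        field_simp
      rw [e] at hc
      have h2 := mul_le_mul_of_nonneg_left hc (show 0 ≤ M * G by positivity)
      have h3 : 0 ≤ K * M * (4 * a * t + 1) ^ (-(N : ℝ) / 2) * G := by positivity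
      refine H1.2.trans ?_
      linarith
    · have hc := aux_rpow N (4 * π * t) ((4 * a * t + 1) / 4) (π / (a / 2))
        (by positivity) (by positivity) (by positivity) (by
          have e : π / (a / 2) * ((4 * a * t + 1) / 4) = π * (4 * a * t + 1) / (2 * a) := by
            field_simp; ring
          rw [e, div_le_iff₀ (by positivity)]
          nlinarith [Real.pi_pos])
      have e : ((4 * a * t + 1) / 4) ^ (-(N : ℝ) / 2)
          = 4 ^ ((N : ℝ) / 2) * (4 * a * t + 1) ^ (-(N : ℝ) / 2) := by
        rw [Real.div_rpow hl.le (by norm_num), neg_div, Real.rpow_neg (by norm_num : (0:ℝ) ≤ 4)]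
        field_simp
      rw [e] at hc
      have h2 := mul_le_mul_of_nonneg_left hc (show 0 ≤ M * G * Real.exp (a * b ^ 2) by positivity)
      have h3 : 0 ≤ 2 ^ ((N : ℝ) / 2) * M * (4 * a * t + 1) ^ (-(N : ℝ) / 2) * G := by positivity
      refine H2.2.trans ?_
      rw [hK]
      linarith

end
end

section
/- Let N ≥ 1 be an integer and let 0 < a < b and t > 0. Then sup{ σ^{−N/2} e^{−ρ²/(4σ)} : ρ ≥ 0, 0 < σ ≤ t, at ≤ ρ² + σ ≤ bt } = e^{1/4} t^{−N/2} e^{−a/4} if a > 2N, and = e^{1/4} (2N/(at))^{N/2} e^{−N/2} if a ≤ 2N; moreover the supremum is attained. -/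
open MeasureTheory Real Set Filter Metric

noncomputable section

/-- Lemma 3.3: the exact supremum of `σ^{-N/2} e^{-ρ²/(4σ)}` on the region
`{ρ ≥ 0, 0 < σ ≤ t, at ≤ ρ² + σ ≤ bt}`, attained. -/
theorem stmt15 (N : ℕ) (hN : 1 ≤ N) (a b t : ℝ) (ha : 0 < a) (hab : a < b) (ht : 0 < t) :
    IsGreatest
      {v : ℝ | ∃ ρ σ : ℝ, 0 ≤ ρ ∧ 0 < σ ∧ σ ≤ t ∧
        a * t ≤ ρ ^ 2 + σ ∧ ρ ^ 2 + σ ≤ b * t ∧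
        v = σ ^ (-(N : ℝ) / 2) * Real.exp (-ρ ^ 2 / (4 * σ))}
      (if 2 * (N : ℝ) < a then Real.exp (1 / 4) * t ^ (-(N : ℝ) / 2) * Real.exp (-a / 4)
       else Real.exp (1 / 4) * (2 * (N : ℝ) / (a * t)) ^ ((N : ℝ) / 2) *
              Real.exp (-(N : ℝ) / 2)) := by
  have hN1 : (1 : ℝ) ≤ N := by exact_mod_cast hN
  have hat : 0 < a * t := mul_pos ha ht
  have hbt : a * t ≤ b * t := by nlinarith
  split_ifs with h
  · constructor
    · refine ⟨Real.sqrt (a * t - t), t, Real.sqrt_nonneg _, ht, le_rfl, ?_⟩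
      have h0 : 0 ≤ a * t - t := by nlinarith
      rw [Real.sq_sqrt h0]
      refine ⟨by linarith, by linarith, ?_⟩
      have e : -(a * t - t) / (4 * t) = 1 / 4 + -a / 4 := by
        field_simp
        ring
      rw [e, Real.exp_add]
      ring
    · rintro v ⟨ρ, σ, hρ, hσ, hσt, h1, h2, rfl⟩
      rw [Real.rpow_def_of_pos hσ, Real.rpow_def_of_pos ht, ← Real.exp_add, ← Real.exp_add,
        ← Real.exp_add]
      apply Real.exp_le_exp.mpr
      have k1 : -ρ ^ 2 / (4 * σ) ≤ 1 / 4 - a / 4 * (t / σ) := by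
        have : 1 / 4 - a / 4 * (t / σ) = (σ - a * t) / (4 * σ) := by
          field_simp
        rw [this]
        gcongr
        linarith
      have k2 := Real.log_le_sub_one_of_pos (div_pos ht hσ)
      have k3 : 1 ≤ t / σ := (one_le_div hσ).mpr hσt
      have k4 : Real.log (t / σ) = Real.log t - Real.log σ := Real.log_div ht.ne' hσ.ne'
      rw [k4] at k2
      have k5 : (N : ℝ) / 2 * (Real.log t - Real.log σ) ≤ N / 2 * (t / σ - 1) := by gcongr
      have k6 : (N : ℝ) / 2 * (t / σ - 1) ≤ a / 4 * (t / σ - 1) :=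
        mul_le_mul_of_nonneg_right (by linarith) (by linarith)
      linarith
  · push Not at h
    have hc : 0 < 2 * (N : ℝ) / (a * t) := by positivity
    constructor
    · have hs : 0 < a * t / (2 * N) := by positivity
      have hs1 : a * t / (2 * N) ≤ a * t := div_le_self hat.le (by linarith)
      refine ⟨Real.sqrt (a * t - a * t / (2 * N)), a * t / (2 * N), Real.sqrt_nonneg _, hs, ?_, ?_⟩
      · rw [div_le_iff₀ (by positivity)]
        nlinarith
      rw [Real.sq_sqrt (by linarith)]
      refine ⟨by linarith, by linarith, ?_⟩
      have e : -(a * t - a * t / (2 * N)) / (4 * (a * t / (2 * N))) = 1 / 4 + -(N : ℝ) / 2 := by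
        field_simp
        ring
      have e2 : a * t / (2 * N) = (2 * (N : ℝ) / (a * t))⁻¹ := by rw [inv_div]
      rw [e, Real.exp_add, e2, Real.inv_rpow hc.le, ← Real.rpow_neg hc.le]
      rw [show -(-(N : ℝ) / 2) = N / 2 by ring]
      ring
    · rintro v ⟨ρ, σ, hρ, hσ, hσt, h1, h2, rfl⟩
      rw [Real.rpow_def_of_pos hσ, Real.rpow_def_of_pos hc, ← Real.exp_add, ← Real.exp_add,
        ← Real.exp_add]
      apply Real.exp_le_exp.mpr
      have k1 : -ρ ^ 2 / (4 * σ) ≤ 1 / 4 - N / 2 * ((2 * (N : ℝ) / (a * t))⁻¹ / σ) := by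
        have : 1 / 4 - N / 2 * ((2 * (N : ℝ) / (a * t))⁻¹ / σ) = (σ - a * t) / (4 * σ) := by
          field_simp
          ring
        rw [this]
        gcongr
        linarith
      have hci := inv_pos.mpr hc
      have k2 := Real.log_le_sub_one_of_pos (div_pos hci hσ)
      rw [Real.log_div hci.ne' hσ.ne', Real.log_inv] at k2
      have k5 := mul_le_mul_of_nonneg_left k2 (by positivity : (0 : ℝ) ≤ N / 2)
      linarith

end
end

section
/- Let a > 0, b ∈ ℝ and κ > 0. Then there exists a constant C = C(a,b,κ) > 0 such that for all A > 0 and all B > κ/A: ∫_0^1 (1−x)^{−a} x^{−b} e^{−A²/(4(1−x))} e^{−B²/(4x)} dx ≤ C e^{−(A+B)²/4} A^{1−a} B^{1−b} (A+B)^{a+b−2}. -/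
open MeasureTheory Real Set Filter Metric

noncomputable section

theorem aux_int (p k : ℝ) (hk : 0 < k) :
    IntegrableOn (fun y : ℝ => y ^ p * Real.exp (-(k * (y - 2 + 1 / y)))) (Set.Ioi 0) := by
  obtain ⟨n, hn⟩ := exists_nat_gt (-1 - p)
  have h1 : IntegrableOn (fun y : ℝ => y ^ (p + n) * Real.exp (-k * y ^ (1 : ℝ))) (Set.Ioi 0) :=
    integrableOn_rpow_mul_exp_neg_mul_rpow (by linarith) one_pos hk
  have h2 := h1.const_mul (Real.exp (2 * k) * (n.factorial / k ^ n))
  refine Integrable.mono' h2 ?_ ?_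
  · apply ContinuousOn.aestronglyMeasurable _ measurableSet_Ioi
    intro y hy
    have hy' : y ≠ 0 := ne_of_gt hy
    apply ContinuousAt.continuousWithinAt
    apply ContinuousAt.mul
    · exact Real.continuousAt_rpow_const _ _ (Or.inl hy')
    · fun_prop (disch := assumption)
  · refine (ae_restrict_iff' measurableSet_Ioi).2 (Filter.Eventually.of_forall fun y hy => ?_)
    have hy0 : 0 < y := hy
    rw [Real.norm_of_nonneg (by positivity), Real.rpow_add hy0, Real.rpow_natCast, Real.rpow_one]
    have e1 : Real.exp (-(k * (y - 2 + 1 / y)))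
        = Real.exp (2 * k) * Real.exp (-k * y) * Real.exp (-(k / y)) := by
      rw [← Real.exp_add, ← Real.exp_add]; congr 1; ring
    have e2 : Real.exp (-(k / y)) ≤ (n.factorial / k ^ n) * y ^ n := by
      have := Real.pow_div_factorial_le_exp (k / y) (by positivity) n
      rw [Real.exp_neg]
      have h3 : (n.factorial / k ^ n) * y ^ n = ((k / y) ^ n / n.factorial)⁻¹ := by
        rw [div_pow]; field_simp
      rw [h3]
      exact inv_anti₀ (by positivity) this
    rw [e1]
    calc y ^ p * (Real.exp (2 * k) * Real.exp (-k * y) * Real.exp (-(k / y)))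
        ≤ y ^ p * (Real.exp (2 * k) * Real.exp (-k * y) * ((n.factorial / k ^ n) * y ^ n)) := by
          gcongr
      _ = _ := by ring

theorem aux_rpow_s17 (a b A B y D : ℝ) (hA : 0 < A) (hB : 0 < B) (hy : 0 < y) (hD : 0 < D) :
    A * B / D ^ 2 * ((A / D) ^ (-a) * (B * y / D) ^ (-b))
      = A ^ (1 - a) * B ^ (1 - b) * y ^ (-b) * D ^ (a + b - 2) := by
  have e : D ^ (a + b - 2) = D ^ a * D ^ b / D ^ 2 := by
    rw [Real.rpow_sub hD, Real.rpow_add hD]; norm_num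
  rw [e, Real.div_rpow hA.le hD.le, Real.div_rpow (by positivity) hD.le,
    Real.mul_rpow hB.le hy.le, Real.rpow_sub hA, Real.rpow_sub hB, Real.rpow_one, Real.rpow_one,
    Real.rpow_neg hA.le, Real.rpow_neg hB.le, Real.rpow_neg hD.le, Real.rpow_neg hD.le]
  field_simp

theorem aux_exp (A B y D : ℝ) (hA : 0 < A) (hB : 0 < B) (hy : 0 < y) (hD : 0 < D)
    (h : D = A + B * y) :
    Real.exp (-A ^ 2 / (4 * (A / D))) * Real.exp (-B ^ 2 / (4 * (B * y / D)))
      = Real.exp (-(A + B) ^ 2 / 4) * Real.exp (-(A * B / 4 * (y - 2 + 1 / y))) := by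
  rw [← Real.exp_add, ← Real.exp_add]
  congr 1
  field_simp
  rw [h]; ring

theorem aux_c (c A B y : ℝ) (hA : 0 < A) (hB : 0 < B) (hy : 0 < y) :
    (A + B * y) ^ c ≤ (A + B) ^ c * (1 + y ^ c) := by
  have hS : 0 < A + B := by positivity
  have hT : 0 < A + B * y := by positivity
  have hm : (A + B) ^ c * y ^ c = ((A + B) * y) ^ c := (Real.mul_rpow hS.le hy.le).symm
  have p1 : 0 < (A + B) ^ c := by positivity
  have p2 : 0 < ((A + B) * y) ^ c := by positivity
  rw [mul_add, mul_one, hm]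
  rcases le_total 0 c with hc | hc <;> rcases le_total 1 y with h1 | h1
  · have := Real.rpow_le_rpow hT.le (show A + B * y ≤ (A + B) * y by nlinarith) hc
    linarith
  · have := Real.rpow_le_rpow hT.le (show A + B * y ≤ A + B by nlinarith) hc
    linarith
  · have := Real.rpow_le_rpow_of_nonpos hS (show A + B ≤ A + B * y by nlinarith) hc
    linarith
  · have := Real.rpow_le_rpow_of_nonpos (show 0 < (A + B) * y by positivity)
      (show (A + B) * y ≤ A + B * y by nlinarith) hc
    linarith

/-- Lemma A.1: sharp two-parameter integral inequality. -/
theorem stmt17 (a b κ : ℝ) (ha : 0 < a) (hκ : 0 < κ) :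
    ∃ C : ℝ, 0 < C ∧
      ∀ A B : ℝ, 0 < A → κ / A < B →
        (∫ x in Set.Ioo (0 : ℝ) 1,
            (1 - x) ^ (-a) * x ^ (-b) *
              Real.exp (-A ^ 2 / (4 * (1 - x))) * Real.exp (-B ^ 2 / (4 * x))) ≤
          C * Real.exp (-(A + B) ^ 2 / 4) * A ^ (1 - a) * B ^ (1 - b) *
            (A + B) ^ (a + b - 2) := by
  set c := a + b - 2 with hc
  let g : ℝ → ℝ := fun y => y ^ (-b) * Real.exp (-(κ / 4 * (y - 2 + 1 / y)))
    + y ^ (c - b) * Real.exp (-(κ / 4 * (y - 2 + 1 / y)))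
  have hg : IntegrableOn g (Set.Ioi 0) :=
    (aux_int (-b) (κ / 4) (by positivity)).add (aux_int (c - b) (κ / 4) (by positivity))
  have hg0 : 0 ≤ ∫ y in Set.Ioi (0 : ℝ), g y := by
    apply setIntegral_nonneg measurableSet_Ioi
    intro y hy
    have hy0 : 0 < y := hy
    positivity
  refine ⟨(∫ y in Set.Ioi (0 : ℝ), g y) + 1, by linarith, ?_⟩
  intro A B hA hAB
  have hB : 0 < B := lt_trans (by positivity) hAB
  have hκAB : κ ≤ A * B := by
    rw [div_lt_iff₀ hA] at hAB; linarith
  have himg : (fun y : ℝ => B * y / (A + B * y)) '' Set.Ioi 0 = Set.Ioo 0 1 := by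
    ext x
    constructor
    · rintro ⟨y, hy, rfl⟩
      have hy0 : 0 < y := hy
      refine ⟨by positivity, ?_⟩
      rw [div_lt_one (by positivity)]; linarith
    · rintro ⟨h0, h1⟩
      have h1' : 0 < 1 - x := by linarith
      refine ⟨A * x / (B * (1 - x)), by simp only [Set.mem_Ioi]; positivity, ?_⟩
      have : A + B * (A * x / (B * (1 - x))) = A / (1 - x) := by field_simp; ring
      simp only [this]
      field_simp
  have hder : ∀ y ∈ Set.Ioi (0 : ℝ), HasDerivWithinAt (fun y : ℝ => B * y / (A + B * y))
      (A * B / (A + B * y) ^ 2) (Set.Ioi 0) y := by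
    intro y hy
    have hy0 : 0 < y := hy
    have hD : A + B * y ≠ 0 := by positivity
    have h1 : HasDerivAt (fun y : ℝ => B * y) B y := by
      simpa using (hasDerivAt_id y).const_mul B
    have h2 := h1.div (h1.const_add A) hD
    refine (h2.congr_deriv ?_).hasDerivWithinAt
    congr 1; ring
  have hinj : Set.InjOn (fun y : ℝ => B * y / (A + B * y)) (Set.Ioi 0) := by
    intro y hy z hz h
    have hy0 : 0 < y := hy
    have hz0 : 0 < z := hz
    have hD1 : A + B * y ≠ 0 := by positivity
    have hD2 : A + B * z ≠ 0 := by positivity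
    simp only at h
    rw [div_eq_div_iff hD1 hD2] at h
    have : (A * B) * (y - z) = 0 := by linarith
    rcases mul_eq_zero.1 this with h | h
    · exact absurd h (by positivity)
    · linarith
  rw [← himg, integral_image_eq_integral_abs_deriv_smul measurableSet_Ioi hder hinj]
  set K := Real.exp (-(A + B) ^ 2 / 4) * A ^ (1 - a) * B ^ (1 - b) * (A + B) ^ c with hK
  have hKpos : 0 < K := by positivity
  have key : ∀ y ∈ Set.Ioi (0 : ℝ), |A * B / (A + B * y) ^ 2| •
      ((1 - B * y / (A + B * y)) ^ (-a) * (B * y / (A + B * y)) ^ (-b) *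
        Real.exp (-A ^ 2 / (4 * (1 - B * y / (A + B * y)))) *
        Real.exp (-B ^ 2 / (4 * (B * y / (A + B * y))))) ≤ K * g y := by
    intro y hy
    have hy0 : 0 < y := hy
    have hD : 0 < A + B * y := by positivity
    have e1 : 1 - B * y / (A + B * y) = A / (A + B * y) := by field_simp; ring
    rw [e1, abs_of_pos (by positivity), smul_eq_mul]
    have r1 := aux_rpow_s17 a b A B y _ hA hB hy0 hD
    have r2 := aux_exp A B y _ hA hB hy0 hD rfl
    have r3 := aux_c c A B y hA hB hy0
    have r4 : Real.exp (-(A * B / 4 * (y - 2 + 1 / y))) ≤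
        Real.exp (-(κ / 4 * (y - 2 + 1 / y))) := by
      apply Real.exp_le_exp.2
      have : 0 ≤ y - 2 + 1 / y := by
        have : y - 2 + 1 / y = (y - 1) ^ 2 / y := by field_simp; ring
        rw [this]; positivity
      have := mul_le_mul_of_nonneg_right hκAB this
      linarith
    calc _ = (A * B / (A + B * y) ^ 2 * ((A / (A + B * y)) ^ (-a) * (B * y / (A + B * y)) ^ (-b)))
          * (Real.exp (-A ^ 2 / (4 * (A / (A + B * y))))
            * Real.exp (-B ^ 2 / (4 * (B * y / (A + B * y))))) := by ring
      _ = (A ^ (1 - a) * B ^ (1 - b) * y ^ (-b) * (A + B * y) ^ c)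
          * (Real.exp (-(A + B) ^ 2 / 4) * Real.exp (-(A * B / 4 * (y - 2 + 1 / y)))) := by
          rw [r1, r2]
      _ ≤ (A ^ (1 - a) * B ^ (1 - b) * y ^ (-b) * ((A + B) ^ c * (1 + y ^ c)))
          * (Real.exp (-(A + B) ^ 2 / 4) * Real.exp (-(κ / 4 * (y - 2 + 1 / y)))) := by
          gcongr
      _ = K * g y := by
          have : y ^ (c - b) = y ^ c * y ^ (-b) := by
            rw [← Real.rpow_add hy0, sub_eq_add_neg]
          simp only [g, hK, this]; ring
  have fin : _ ≤ ∫ y in Set.Ioi (0 : ℝ), K * g y :=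
    integral_mono_of_nonneg (μ := volume.restrict (Set.Ioi (0 : ℝ)))
    ((ae_restrict_iff' measurableSet_Ioi).2 (Filter.Eventually.of_forall fun y hy => by
      have hy0 : 0 < y := hy
      have hD : 0 < A + B * y := by positivity
      have e1 : 1 - B * y / (A + B * y) = A / (A + B * y) := by field_simp; ring
      simp only [e1, Pi.zero_apply, smul_eq_mul]
      positivity)) (hg.const_mul K)
    ((ae_restrict_iff' measurableSet_Ioi).2 (Filter.Eventually.of_forall key))
  refine fin.trans ?_
  rw [integral_const_mul]
  calc K * ∫ y in Set.Ioi (0 : ℝ), g y ≤ K * ((∫ y in Set.Ioi (0 : ℝ), g y) + 1) := by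
        gcongr; linarith
    _ = _ := by rw [hK]; ring

end
end
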